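/- Assume ε ∉ (1/2)ℤ. Then there exist h₀ > 0 and C > 0, depending only on V₁, V₂ and ε, such that for every C^∞ 1-periodic φ : ℝ → ℂ and every positive integer N with h = 1/N ≤ h₀, the Nyström system with data g = Wφ has a unique solution (φ₀,…,φ_{N−1}) ∈ ℂ^N, and the step function φ_h = Σ_{j=0}^{N−1} φ_j χ_j satisfies ‖φ_h − φ‖₀ ≤ C h ‖φ‖₂. -/

import Mathlib

/-!
The proof works entirely on the Fourier side. Write `e_n(x) = exp(2πinx)`.

**Fourier matrices.** Expanding the smooth kernels in double Fourier series and using the Fourier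
coefficients `gam` of `log sin²(πx)`, the operator `W` becomes a matrix `Wm` indexed by pairs of
frequencies (`hasSum_Wop`). The Nyström matrix acting on grid values has *exactly the same* form
(`hasSum_Wmat`), only with the symbols of the derivative, of the logarithm and of the constant `1`
replaced by their discrete versions `deld N`, `gamd N ε` and `iotd N ε`. Because `A₁` is constant on
the diagonal, both matrices split as `Lam + Rm` (`Wm_split`): a diagonal part of order one and a
remainder of order zero whose entries decay rapidly off the diagonal (`R_bound`). The discrete
parts are close to the continuous ones, with an error `O(1/N)` (`R_diff`, `Lam_diff`).

**Discrete symbols.** The logarithmic singularity sampled on the shifted grid has an exact discrete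
Fourier expansion in terms of the moments `∫₀¹ r^p / (1 - r^N exp(±2πiε)) dr` (`lg_xg`). Since
`ε ∉ ½ℤ`, the number `exp(2πiε)` is not real, the denominators stay away from zero, and the moments
give upper bounds, Lipschitz bounds, and the lower bound `gamd_lower` of the symbol, all uniform in
`N`. The lower bound is the ellipticity of the discrete operator.

**Stability.** Sampling on the grid identifies the frequencies `n + lN`, up to the factor `e_l(ε)`,
so the discrete system is the aliased matrix restricted to the resolved frequencies. After division
by the diagonal, both the continuous and the discrete matrices become identity plus Hilbert–Schmidt,
with a common square-summable majorant (`KK_bounds`) and entrywise convergence (`KKN_tendsto`), hence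
convergence in Hilbert–Schmidt norm. The limit is injective on `ℓ²`: a null sequence decays rapidly by
a bootstrap argument (`bootstrap`), so it is the coefficient sequence of a smooth function, and the
injectivity of `W` applies (`KK_inj`). By the Fredholm alternative the limit is bounded below, and by
perturbation so are the discrete matrices for large `N` (`hs_stab`, `disc_stab`).

**Convergence.** The consistency error of the Fourier coefficients of `φ` in the discrete system is
`O(1/N)` times the second order norm (`consistency`), by Cauchy–Schwarz. Stability bounds the error
of the coefficients (`coef_conv`); the case `φ = 0` gives unique solvability. Discrete Parseval,
together with the cost of truncating the series and of moving to the nearest grid point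
(`trunc_le`), turns this into the `L²` bound for the step function (`step_error`).
-/

noncomputable section

/-- Smooth kernel data, 1-periodic in each variable. -/
def SPK (A : ℝ → ℝ → ℂ) : Prop :=
  ContDiff ℝ (⊤ : ℕ∞) (fun p : ℝ × ℝ => A p.1 p.2) ∧
    (∀ s t, A (s + 1) t = A s t) ∧ (∀ s t, A s (t + 1) = A s t)

/-- Logarithmic kernel `V(s,t) = (i/(2π)) A(s,t) log(sin²(π(s−t))) + K(s,t)`. -/
def logKer (A K : ℝ → ℝ → ℂ) (s t : ℝ) : ℂ :=
  Complex.I / (2 * Real.pi) * A s t * (Real.log (Real.sin (Real.pi * (s - t)) ^ 2) : ℂ) + K s t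

/-- Grid point `s_{j+ε} = (j − 1/2 + ε)h`. -/
def sg (h ε : ℝ) (j : ℤ) : ℝ := ((j : ℝ) - 1 / 2 + ε) * h

/-- Grid point `t_{j+ε} = (j + ε)h`. -/
def tg (h ε : ℝ) (j : ℤ) : ℝ := ((j : ℝ) + ε) * h

/-- Integral operator with kernel `V`. -/
def Vop (V : ℝ → ℝ → ℂ) (φ : ℝ → ℂ) (s : ℝ) : ℂ := ∫ t in (0:ℝ)..1, V s t * φ t

/-- Hypersingular operator `W = −D V₁ D + V₂`. -/
def Wop (V1 V2 : ℝ → ℝ → ℂ) (φ : ℝ → ℂ) (s : ℝ) : ℂ :=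
  -deriv (Vop V1 (deriv φ)) s + Vop V2 φ s

/-- Nyström matrix entries `W^ε_{ij}`. -/
def Wmat (V1 V2 : ℝ → ℝ → ℂ) (h ε : ℝ) (i j : ℤ) : ℂ :=
  V1 (sg h ε (i + 1)) (sg h 0 (j + 1)) - V1 (sg h ε i) (sg h 0 (j + 1))
    - V1 (sg h ε (i + 1)) (sg h 0 j) + V1 (sg h ε i) (sg h 0 j)
    + (h : ℂ) ^ 2 * V2 (tg h ε i) (tg h 0 j)

/-- Fourier coefficient of a 1-periodic function. -/
def fc (u : ℝ → ℂ) (m : ℤ) : ℂ :=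
  ∫ t in (0:ℝ)..1, u t * Complex.exp (-(2 * Real.pi * Complex.I * (m : ℂ) * (t : ℂ)))

/-- Periodic Sobolev norm of order `r`. -/
def sobNorm (r : ℝ) (u : ℝ → ℂ) : ℝ :=
  Real.sqrt (‖fc u 0‖ ^ 2 +
    ∑' m : ℤ, if m = 0 then 0 else |(m : ℝ)| ^ (2 * r) * ‖fc u m‖ ^ 2)

/-- 1-periodic step function on the ε-shifted grid with coefficients `v`. -/
def stepf (N : ℕ) (ε : ℝ) (v : ZMod N → ℂ) (s : ℝ) : ℂ :=
  v ((⌊s * N + 1 / 2 - ε⌋ : ℤ) : ZMod N)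

/-- Midpoint quadrature error matrix entries `E^ε_{ij}`. -/
def Emat (V2 : ℝ → ℝ → ℂ) (h ε : ℝ) (i j : ℤ) : ℂ :=
  (∫ s in (sg h ε i)..(sg h ε (i + 1)), ∫ t in (sg h 0 j)..(sg h 0 (j + 1)), V2 s t)
    - (h : ℂ) ^ 2 * V2 (tg h ε i) (tg h 0 j)

/-- Spectral (ℓ²-operator) norm of a complex `N×N` matrix. -/
def specNorm {N : ℕ} (M : Matrix (Fin N) (Fin N) ℂ) : ℝ :=
  ‖LinearMap.toContinuousLinearMap (Matrix.toEuclideanLin M)‖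

/-- The function `C̄₁(t) = −(1/(2πi)) log(4 sin²(πt))`. -/
def Cbar1 (t : ℝ) : ℂ :=
  -(1 / (2 * Real.pi * Complex.I)) * (Real.log (4 * Real.sin (Real.pi * t) ^ 2) : ℂ)

end

/-- The Nyström linear system with data `g = Wφ`:
`Σ_j W^ε_{ij} v_j = h (Wφ)(t_{i+ε})`, `i = 0,…,N−1`. -/
def Nys (V1 V2 : ℝ → ℝ → ℂ) (ε : ℝ) (N : ℕ) [NeZero N] (φ : ℝ → ℂ)
    (v : ZMod N → ℂ) : Prop :=
  ∀ i : ZMod N,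
    (∑ j : ZMod N,
        Wmat V1 V2 (1 / (N : ℝ)) ε ((i.val : ℕ) : ℤ) ((j.val : ℕ) : ℤ) * v j)
      = (1 / (N : ℂ)) * Wop V1 V2 φ (tg (1 / (N : ℝ)) ε ((i.val : ℕ) : ℤ))

noncomputable section

namespace NysAux

open Complex Filter Topology MeasureTheory

/-! ### Exponentials and Fourier coefficients -/

/-- The exponential `e_n(x) = exp(2πinx)`. -/
def ee (n : ℤ) (x : ℝ) : ℂ := Complex.exp (2 * Real.pi * Complex.I * (n : ℂ) * (x : ℂ))

lemma ee_add (n m : ℤ) (x : ℝ) : ee (n + m) x = ee n x * ee m x := by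
  unfold ee
  rw [← Complex.exp_add]
  congr 1
  push_cast
  ring

lemma ee_add_right (n : ℤ) (x y : ℝ) : ee n (x + y) = ee n x * ee n y := by
  unfold ee
  rw [← Complex.exp_add]
  congr 1
  push_cast
  ring

@[simp] lemma ee_zero (x : ℝ) : ee 0 x = 1 := by simp [ee]

@[simp] lemma ee_zero_right (n : ℤ) : ee n 0 = 1 := by simp [ee]

lemma ee_neg_right (n : ℤ) (x : ℝ) : ee n (-x) = ee (-n) x := by
  unfold ee
  congr 1
  push_cast
  ring

@[simp] lemma norm_ee (n : ℤ) (x : ℝ) : ‖ee n x‖ = 1 := by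
  have : ee n x = Complex.exp (((2 * Real.pi * n * x : ℝ) : ℂ) * Complex.I) := by
    unfold ee
    congr 1
    push_cast
    ring
  rw [this, Complex.norm_exp_ofReal_mul_I]

lemma ee_ne_zero (n : ℤ) (x : ℝ) : ee n x ≠ 0 := Complex.exp_ne_zero _

lemma ee_int (n k : ℤ) : ee n (k : ℝ) = 1 := by
  unfold ee
  rw [Complex.exp_eq_one_iff]
  exact ⟨n * k, by push_cast; ring⟩

lemma ee_mul_neg (n : ℤ) (x : ℝ) : ee n x * ee (-n) x = 1 := by
  rw [← ee_add]
  simp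

lemma ee_periodic (n : ℤ) : Function.Periodic (ee n) 1 := by
  intro x
  rw [ee_add_right]
  have := ee_int n 1
  simp only [Int.cast_one] at this
  rw [this, mul_one]

lemma conj_ee (n : ℤ) (x : ℝ) : (starRingEnd ℂ) (ee n x) = ee (-n) x := by
  unfold ee
  rw [← Complex.exp_conj]
  congr 1
  simp [Complex.conj_ofNat]

lemma hasDerivAt_ee (n : ℤ) (x : ℝ) :
    HasDerivAt (ee n) (2 * Real.pi * Complex.I * n * ee n x) x := by
  unfold ee
  have h : HasDerivAt (fun y : ℝ => (y : ℂ)) 1 x := Complex.ofRealCLM.hasDerivAt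
  have := (h.const_mul (2 * Real.pi * Complex.I * (n : ℂ))).cexp
  convert this using 1
  ring

lemma continuous_ee (n : ℤ) : Continuous (ee n) := by
  unfold ee
  fun_prop

lemma contDiff_ee (n : ℤ) : ContDiff ℝ (⊤ : ℕ∞) (ee n) := by
  unfold ee
  have : ContDiff ℝ (⊤ : ℕ∞) (fun y : ℝ => (y : ℂ)) := Complex.ofRealCLM.contDiff
  exact (contDiff_const.mul this).cexp

lemma fc_eq (u : ℝ → ℂ) (m : ℤ) : fc u m = ∫ t in (0:ℝ)..1, u t * ee (-m) t := by
  unfold fc ee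
  congr 1
  ext t
  congr 2
  push_cast
  ring

lemma integral_ee (k : ℤ) : ∫ t in (0:ℝ)..1, ee k t = if k = 0 then 1 else 0 := by
  split_ifs with h
  · subst h
    simp
  · have h2 : (2 * Real.pi * Complex.I * (k : ℂ)) ≠ 0 := by
      have : (k : ℂ) ≠ 0 := by exact_mod_cast h
      simp [Real.pi_ne_zero, this]
    have hd : ∀ x ∈ Set.uIcc (0:ℝ) 1,
        HasDerivAt (fun y => (2 * Real.pi * Complex.I * (k : ℂ))⁻¹ * ee k y) (ee k x) x := by
      intro x _
      have := (hasDerivAt_ee k x).const_mul (2 * Real.pi * Complex.I * (k : ℂ))⁻¹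
      rwa [← mul_assoc, inv_mul_cancel₀ h2, one_mul] at this
    rw [intervalIntegral.integral_eq_sub_of_hasDerivAt hd
      ((continuous_ee k).intervalIntegrable _ _)]
    have := ee_int k 1
    simp only [Int.cast_one] at this
    rw [this, ee_zero_right, sub_self]

/-- Coefficients of an absolutely convergent exponential series are its Fourier coefficients. -/
lemma fc_of_hasSum {ι : Type*} [Countable ι] (c : ι → ℂ) (f : ι → ℤ) (hc : Summable fun i => ‖c i‖)
    (u : ℝ → ℂ) (hu : ∀ t, HasSum (fun i => c i * ee (f i) t) (u t)) (m : ℤ) :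
    HasSum (fun i => if f i = m then c i else 0) (fc u m) := by
  rw [fc_eq]
  have h1 : ∀ i, ∫ t in (0:ℝ)..1, c i * ee (f i) t * ee (-m) t = if f i = m then c i else 0 := by
    intro i
    have : ∀ t, c i * ee (f i) t * ee (-m) t = c i * ee (f i - m) t := by
      intro t
      rw [sub_eq_add_neg, ee_add, mul_assoc]
    simp_rw [this]
    rw [intervalIntegral.integral_const_mul, integral_ee]
    by_cases h : f i = m <;> simp [h, sub_eq_zero]
  simp_rw [← h1]
  refine intervalIntegral.hasSum_integral_of_dominated_convergence (fun i _ => ‖c i‖) ?_ ?_ ?_ ?_ ?_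
  · intro i
    exact ((continuous_const.mul (continuous_ee _)).mul (continuous_ee _)).aestronglyMeasurable
  · intro i
    exact Eventually.of_forall fun t _ => by simp
  · exact Eventually.of_forall fun t _ => hc
  · simp
  · exact Eventually.of_forall fun t _ => (hu t).mul_right _

instance : Fact ((0:ℝ) < 1) := ⟨one_pos⟩

/-- Fourier inversion for continuous periodic functions with summable coefficients. -/
lemma hasSum_fc (u : ℝ → ℂ) (hu : Continuous u) (hp : Function.Periodic u 1)
    (hs : Summable (fc u)) (t : ℝ) : HasSum (fun m => fc u m * ee m t) (u t) := by
  have hcont : Continuous (hp.lift : AddCircle (1:ℝ) → ℂ) := by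
    exact continuous_coinduced_dom.mpr hu
  let f : C(AddCircle (1:ℝ), ℂ) := ⟨hp.lift, hcont⟩
  have hco : ∀ m, fourierCoeff f m = fc u m := by
    intro m
    rw [fourierCoeff_eq_intervalIntegral f m 0, fc_eq]
    simp only [zero_add, div_one, one_smul]
    refine intervalIntegral.integral_congr fun t _ => ?_
    simp only [smul_eq_mul]
    rw [mul_comm, fourier_coe_apply]
    congr 1
    unfold ee
    congr 1
    push_cast
    ring
  have hs2 : Summable (fourierCoeff f) := by
    convert hs using 1
    ext m
    exact hco m
  have := has_pointwise_sum_fourier_series_of_summable hs2 (t : AddCircle (1:ℝ))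
  have hft : f (t : AddCircle (1:ℝ)) = u t := rfl
  rw [hft] at this
  convert this using 1
  ext m
  rw [hco, smul_eq_mul, fourier_coe_apply]
  congr 1
  unfold ee
  congr 1
  push_cast
  ring

lemma fc_deriv (u : ℝ → ℂ) (hu : ContDiff ℝ 1 u) (hp : Function.Periodic u 1) (m : ℤ) :
    fc (deriv u) m = 2 * Real.pi * Complex.I * m * fc u m := by
  rw [fc_eq, fc_eq]
  have hd : ∀ x, HasDerivAt u (deriv u x) x := fun x =>
    (hu.differentiable (by norm_num) x).hasDerivAt
  have hc : Continuous (deriv u) := hu.continuous_deriv (by norm_num)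
  have := intervalIntegral.integral_mul_deriv_eq_deriv_mul (a := 0) (b := 1)
    (u := ee (-m)) (v := u) (u' := fun x => 2 * Real.pi * Complex.I * ((-m : ℤ) : ℂ) * ee (-m) x)
    (v' := deriv u) (fun x _ => hasDerivAt_ee _ x) (fun x _ => hd x)
    ((continuous_const.mul (continuous_ee _)).intervalIntegrable _ _) (hc.intervalIntegrable _ _)
  have h0 : u 1 = u 0 := by simpa using hp 0
  have h1 : ee (-m) 1 = 1 := by simpa using ee_int (-m) 1
  rw [h0, h1, ee_zero_right, sub_self, zero_sub] at this
  simp_rw [mul_comm (deriv u _), this]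
  rw [← intervalIntegral.integral_neg, ← intervalIntegral.integral_const_mul]
  refine intervalIntegral.integral_congr fun x _ => ?_
  push_cast
  ring

lemma norm_fc_le (u : ℝ → ℂ) (C : ℝ) (hC : ∀ t ∈ Set.Icc (0:ℝ) 1, ‖u t‖ ≤ C) (m : ℤ) :
    ‖fc u m‖ ≤ C := by
  rw [fc_eq]
  have := intervalIntegral.norm_integral_le_of_norm_le_const (a := 0) (b := 1) (C := C)
    (f := fun t => u t * ee (-m) t) (by
      intro x hx
      rw [norm_mul, norm_ee, mul_one]
      rw [Set.uIoc_of_le zero_le_one] at hx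
      exact hC x ⟨hx.1.le, hx.2⟩)
  simpa using this

/-! ### Weights and rapid decay -/

/-- The weight `1 + |n|`. -/
def wt (n : ℤ) : ℝ := 1 + |(n : ℝ)|

lemma one_le_wt (n : ℤ) : 1 ≤ wt n := by
  unfold wt
  linarith [abs_nonneg (n : ℝ)]

lemma wt_pos (n : ℤ) : 0 < wt n := lt_of_lt_of_le one_pos (one_le_wt n)

lemma wt_neg (n : ℤ) : wt (-n) = wt n := by simp [wt]

lemma abs_le_wt (n : ℤ) : |(n : ℝ)| ≤ wt n := by
  unfold wt
  linarith

/-- Peetre's inequality. -/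
lemma wt_add (n m : ℤ) : wt (n + m) ≤ wt n * wt m := by
  unfold wt
  push_cast
  nlinarith [abs_add_le (n : ℝ) m, abs_nonneg (n : ℝ), abs_nonneg (m : ℝ),
    mul_nonneg (abs_nonneg (n : ℝ)) (abs_nonneg (m : ℝ))]

lemma wt_le_mul (n m : ℤ) : wt n ≤ wt m * wt (n - m) := by
  simpa using wt_add m (n - m)

lemma wt_le_mul' (n m : ℤ) : wt m ≤ wt n * wt (n - m) := by
  have := wt_add n (m - n)
  rw [← wt_neg (m - n), neg_sub] at this
  simpa using this

lemma summable_wt : Summable fun n : ℤ => ((wt n) ^ 2)⁻¹ := by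
  have h := (Real.summable_one_div_int_pow (p := 2)).mpr (by norm_num)
  have h0 : Summable fun n : ℤ => (if n = 0 then (1:ℝ) else 0) :=
    (hasSum_ite_eq 0 (1:ℝ)).summable
  refine Summable.of_nonneg_of_le (fun n => by have := wt_pos n; positivity) (fun n => ?_) (h.add h0)
  by_cases hn : n = 0
  · subst hn
    simp [wt]
  · simp only [hn, if_false, add_zero, one_div]
    have h3 : (0:ℝ) < (n:ℝ) ^ 2 := by
      have : (n : ℝ) ≠ 0 := by exact_mod_cast hn
      positivity
    apply inv_anti₀ h3
    rw [← sq_abs (n:ℝ)]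
    exact pow_le_pow_left₀ (abs_nonneg _) (abs_le_wt n) 2

/-- Rapid decay of a sequence. -/
def RD1 (x : ℤ → ℂ) : Prop := ∀ k : ℕ, ∃ C : ℝ, ∀ n, ‖x n‖ * wt n ^ k ≤ C

/-- Rapid decay of a double array. -/
def RD2 (a : ℤ → ℤ → ℂ) : Prop :=
  ∀ k : ℕ, ∃ C : ℝ, ∀ p q, ‖a p q‖ * (wt p ^ k * wt q ^ k) ≤ C

lemma le_div_wt {a C : ℝ} {n : ℤ} {k : ℕ} (h : a * wt n ^ k ≤ C) : a ≤ C * (wt n ^ k)⁻¹ := by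
  rw [← div_eq_mul_inv, le_div_iff₀ (pow_pos (wt_pos n) k)]
  exact h

lemma RD1.summable {x : ℤ → ℂ} (hx : RD1 x) (k : ℕ) : Summable fun n => ‖x n‖ * wt n ^ k := by
  obtain ⟨C, hC⟩ := hx (k + 2)
  refine Summable.of_nonneg_of_le (fun n => by have := wt_pos n; positivity) (fun n => ?_)
    (summable_wt.mul_left C)
  apply le_div_wt
  rw [mul_assoc, ← pow_add]
  exact hC n

lemma RD1.summable_norm {x : ℤ → ℂ} (hx : RD1 x) : Summable fun n => ‖x n‖ := by
  simpa using hx.summable 0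

lemma RD2.summable {a : ℤ → ℤ → ℂ} (ha : RD2 a) :
    Summable fun pq : ℤ × ℤ => ‖a pq.1 pq.2‖ := by
  obtain ⟨C, hC⟩ := ha 2
  have hS := Summable.mul_of_nonneg summable_wt summable_wt
    (fun n => by have := wt_pos n; positivity) (fun n => by have := wt_pos n; positivity)
  refine Summable.of_nonneg_of_le (fun n => norm_nonneg _) (fun n => ?_) (hS.mul_left C)
  have h1 := wt_pos n.1
  have h2 := wt_pos n.2
  rw [← mul_inv, ← div_eq_mul_inv, le_div_iff₀ (by positivity)]
  exact hC n.1 n.2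

lemma RD1.of_fc_aux {x : ℤ → ℂ} (h : ∀ k : ℕ, ∃ C, ∀ n, ‖x n‖ * |(n:ℝ)| ^ k ≤ C) : RD1 x := by
  intro k
  obtain ⟨C0, h0⟩ := h 0
  obtain ⟨C1, h1⟩ := h k
  refine ⟨2 ^ k * (C0 + C1), fun n => ?_⟩
  have h2 : wt n ^ k ≤ 2 ^ k * (1 + |(n:ℝ)| ^ k) := by
    by_cases hn : |(n:ℝ)| ≤ 1
    · have : wt n ≤ 2 := by unfold wt; linarith
      calc wt n ^ k ≤ 2 ^ k := pow_le_pow_left₀ (wt_pos n).le this k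
        _ ≤ 2 ^ k * (1 + |(n:ℝ)| ^ k) := by
          have : 0 ≤ |(n:ℝ)| ^ k := by positivity
          nlinarith [pow_pos (two_pos : (0:ℝ) < 2) k]
    · have : wt n ≤ 2 * |(n:ℝ)| := by unfold wt; linarith
      calc wt n ^ k ≤ (2 * |(n:ℝ)|) ^ k := pow_le_pow_left₀ (wt_pos n).le this k
        _ = 2 ^ k * |(n:ℝ)| ^ k := mul_pow _ _ _
        _ ≤ 2 ^ k * (1 + |(n:ℝ)| ^ k) := by
          nlinarith [pow_pos (two_pos : (0:ℝ) < 2) k]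
  have h3 := h0 n
  have h4 := h1 n
  calc ‖x n‖ * wt n ^ k ≤ ‖x n‖ * (2 ^ k * (1 + |(n:ℝ)| ^ k)) := by gcongr
    _ = 2 ^ k * (‖x n‖ * |(n:ℝ)| ^ 0 + ‖x n‖ * |(n:ℝ)| ^ k) := by ring
    _ ≤ 2 ^ k * (C0 + C1) := by gcongr

lemma periodic_deriv {u : ℝ → ℂ} (hp : Function.Periodic u 1) :
    Function.Periodic (deriv u) 1 := by
  intro x
  rw [← deriv_comp_add_const]
  congr 1
  ext y
  exact hp y

lemma contDiff_deriv {u : ℝ → ℂ} (hu : ContDiff ℝ (⊤ : ℕ∞) u) :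
    ContDiff ℝ (⊤ : ℕ∞) (deriv u) :=
  ((contDiff_infty_iff_deriv (𝕜 := ℝ)).mp hu).2

/-- Fourier coefficients of smooth periodic functions decay rapidly. -/
lemma RD1_fc {u : ℝ → ℂ} (hu : ContDiff ℝ (⊤ : ℕ∞) u) (hp : Function.Periodic u 1) :
    RD1 (fc u) := by
  apply RD1.of_fc_aux
  intro k
  induction k generalizing u with
  | zero =>
    obtain ⟨C, hC⟩ := (isCompact_Icc (a := (0:ℝ)) (b := 1)).exists_bound_of_continuousOn
      hu.continuous.continuousOn
    exact ⟨C, fun n => by simpa using norm_fc_le u C hC n⟩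
  | succ k ih =>
    obtain ⟨C, hC⟩ := ih (contDiff_deriv hu) (periodic_deriv hp)
    refine ⟨C, fun n => ?_⟩
    have h1 := hC n
    rw [fc_deriv u (hu.of_le (by exact_mod_cast le_top)) hp] at h1
    have h2 : ‖(2 * Real.pi * Complex.I * n * fc u n : ℂ)‖ = 2 * Real.pi * |(n:ℝ)| * ‖fc u n‖ := by
      simp [abs_of_pos Real.pi_pos]
    rw [h2] at h1
    refine le_trans ?_ h1
    rw [pow_succ]
    have h3 : 0 ≤ ‖fc u n‖ * |(n:ℝ)| ^ k * |(n:ℝ)| := by positivity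
    nlinarith [Real.pi_gt_three]

lemma hasSum_fc_smooth {u : ℝ → ℂ} (hu : ContDiff ℝ (⊤ : ℕ∞) u) (hp : Function.Periodic u 1)
    (t : ℝ) : HasSum (fun m => fc u m * ee m t) (u t) :=
  hasSum_fc u hu.continuous hp (RD1_fc hu hp).summable_norm.of_norm t

end NysAux

end

noncomputable section

namespace NysAux

open Complex Filter Topology MeasureTheory

/-! ### Double Fourier series of smooth biperiodic kernels -/

/-- Double Fourier coefficient `∫∫ A(s,t) e_{-p}(s) e_{-q}(t) ds dt`. -/
def c2 (A : ℝ → ℝ → ℂ) (p q : ℤ) : ℂ := fc (fun t => fc (fun s => A s t) p) q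

/-- Partial derivative in the first variable. -/
def pd1 (A : ℝ → ℝ → ℂ) (s t : ℝ) : ℂ := deriv (fun s => A s t) s

/-- Partial derivative in the second variable. -/
def pd2 (A : ℝ → ℝ → ℂ) (s t : ℝ) : ℂ := deriv (fun t => A s t) t

lemma _root_.SPK.smooth1 {A : ℝ → ℝ → ℂ} (hA : SPK A) (t : ℝ) :
    ContDiff ℝ (⊤ : ℕ∞) (fun s => A s t) :=
  hA.1.comp (contDiff_id.prodMk contDiff_const)

lemma _root_.SPK.smooth2 {A : ℝ → ℝ → ℂ} (hA : SPK A) (s : ℝ) :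
    ContDiff ℝ (⊤ : ℕ∞) (fun t => A s t) :=
  hA.1.comp (contDiff_const.prodMk contDiff_id)

lemma _root_.SPK.pd1 {A : ℝ → ℝ → ℂ} (hA : SPK A) : SPK (pd1 A) := by
  have hf : ∀ s t, NysAux.pd1 A s t = fderiv ℝ (fun p : ℝ × ℝ => A p.1 p.2) (s, t) (1, 0) := by
    intro s t
    have h1 : HasFDerivAt (fun p : ℝ × ℝ => A p.1 p.2) _ (s, t) :=
      (hA.1.differentiable (by simp) (s, t)).hasFDerivAt
    have h2 : HasDerivAt (fun s : ℝ => (s, t)) (1, 0) s :=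
      (hasDerivAt_id s).prodMk (hasDerivAt_const s t)
    exact (h1.comp_hasDerivAt s h2).deriv
  refine ⟨?_, ?_, ?_⟩
  · simp_rw [hf]
    have h3 := hA.1.fderiv_right (m := (⊤ : ℕ∞)) (by simp)
    exact (h3.clm_apply contDiff_const)
  · intro s t
    exact periodic_deriv (fun s => hA.2.1 s t) s
  · intro s t
    unfold NysAux.pd1
    congr 1
    ext s
    exact hA.2.2 s t

lemma _root_.SPK.swap {A : ℝ → ℝ → ℂ} (hA : SPK A) : SPK (fun s t => A t s) :=
  ⟨hA.1.comp (contDiff_snd.prodMk contDiff_fst), fun s t => hA.2.2 t s, fun s t => hA.2.1 t s⟩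

lemma _root_.SPK.pd2 {A : ℝ → ℝ → ℂ} (hA : SPK A) : SPK (pd2 A) := hA.swap.pd1.swap

lemma _root_.SPK.continuous {A : ℝ → ℝ → ℂ} (hA : SPK A) : Continuous (fun p : ℝ × ℝ => A p.1 p.2) :=
  hA.1.continuous

lemma continuous_fc_param {A : ℝ → ℝ → ℂ} (hA : Continuous (fun p : ℝ × ℝ => A p.1 p.2)) (p : ℤ) :
    Continuous (fun t => fc (fun s => A s t) p) := by
  simp_rw [fc_eq]
  apply intervalIntegral.continuous_parametric_intervalIntegral_of_continuous'
  have h1 : Continuous (fun x : ℝ × ℝ => A x.2 x.1) := hA.comp (continuous_snd.prodMk continuous_fst)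
  exact h1.mul ((continuous_ee _).comp continuous_snd)

lemma c2_swap {A : ℝ → ℝ → ℂ} (hA : Continuous (fun p : ℝ × ℝ => A p.1 p.2)) (p q : ℤ) :
    c2 A p q = fc (fun s => fc (fun t => A s t) q) p := by
  unfold c2
  simp_rw [fc_eq]
  simp_rw [← intervalIntegral.integral_mul_const]
  have h := intervalIntegral_intervalIntegral_swap (F := fun t s => A s t * ee (-p) s * ee (-q) t)
    (a := 0) (b := 1) (c := 0) (d := 1) (by
      have hc : Continuous (Function.uncurry fun t s => A s t * ee (-p) s * ee (-q) t) := by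
        have h1 : Continuous (fun x : ℝ × ℝ => A x.2 x.1) :=
          hA.comp (continuous_snd.prodMk continuous_fst)
        exact (h1.mul ((continuous_ee _).comp continuous_snd)).mul
          ((continuous_ee _).comp continuous_fst)
      have hI : IntegrableOn (Function.uncurry fun t s => A s t * ee (-p) s * ee (-q) t)
          (Set.uIcc (0:ℝ) 1 ×ˢ Set.uIcc (0:ℝ) 1) (volume.prod volume) :=
        hc.continuousOn.integrableOn_compact (isCompact_uIcc.prod isCompact_uIcc)
      exact hI.mono_set (Set.prod_mono Set.uIoc_subset_uIcc Set.uIoc_subset_uIcc))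
  rw [h]
  refine intervalIntegral.integral_congr fun s _ => ?_
  refine intervalIntegral.integral_congr fun t _ => ?_
  ring

lemma c2_pd1 {A : ℝ → ℝ → ℂ} (hA : SPK A) (p q : ℤ) :
    c2 (pd1 A) p q = 2 * Real.pi * Complex.I * p * c2 A p q := by
  unfold c2
  have : ∀ t, fc (fun s => pd1 A s t) p = 2 * Real.pi * Complex.I * p * fc (fun s => A s t) p :=
    fun t => fc_deriv _ ((hA.smooth1 t).of_le (by exact_mod_cast le_top)) (fun s => hA.2.1 s t) p
  simp_rw [this]
  rw [fc_eq, fc_eq, ← intervalIntegral.integral_const_mul]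
  refine intervalIntegral.integral_congr fun s _ => ?_
  ring

lemma c2_flip {A : ℝ → ℝ → ℂ} (hA : SPK A) (p q : ℤ) :
    c2 A p q = c2 (fun s t => A t s) q p := c2_swap hA.continuous p q

lemma c2_pd2 {A : ℝ → ℝ → ℂ} (hA : SPK A) (p q : ℤ) :
    c2 (pd2 A) p q = 2 * Real.pi * Complex.I * q * c2 A p q := by
  rw [c2_flip hA.pd2, c2_flip hA]
  exact c2_pd1 hA.swap q p

lemma _root_.SPK.bounded {A : ℝ → ℝ → ℂ} (hA : SPK A) :
    ∃ C, ∀ s ∈ Set.Icc (0:ℝ) 1, ∀ t ∈ Set.Icc (0:ℝ) 1, ‖A s t‖ ≤ C := by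
  obtain ⟨C, hC⟩ := ((isCompact_Icc (a := (0:ℝ)) (b := 1)).prod
    (isCompact_Icc (a := (0:ℝ)) (b := 1))).exists_bound_of_continuousOn hA.continuous.continuousOn
  exact ⟨C, fun s hs t ht => hC (s, t) ⟨hs, ht⟩⟩

lemma c2_decay_aux (k l : ℕ) {A : ℝ → ℝ → ℂ} (hA : SPK A) :
    ∃ C, ∀ p q : ℤ, ‖c2 A p q‖ * (|(p:ℝ)| ^ k * |(q:ℝ)| ^ l) ≤ C := by
  have hn : ∀ (p : ℤ) (x : ℂ), ‖(2 * Real.pi * Complex.I * p * x : ℂ)‖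
      = 2 * Real.pi * |(p:ℝ)| * ‖x‖ := by
    intro p x
    simp [abs_of_pos Real.pi_pos]
  induction k generalizing A l with
  | zero =>
    induction l generalizing A with
    | zero =>
      obtain ⟨C, hC⟩ := hA.bounded
      refine ⟨C, fun p q => ?_⟩
      simp only [pow_zero, mul_one]
      exact norm_fc_le _ _ (fun t ht => norm_fc_le _ _ (fun s hs => hC s hs t ht) p) q
    | succ l ih =>
      obtain ⟨C, hC⟩ := ih hA.pd2
      refine ⟨C, fun p q => ?_⟩
      have h1 := hC p q
      rw [c2_pd2 hA, hn] at h1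
      refine le_trans ?_ h1
      have h3 : 0 ≤ ‖c2 A p q‖ * |(q:ℝ)| ^ l * |(q:ℝ)| := by positivity
      rw [pow_succ]
      nlinarith [Real.pi_gt_three]
  | succ k ih =>
    obtain ⟨C, hC⟩ := ih l hA.pd1
    refine ⟨C, fun p q => ?_⟩
    have h1 := hC p q
    rw [c2_pd1 hA, hn] at h1
    refine le_trans ?_ h1
    have h3 : 0 ≤ ‖c2 A p q‖ * (|(p:ℝ)| ^ k * |(p:ℝ)| * |(q:ℝ)| ^ l) := by positivity
    rw [pow_succ]
    nlinarith [Real.pi_gt_three]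

lemma wt_pow_le (n : ℤ) (k : ℕ) : wt n ^ k ≤ 2 ^ k * (1 + |(n:ℝ)| ^ k) := by
  by_cases hn : |(n:ℝ)| ≤ 1
  · have : wt n ≤ 2 := by unfold wt; linarith
    calc wt n ^ k ≤ 2 ^ k := pow_le_pow_left₀ (wt_pos n).le this k
      _ ≤ 2 ^ k * (1 + |(n:ℝ)| ^ k) := by
        have : 0 ≤ |(n:ℝ)| ^ k := by positivity
        nlinarith [pow_pos (two_pos : (0:ℝ) < 2) k]
  · have : wt n ≤ 2 * |(n:ℝ)| := by unfold wt; linarith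
    calc wt n ^ k ≤ (2 * |(n:ℝ)|) ^ k := pow_le_pow_left₀ (wt_pos n).le this k
      _ = 2 ^ k * |(n:ℝ)| ^ k := mul_pow _ _ _
      _ ≤ 2 ^ k * (1 + |(n:ℝ)| ^ k) := by
        nlinarith [pow_pos (two_pos : (0:ℝ) < 2) k]

lemma RD2_c2 {A : ℝ → ℝ → ℂ} (hA : SPK A) : RD2 (c2 A) := by
  intro k
  obtain ⟨C00, h00⟩ := c2_decay_aux 0 0 hA
  obtain ⟨C01, h01⟩ := c2_decay_aux 0 k hA
  obtain ⟨C10, h10⟩ := c2_decay_aux k 0 hA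
  obtain ⟨C11, h11⟩ := c2_decay_aux k k hA
  refine ⟨2 ^ k * 2 ^ k * (C00 + C01 + C10 + C11), fun p q => ?_⟩
  have hp := wt_pow_le p k
  have hq := wt_pow_le q k
  have := wt_pos p
  have := wt_pos q
  calc ‖c2 A p q‖ * (wt p ^ k * wt q ^ k)
      ≤ ‖c2 A p q‖ * ((2 ^ k * (1 + |(p:ℝ)| ^ k)) * (2 ^ k * (1 + |(q:ℝ)| ^ k))) := by gcongr
    _ = 2 ^ k * 2 ^ k * (‖c2 A p q‖ * (|(p:ℝ)| ^ 0 * |(q:ℝ)| ^ 0)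
          + ‖c2 A p q‖ * (|(p:ℝ)| ^ 0 * |(q:ℝ)| ^ k) + ‖c2 A p q‖ * (|(p:ℝ)| ^ k * |(q:ℝ)| ^ 0)
          + ‖c2 A p q‖ * (|(p:ℝ)| ^ k * |(q:ℝ)| ^ k)) := by ring
    _ ≤ 2 ^ k * 2 ^ k * (C00 + C01 + C10 + C11) := by
        gcongr
        · exact h00 p q
        · exact h01 p q
        · exact h10 p q
        · exact h11 p q

/-- A smooth biperiodic kernel is the sum of its double Fourier series. -/
lemma hasSum_c2 {A : ℝ → ℝ → ℂ} (hA : SPK A) (s t : ℝ) :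
    HasSum (fun pq : ℤ × ℤ => c2 A pq.1 pq.2 * (ee pq.1 s * ee pq.2 t)) (A s t) := by
  have hS := (RD2_c2 hA).summable
  have hS2 : Summable (fun pq : ℤ × ℤ => c2 A pq.1 pq.2 * (ee pq.1 s * ee pq.2 t)) := by
    refine Summable.of_norm ?_
    simpa using hS
  have hrow : ∀ p, HasSum (fun q => c2 A p q * ee q t) (fc (fun s => A s t) p) := by
    intro p
    have h1 : Summable (fc (fun t => fc (fun s => A s t) p)) :=
      Summable.of_norm (f := fun q => c2 A p q) (hS.prod_factor p)
    refine hasSum_fc (fun t => fc (fun s => A s t) p) (continuous_fc_param hA.continuous p) ?_ h1 t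
    intro t
    simp only
    congr 1
    ext s
    exact hA.2.2 s t
  have hsum := hS2.hasSum.prod_fiberwise (g := fun p => fc (fun s => A s t) p * ee p s) (by
    intro p
    have := (hrow p).mul_right (ee p s)
    have he : (fun q => c2 A p q * ee q t * ee p s)
        = fun q => c2 A p q * (ee p s * ee q t) := by
      ext q
      ring
    rwa [he] at this)
  have h2 := hasSum_fc_smooth (hA.smooth1 t) (fun s => hA.2.1 s t) s
  rw [h2.unique hsum]
  exact hS2.hasSum

end NysAux

end

noncomputable section

namespace NysAux

open Complex Filter Topology MeasureTheory

/-! ### Fourier matrices of kernels and their off-diagonal decay -/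

/-- Fourier matrix of the integral operator with kernel `A(s,t)κ(s−t)`, where `a` is the array of
double Fourier coefficients of `A`, and `κ` is the sequence of Fourier coefficients of the
convolution factor (or its discrete counterpart). -/
def Mm (a : ℤ → ℤ → ℂ) (κ : ℤ → ℂ) (n m : ℤ) : ℂ := ∑' q, a (n - m - q) q * κ (m + q)

lemma RD2.entry {a : ℤ → ℤ → ℂ} (ha : RD2 a) (k j : ℕ) :
    ∃ C : ℝ, 0 ≤ C ∧ ∀ r q : ℤ, ‖a (r - q) q‖ * wt q ^ j ≤ C * (wt r ^ k)⁻¹ * (wt q ^ 2)⁻¹ := by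
  obtain ⟨C, hC⟩ := ha (k + j + 2)
  refine ⟨C, ?_, fun r q => ?_⟩
  · refine le_trans ?_ (hC 0 0)
    have := wt_pos 0
    positivity
  have h1 := hC (r - q) q
  have hp := wt_pos (r - q)
  have hq := wt_pos q
  have hr := wt_pos r
  have h2 : wt r ≤ wt (r - q) * wt q := by simpa using wt_add (r - q) q
  rw [mul_assoc, ← mul_inv, ← div_eq_mul_inv, le_div_iff₀ (by positivity)]
  refine le_trans ?_ h1
  calc ‖a (r - q) q‖ * wt q ^ j * (wt r ^ k * wt q ^ 2)
      ≤ ‖a (r - q) q‖ * wt q ^ j * ((wt (r - q) * wt q) ^ k * wt q ^ 2) := by gcongr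
    _ = ‖a (r - q) q‖ * (wt (r - q) ^ k * wt q ^ (k + j + 2)) := by ring
    _ ≤ ‖a (r - q) q‖ * (wt (r - q) ^ (k + j + 2) * wt q ^ (k + j + 2)) := by
      have : wt (r - q) ^ k ≤ wt (r - q) ^ (k + j + 2) :=
        pow_le_pow_right₀ (one_le_wt _) (by omega)
      gcongr

/-- Off-diagonal decay of `Mm a κ` in terms of a pointwise bound of the symbol. -/
lemma Mm_bound {a : ℤ → ℤ → ℂ} (ha : RD2 a) (k j : ℕ) :
    ∃ C : ℝ, 0 ≤ C ∧ ∀ (κ : ℤ → ℂ) (m : ℤ) (B : ℝ), (∀ q, ‖κ (m + q)‖ ≤ B * wt q ^ j) →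
      ∀ n, Summable (fun q => ‖a (n - m - q) q * κ (m + q)‖) ∧
        ∑' q, ‖a (n - m - q) q * κ (m + q)‖ ≤ C * B * (wt (n - m) ^ k)⁻¹ ∧
        ‖Mm a κ n m‖ ≤ C * B * (wt (n - m) ^ k)⁻¹ := by
  obtain ⟨C, hC0, hC⟩ := ha.entry k j
  refine ⟨C * ∑' q : ℤ, (wt q ^ 2)⁻¹, mul_nonneg hC0
    (tsum_nonneg fun q => by have := wt_pos q; positivity), fun κ m B hB n => ?_⟩
  have hB0 : 0 ≤ B := by
    have := (norm_nonneg _).trans (hB 0)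
    have h2 := pow_pos (wt_pos 0) j
    exact nonneg_of_mul_nonneg_left this h2
  have hle : ∀ q, ‖a (n - m - q) q * κ (m + q)‖
      ≤ (C * B * (wt (n - m) ^ k)⁻¹) * (wt q ^ 2)⁻¹ := by
    intro q
    rw [norm_mul]
    have hq := wt_pos q
    calc ‖a (n - m - q) q‖ * ‖κ (m + q)‖ ≤ ‖a (n - m - q) q‖ * (B * wt q ^ j) := by
          gcongr
          exact hB q
      _ = B * (‖a (n - m - q) q‖ * wt q ^ j) := by ring
      _ ≤ B * (C * (wt (n - m) ^ k)⁻¹ * (wt q ^ 2)⁻¹) := by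
          exact mul_le_mul_of_nonneg_left (hC _ _) hB0
      _ = _ := by ring
  have hs : Summable (fun q => ‖a (n - m - q) q * κ (m + q)‖) :=
    Summable.of_nonneg_of_le (fun q => norm_nonneg _) hle (summable_wt.mul_left _)
  have h2 : ∑' q, ‖a (n - m - q) q * κ (m + q)‖
      ≤ (C * ∑' q : ℤ, (wt q ^ 2)⁻¹) * B * (wt (n - m) ^ k)⁻¹ := by
    refine (hs.tsum_le_tsum hle (summable_wt.mul_left _)).trans (le_of_eq ?_)
    rw [tsum_mul_left]
    ring
  exact ⟨hs, h2, (norm_tsum_le_tsum_norm hs).trans h2⟩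

/-- Subtracting the value of the symbol at `m` does not change the Fourier matrix of an array
whose anti-diagonal sums vanish, i.e. of a kernel vanishing on the diagonal. -/
lemma Mm_sub_const {a : ℤ → ℤ → ℂ} (ha : RD2 a) (h0 : ∀ r, ∑' q, a (r - q) q = 0) (κ : ℤ → ℂ)
    (m : ℤ) (B : ℝ) (hB : ∀ q, ‖κ (m + q)‖ ≤ B) (n : ℤ) :
    Mm a κ n m = Mm a (fun k => κ k - κ m) n m := by
  obtain ⟨C, -, hC⟩ := Mm_bound ha 0 0
  have h1 := (hC κ m B (by simpa using hB) n).1.of_norm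
  have h2 := (hC (fun _ => κ m) m ‖κ m‖ (by simp) n).1.of_norm
  unfold Mm
  simp_rw [mul_sub]
  rw [h1.tsum_sub h2, tsum_mul_right, h0, zero_mul, sub_zero]

/-- Order-zero part of the Fourier matrix of `W`, with the symbols `δ` of the derivative, `γ` of the
logarithmic convolution and `ι` of the mean value as parameters. -/
def Rm (β k1 a2 k2 : ℤ → ℤ → ℂ) (δ γ ι : ℤ → ℂ) (n m : ℤ) : ℂ :=
  -(δ n * δ m) * (Mm β γ n m + Mm k1 ι n m) + (Mm a2 γ n m + Mm k2 ι n m)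

/-- Bounds on a triple of symbols at the frequency `m`, shared by the continuous operator and by
all its discretizations. -/
structure SymB (δ γ ι : ℤ → ℂ) (m : ℤ) (B : ℝ) : Prop where
  hδ : ∀ n, ‖δ n‖ ≤ B * wt n
  hγd : ∀ q, ‖γ (m + q) - γ m‖ ≤ B * (wt m ^ 2)⁻¹ * wt q ^ 3
  hγ : ∀ q, ‖γ (m + q)‖ ≤ B
  hι : ∀ q, ‖ι (m + q)‖ ≤ B * (wt m ^ 2)⁻¹ * wt q ^ 3

lemma inv_wt_le_one (m : ℤ) (k : ℕ) : (wt m ^ k)⁻¹ ≤ 1 :=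
  inv_le_one_of_one_le₀ (one_le_pow₀ (one_le_wt m))

lemma SymB.B_nonneg {δ γ ι : ℤ → ℂ} {m : ℤ} {B : ℝ} (h : SymB δ γ ι m B) : 0 ≤ B :=
  (norm_nonneg _).trans (h.hγ 0)

section
variable {β k1 a2 k2 : ℤ → ℤ → ℂ} (hβ : RD2 β) (hk1 : RD2 k1) (ha2 : RD2 a2) (hk2 : RD2 k2)
  (h0 : ∀ r, ∑' q, β (r - q) q = 0)
include hβ hk1 ha2 hk2 h0

lemma R_parts (k : ℕ) : ∃ C : ℝ, 0 ≤ C ∧ ∀ δ γ ι m B, SymB δ γ ι m B → ∀ n,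
    ‖Mm β γ n m + Mm k1 ι n m‖ ≤ C * B * (wt m ^ 2)⁻¹ * (wt (n - m) ^ k)⁻¹ ∧
    ‖Mm a2 γ n m + Mm k2 ι n m‖ ≤ C * B * (wt (n - m) ^ k)⁻¹ := by
  obtain ⟨C1, hC1, h1⟩ := Mm_bound hβ k 3
  obtain ⟨C2, hC2, h2⟩ := Mm_bound hk1 k 3
  obtain ⟨C3, hC3, h3⟩ := Mm_bound ha2 k 0
  obtain ⟨C4, hC4, h4⟩ := Mm_bound hk2 k 3
  refine ⟨C1 + C2 + C3 + C4, by positivity, fun δ γ ι m B hS n => ?_⟩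
  have hB := hS.B_nonneg
  have hm := wt_pos m
  have hnm := wt_pos (n - m)
  constructor
  · rw [Mm_sub_const hβ h0 γ m B hS.hγ n]
    have e1 := (h1 (fun k => γ k - γ m) m _ hS.hγd n).2.2
    have e2 := (h2 ι m _ hS.hι n).2.2
    refine (norm_add_le _ _).trans ((add_le_add e1 e2).trans ?_)
    have : 0 ≤ (C3 + C4) * B * (wt m ^ 2)⁻¹ * (wt (n - m) ^ k)⁻¹ := by positivity
    nlinarith
  · have e1 := (h3 γ m B (by simpa using hS.hγ) n).2.2
    have e2 := (h4 ι m B (fun q => (hS.hι q).trans (by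
      have := wt_pos q
      have h5 := inv_wt_le_one m 2
      have : B * (wt m ^ 2)⁻¹ ≤ B * 1 := by gcongr
      rw [mul_one] at this
      gcongr)) n).2.2
    refine (norm_add_le _ _).trans ((add_le_add e1 e2).trans ?_)
    have : 0 ≤ (C1 + C2) * B * (wt (n - m) ^ k)⁻¹ := by positivity
    nlinarith

/-- `Rm` is of order zero, with rapid off-diagonal decay. -/
lemma R_bound (k : ℕ) (B : ℝ) : ∃ C : ℝ, 0 ≤ C ∧ ∀ δ γ ι m, SymB δ γ ι m B → ∀ n,
    ‖Rm β k1 a2 k2 δ γ ι n m‖ ≤ C * (wt (n - m) ^ k)⁻¹ := by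
  obtain ⟨C, hC, h⟩ := R_parts hβ hk1 ha2 hk2 h0 (k + 1)
  refine ⟨B ^ 2 * (C * |B|) + C * |B|, by positivity, fun δ γ ι m hS n => ?_⟩
  obtain ⟨e1, e2⟩ := h δ γ ι m B hS n
  have hB := hS.B_nonneg
  rw [abs_of_nonneg hB]
  have hm := wt_pos m
  have hn := wt_pos n
  have hnm := wt_pos (n - m)
  have hd1 := hS.hδ n
  have hd2 := hS.hδ m
  have hw := wt_le_mul n m
  unfold Rm
  refine (norm_add_le _ _).trans ?_
  rw [add_mul]
  refine add_le_add ?_ (e2.trans ?_)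
  · rw [norm_mul, norm_neg, norm_mul]
    calc ‖δ n‖ * ‖δ m‖ * ‖Mm β γ n m + Mm k1 ι n m‖
        ≤ (B * (wt m * wt (n - m))) * (B * wt m) *
          (C * B * (wt m ^ 2)⁻¹ * (wt (n - m) ^ (k + 1))⁻¹) := by
          gcongr
          exact hd1.trans (by gcongr)
      _ = B ^ 2 * (C * B) * (wt (n - m) ^ k)⁻¹ := by
          field_simp
          ring
  · gcongr
    · exact one_le_wt _
    · omega

/-- Consistency of `Rm`: its dependence on the symbols. -/
lemma R_diff (k : ℕ) (B : ℝ) : ∃ C : ℝ, 0 ≤ C ∧ ∀ δ γ ι δ' γ' ι' m h, 0 ≤ h →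
    SymB δ γ ι m B → SymB δ' γ' ι' m B → (∀ n, ‖δ' n - δ n‖ ≤ B * h * wt n ^ 2) →
    (∀ q, ‖γ' (m + q) - γ (m + q)‖ ≤ B * h * wt q ^ 3) →
    (∀ q, ‖ι' (m + q) - ι (m + q)‖ ≤ B * h * wt q ^ 3) → ∀ n,
    ‖Rm β k1 a2 k2 δ' γ' ι' n m - Rm β k1 a2 k2 δ γ ι n m‖
      ≤ C * h * wt m ^ 2 * (wt (n - m) ^ k)⁻¹ := by
  obtain ⟨C, hC, hp⟩ := R_parts hβ hk1 ha2 hk2 h0 (k + 2)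
  obtain ⟨C1, hC1, h1⟩ := Mm_bound hβ (k + 2) 3
  obtain ⟨C2, hC2, h2⟩ := Mm_bound hk1 (k + 2) 3
  obtain ⟨C3, hC3, h3⟩ := Mm_bound ha2 (k + 2) 3
  obtain ⟨C4, hC4, h4⟩ := Mm_bound hk2 (k + 2) 3
  have hlin : ∀ {a : ℤ → ℤ → ℂ}, RD2 a → ∀ (κ κ' : ℤ → ℂ) (m : ℤ) (D : ℝ),
      (∀ q, ‖κ (m + q)‖ ≤ D * wt q ^ 3) → (∀ q, ‖κ' (m + q)‖ ≤ D * wt q ^ 3) → ∀ n,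
      Mm a κ' n m - Mm a κ n m = Mm a (fun k => κ' k - κ k) n m := by
    intro a ha κ κ' m D hκ hκ' n
    obtain ⟨C, -, hC⟩ := Mm_bound ha 0 3
    unfold Mm
    simp_rw [mul_sub]
    rw [((hC κ' m D hκ' n).1.of_norm).tsum_sub ((hC κ m D hκ n).1.of_norm)]
  have hmono : ∀ {δ γ ι : ℤ → ℂ} {m : ℤ} {B : ℝ}, SymB δ γ ι m B →
      (∀ q, ‖γ (m + q)‖ ≤ B * wt q ^ 3) ∧ (∀ q, ‖ι (m + q)‖ ≤ B * wt q ^ 3) := by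
    intro δ γ ι m B hS
    have hB := hS.B_nonneg
    refine ⟨fun q => (hS.hγ q).trans (le_mul_of_one_le_right hB (one_le_pow₀ (one_le_wt q))),
      fun q => (hS.hι q).trans ?_⟩
    have := wt_pos q
    have h5 := inv_wt_le_one m 2
    have : B * (wt m ^ 2)⁻¹ ≤ B * 1 := by gcongr
    rw [mul_one] at this
    gcongr
  refine ⟨B ^ 2 * ((C1 + C2) * |B|) + |B| * |B| * (C * |B|) + |B| * |B| * (C * |B|)
    + (C3 + C4) * |B|, by positivity,
    fun δ γ ι δ' γ' ι' m h hh hS hS' hδ hγ hι n => ?_⟩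
  have hB := hS.B_nonneg
  rw [abs_of_nonneg hB]
  have hm := wt_pos m
  have hn := wt_pos n
  have hnm := wt_pos (n - m)
  have hw := wt_le_mul n m
  have hm1 := one_le_wt m
  have hnm1 := one_le_wt (n - m)
  obtain ⟨e1, e2⟩ := hp δ γ ι m B hS n
  have d1 : ‖(Mm β γ' n m + Mm k1 ι' n m) - (Mm β γ n m + Mm k1 ι n m)‖
      ≤ (C1 + C2) * B * h * (wt (n - m) ^ (k + 2))⁻¹ := by
    rw [add_sub_add_comm, hlin hβ γ γ' m B (hmono hS).1 (hmono hS').1,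
      hlin hk1 ι ι' m B (hmono hS).2 (hmono hS').2]
    refine (norm_add_le _ _).trans ((add_le_add (h1 _ m _ hγ n).2.2 (h2 _ m _ hι n).2.2).trans ?_)
    apply le_of_eq
    ring
  have d2 : ‖(Mm a2 γ' n m + Mm k2 ι' n m) - (Mm a2 γ n m + Mm k2 ι n m)‖
      ≤ (C3 + C4) * B * h * (wt (n - m) ^ (k + 2))⁻¹ := by
    rw [add_sub_add_comm, hlin ha2 γ γ' m B (hmono hS).1 (hmono hS').1,
      hlin hk2 ι ι' m B (hmono hS).2 (hmono hS').2]
    refine (norm_add_le _ _).trans ((add_le_add (h3 _ m _ hγ n).2.2 (h4 _ m _ hι n).2.2).trans ?_)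
    apply le_of_eq
    ring
  unfold Rm
  set M := Mm β γ n m + Mm k1 ι n m
  set M' := Mm β γ' n m + Mm k1 ι' n m
  set Q := Mm a2 γ n m + Mm k2 ι n m
  set Q' := Mm a2 γ' n m + Mm k2 ι' n m
  have hsplit : -(δ' n * δ' m) * M' + Q' - (-(δ n * δ m) * M + Q)
      = -(δ' n * δ' m * (M' - M)) - (δ' n - δ n) * δ' m * M - δ n * (δ' m - δ m) * M + (Q' - Q) := by
    ring
  rw [hsplit]
  have hinv : ∀ j : ℕ, j ≤ 2 → wt (n - m) ^ j * (wt (n - m) ^ (k + 2))⁻¹ ≤ (wt (n - m) ^ k)⁻¹ := by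
    intro j hj
    rw [← div_eq_mul_inv, div_le_iff₀ (by positivity), pow_add, inv_mul_cancel_left₀ (by positivity)]
    exact pow_le_pow_right₀ hnm1 hj
  have b1 : ‖δ' n * δ' m * (M' - M)‖
      ≤ B ^ 2 * ((C1 + C2) * B) * h * wt m ^ 2 * (wt (n - m) ^ k)⁻¹ := by
    rw [norm_mul, norm_mul]
    calc ‖δ' n‖ * ‖δ' m‖ * ‖M' - M‖
        ≤ (B * (wt m * wt (n - m))) * (B * wt m) *
          ((C1 + C2) * B * h * (wt (n - m) ^ (k + 2))⁻¹) := by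
          gcongr
          · exact (hS'.hδ n).trans (by gcongr)
          · exact hS'.hδ m
      _ = B ^ 2 * ((C1 + C2) * B) * h * wt m ^ 2 *
          (wt (n - m) ^ 1 * (wt (n - m) ^ (k + 2))⁻¹) := by ring
      _ ≤ _ := by
          gcongr
          exact hinv 1 (by norm_num)
  have b2 : ‖(δ' n - δ n) * δ' m * M‖
      ≤ B * B * (C * B) * h * wt m ^ 2 * (wt (n - m) ^ k)⁻¹ := by
    rw [norm_mul, norm_mul]
    calc ‖δ' n - δ n‖ * ‖δ' m‖ * ‖M‖
        ≤ (B * h * (wt m * wt (n - m)) ^ 2) * (B * wt m) *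
          (C * B * (wt m ^ 2)⁻¹ * (wt (n - m) ^ (k + 2))⁻¹) := by
          gcongr
          · exact (hδ n).trans (by gcongr)
          · exact hS'.hδ m
      _ = B * B * (C * B) * h * wt m *
          (wt (n - m) ^ 2 * (wt (n - m) ^ (k + 2))⁻¹) := by field_simp
      _ ≤ _ := by
          have : wt m ≤ wt m ^ 2 := by nlinarith
          gcongr
          exact hinv 2 le_rfl
  have b3 : ‖δ n * (δ' m - δ m) * M‖
      ≤ B * B * (C * B) * h * wt m ^ 2 * (wt (n - m) ^ k)⁻¹ := by
    rw [norm_mul, norm_mul]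
    calc ‖δ n‖ * ‖δ' m - δ m‖ * ‖M‖
        ≤ (B * (wt m * wt (n - m))) * (B * h * wt m ^ 2) *
          (C * B * (wt m ^ 2)⁻¹ * (wt (n - m) ^ (k + 2))⁻¹) := by
          gcongr
          · exact (hS.hδ n).trans (by gcongr)
          · exact hδ m
      _ = B * B * (C * B) * h * wt m *
          (wt (n - m) ^ 1 * (wt (n - m) ^ (k + 2))⁻¹) := by field_simp
      _ ≤ _ := by
          have : wt m ≤ wt m ^ 2 := by nlinarith
          gcongr
          exact hinv 1 (by norm_num)
  have b4 : ‖Q' - Q‖ ≤ (C3 + C4) * B * h * wt m ^ 2 * (wt (n - m) ^ k)⁻¹ := by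
    refine d2.trans ?_
    have h6 : (wt (n - m) ^ (k + 2))⁻¹ ≤ (wt (n - m) ^ k)⁻¹ := by simpa using hinv 0 (by norm_num)
    have h7 : 1 ≤ wt m ^ 2 := one_le_pow₀ hm1
    calc (C3 + C4) * B * h * (wt (n - m) ^ (k + 2))⁻¹
        ≤ (C3 + C4) * B * h * (wt (n - m) ^ k)⁻¹ := by gcongr
      _ = (C3 + C4) * B * h * 1 * (wt (n - m) ^ k)⁻¹ := by ring
      _ ≤ _ := by gcongr
  have t1 := norm_add_le (-(δ' n * δ' m * (M' - M)) - (δ' n - δ n) * δ' m * M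
    - δ n * (δ' m - δ m) * M) (Q' - Q)
  have t2 := norm_sub_le (-(δ' n * δ' m * (M' - M)) - (δ' n - δ n) * δ' m * M)
    (δ n * (δ' m - δ m) * M)
  have t3 := norm_sub_le (-(δ' n * δ' m * (M' - M))) ((δ' n - δ n) * δ' m * M)
  rw [norm_neg] at t3
  calc _ ≤ _ := t1
    _ ≤ B ^ 2 * ((C1 + C2) * B) * h * wt m ^ 2 * (wt (n - m) ^ k)⁻¹
        + B * B * (C * B) * h * wt m ^ 2 * (wt (n - m) ^ k)⁻¹
        + B * B * (C * B) * h * wt m ^ 2 * (wt (n - m) ^ k)⁻¹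
        + (C3 + C4) * B * h * wt m ^ 2 * (wt (n - m) ^ k)⁻¹ := by linarith
    _ = _ := by ring

end

end NysAux

end

noncomputable section

namespace NysAux

open Complex Filter Topology MeasureTheory

/-! ### Fourier coefficients of the logarithmic singularity -/

/-- The logarithmic singularity `log sin²(πx)`. -/
def lg (x : ℝ) : ℝ := Real.log (Real.sin (Real.pi * x) ^ 2)

/-- Fourier coefficients of `lg`. -/
def gam (n : ℤ) : ℂ := if n = 0 then -(2 * Real.log 2 : ℝ) else -((|(n : ℝ)|⁻¹ : ℝ) : ℂ)

lemma lg_eq (x : ℝ) : lg x = 2 * Real.log (Real.sin (Real.pi * x)) := by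
  unfold lg
  rw [Real.log_pow]
  norm_num

lemma lg_periodic : Function.Periodic lg 1 := by
  intro x
  unfold lg
  rw [mul_add, mul_one, Real.sin_add_pi, neg_sq]

lemma lg_neg (x : ℝ) : lg (-x) = lg x := by
  unfold lg
  rw [mul_neg, Real.sin_neg, neg_sq]

lemma intervalIntegrable_lg (a b : ℝ) : IntervalIntegrable lg volume a b := by
  have h := (intervalIntegrable_log_sin (a := Real.pi * a) (b := Real.pi * b)).comp_mul_left
    (c := Real.pi)
  rw [mul_div_cancel_left₀ _ Real.pi_ne_zero, mul_div_cancel_left₀ _ Real.pi_ne_zero] at h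
  have h2 := h.const_mul 2
  refine h2.congr ?_
  intro x _
  rw [lg_eq]
  rfl

lemma intervalIntegrable_lgC (a b : ℝ) : IntervalIntegrable (fun x => (lg x : ℂ)) volume a b :=
  ⟨(intervalIntegrable_lg a b).1.ofReal, (intervalIntegrable_lg a b).2.ofReal⟩

lemma ee_pow (n : ℤ) (x : ℝ) (j : ℕ) : ee n x ^ j = ee (n * j) x := by
  unfold ee
  rw [← Complex.exp_nat_mul]
  congr 1
  push_cast
  ring

lemma ee_one_sub (x : ℝ) :
    ee (-1) x - 1 = -2 * I * Real.sin (Real.pi * x) * exp (-(Real.pi * x * I)) := by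
  have h1 : ee (-1) x = exp (-(Real.pi * x * I)) * exp (-(Real.pi * x * I)) := by
    unfold ee
    rw [← Complex.exp_add]
    congr 1
    push_cast
    ring
  have h2 : (1:ℂ) = exp (Real.pi * x * I) * exp (-(Real.pi * x * I)) := by
    rw [← Complex.exp_add]
    simp
  have h3 : (Real.sin (Real.pi * x) : ℂ) = (exp (-(Real.pi * x * I)) - exp (Real.pi * x * I)) * I / 2 := by
    rw [Complex.ofReal_sin, Complex.sin]
    push_cast
    simp
  rw [h1, h3]
  linear_combination -h2 + exp (-(Real.pi * x * I)) *
    (exp (-(Real.pi * x * I)) - exp (Real.pi * x * I)) * I_sq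

lemma ee_one_add (x : ℝ) :
    ee (-1) x + 1 = 2 * Real.cos (Real.pi * x) * exp (-(Real.pi * x * I)) := by
  have h1 : ee (-1) x = exp (-(Real.pi * x * I)) * exp (-(Real.pi * x * I)) := by
    unfold ee
    rw [← Complex.exp_add]
    congr 1
    push_cast
    ring
  have h2 : (1:ℂ) = exp (Real.pi * x * I) * exp (-(Real.pi * x * I)) := by
    rw [← Complex.exp_add]
    simp
  have h3 : (Real.cos (Real.pi * x) : ℂ) = (exp (Real.pi * x * I) + exp (-(Real.pi * x * I))) / 2 := by
    rw [Complex.ofReal_cos, Complex.cos]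
    push_cast
    simp
  rw [h1, h3]
  linear_combination h2

lemma geom_ee (k : ℕ) (x : ℝ) :
    (ee (-1) x - 1) * ∑ j ∈ Finset.range k, ee (-(j:ℤ)) x = ee (-(k:ℤ)) x - 1 := by
  have h : ∀ j : ℕ, ee (-(j:ℤ)) x = ee (-1) x ^ j := by
    intro j
    rw [ee_pow]
    congr 1
    ring
  simp_rw [h]
  exact mul_geom_sum _ _

lemma fc_lg_pos (k : ℕ) (hk : 0 < k) : fc (fun x => (lg x : ℂ)) k = -((k:ℂ)⁻¹) := by
  set S : ℝ → ℂ := fun x => ∑ j ∈ Finset.range k, ee (-(j:ℤ)) x with hS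
  have hSc : Continuous S := by
    apply continuous_finsetSum
    intro j _
    exact continuous_ee _
  set F : ℝ → ℂ := fun x => (lg x : ℂ) * (ee (-(k:ℤ)) x - 1) with hF
  have hFe : ∀ x, F x = ((Real.sin (Real.pi * x) * Real.log (Real.sin (Real.pi * x)) : ℝ) : ℂ)
      * (-4 * I * exp (-(Real.pi * x * I)) * S x) := by
    intro x
    simp only [hF]
    rw [← geom_ee, ee_one_sub, lg_eq]
    push_cast
    ring
  have hFc : Continuous F := by
    rw [funext hFe]
    have h1 : Continuous fun x : ℝ => Real.sin (Real.pi * x) * Real.log (Real.sin (Real.pi * x)) :=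
      Real.continuous_mul_log.comp (by fun_prop)
    have h2 := Complex.continuous_ofReal.comp h1
    exact h2.mul (Continuous.mul (by fun_prop) hSc)
  set G : ℝ → ℂ := fun x => (1 + ee (-1) x) * S x with hG
  have hGc : Continuous G := (continuous_const.add (continuous_ee _)).mul hSc
  have hder : ∀ x ∈ Set.Ioo (0:ℝ) 1, HasDerivAt F
      (-(2 * Real.pi * I * k) * ((lg x : ℂ) * ee (-(k:ℤ)) x) + (-(2 * Real.pi * I)) * G x) x := by
    intro x hx
    have hsin : 0 < Real.sin (Real.pi * x) := by
      apply Real.sin_pos_of_pos_of_lt_pi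
      · have := hx.1
        have := Real.pi_pos
        positivity
      · nlinarith [hx.2, Real.pi_pos]
    have h1 : HasDerivAt (fun x => Real.pi * x) Real.pi x := by
      simpa using (hasDerivAt_id x).const_mul Real.pi
    have h2 := (h1.sin.log hsin.ne').const_mul 2
    have h3 : HasDerivAt lg (2 * (Real.cos (Real.pi * x) * Real.pi / Real.sin (Real.pi * x))) x := by
      rw [funext lg_eq]
      exact h2
    have h4 := h3.ofReal_comp
    have h5 := (hasDerivAt_ee (-(k:ℤ)) x).sub_const 1
    have h6 := h4.mul h5
    refine h6.congr_deriv ?_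
    rw [← geom_ee, ee_one_sub]
    simp only [hG]
    rw [add_comm (1:ℂ), ee_one_add]
    have : (Real.sin (Real.pi * x) : ℂ) ≠ 0 := by exact_mod_cast hsin.ne'
    push_cast
    push_cast at this
    field_simp
    ring
  have hi1 : IntervalIntegrable (fun x => (lg x : ℂ) * ee (-(k:ℤ)) x) volume 0 1 :=
    (intervalIntegrable_lgC 0 1).mul_continuousOn (continuous_ee _).continuousOn
  have hi2 : IntervalIntegrable G volume 0 1 := hGc.intervalIntegrable _ _
  have hinteg := intervalIntegral.integral_eq_sub_of_hasDerivAt_of_le zero_le_one hFc.continuousOn hder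
    ((hi1.const_mul _).add (hi2.const_mul _))
  rw [intervalIntegral.integral_add (hi1.const_mul _) (hi2.const_mul _),
    intervalIntegral.integral_const_mul, intervalIntegral.integral_const_mul] at hinteg
  have hF0 : F 1 - F 0 = 0 := by
    simp only [hF, ee_zero_right]
    have := ee_int (-(k:ℤ)) 1
    simp only [Int.cast_one] at this
    rw [this]
    simp
  have hGi : ∫ x in (0:ℝ)..1, G x = 1 := by
    have : ∀ x, G x = ∑ j ∈ Finset.range k, (ee (-(j:ℤ)) x + ee (-(j:ℤ) - 1) x) := by
      intro x
      simp only [hG, hS]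
      rw [Finset.mul_sum]
      refine Finset.sum_congr rfl fun j _ => ?_
      rw [sub_eq_add_neg, ee_add]
      ring
    simp_rw [this]
    rw [intervalIntegral.integral_finsetSum (fun j _ =>
      ((continuous_ee _).intervalIntegrable _ _).add ((continuous_ee _).intervalIntegrable _ _))]
    have h7 : ∀ j : ℕ, ∫ x in (0:ℝ)..1, (ee (-(j:ℤ)) x + ee (-(j:ℤ) - 1) x)
        = if j = 0 then 1 else 0 := by
      intro j
      rw [intervalIntegral.integral_add ((continuous_ee _).intervalIntegrable _ _)
        ((continuous_ee _).intervalIntegrable _ _), integral_ee, integral_ee,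
        if_neg (show ¬ (-(j:ℤ) - 1 = 0) by omega)]
      simp
    rw [Finset.sum_congr rfl fun j _ => h7 j]
    simp [hk]
  rw [hF0, hGi] at hinteg
  rw [fc_eq]
  have hpi : (2 * Real.pi * I : ℂ) ≠ 0 := by simp [Real.pi_ne_zero]
  have hk0 : (k:ℂ) ≠ 0 := by exact_mod_cast hk.ne'
  set X := ∫ x in (0:ℝ)..1, (lg x : ℂ) * ee (-(k:ℤ)) x
  have h8 : (2 * Real.pi * I : ℂ) * (k * X + 1) = 0 := by linear_combination -hinteg
  have h9 : (k * X + 1 : ℂ) = 0 := (mul_eq_zero.mp h8).resolve_left hpi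
  rw [eq_neg_iff_add_eq_zero, ← mul_right_inj' hk0]
  rw [mul_add, mul_inv_cancel₀ hk0, mul_zero]
  exact h9

lemma fc_lg_neg (k : ℤ) : fc (fun x => (lg x : ℂ)) (-k) =
    (starRingEnd ℂ) (fc (fun x => (lg x : ℂ)) k) := by
  rw [fc_eq, fc_eq, intervalIntegral.integral_of_le zero_le_one,
    intervalIntegral.integral_of_le zero_le_one, ← integral_conj]
  congr 1
  ext x
  rw [map_mul, conj_ee, Complex.conj_ofReal]

lemma fc_lg (k : ℤ) : fc (fun x => (lg x : ℂ)) k = gam k := by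
  rcases lt_trichotomy k 0 with h | h | h
  · obtain ⟨n, rfl⟩ : ∃ n : ℕ, k = -(n:ℤ) := ⟨k.natAbs, by omega⟩
    rw [fc_lg_neg, fc_lg_pos n (by omega), gam, if_neg (by omega)]
    simp
  · subst h
    rw [fc_eq, gam, if_pos rfl]
    simp only [neg_zero, ee_zero, mul_one]
    rw [intervalIntegral.integral_ofReal]
    simp_rw [lg_eq]
    rw [intervalIntegral.integral_const_mul,
      intervalIntegral.integral_comp_mul_left (fun x => Real.log (Real.sin x)) Real.pi_ne_zero]
    simp only [mul_zero, mul_one]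
    rw [integral_log_sin_zero_pi]
    simp [Real.pi_ne_zero]
    field_simp
  · obtain ⟨n, rfl⟩ : ∃ n : ℕ, k = (n:ℤ) := ⟨k.natAbs, by omega⟩
    rw [fc_lg_pos n (by omega), gam, if_neg (by omega)]
    simp

end NysAux

end

noncomputable section

namespace NysAux

open Complex Filter Topology MeasureTheory

/-! ### Discrete symbols -/

/-- Mean value over one period of the grid. -/
def avg (N : ℕ) (f : ℤ → ℂ) : ℂ := (N : ℂ)⁻¹ * ∑ j ∈ Finset.range N, f j

/-- The grid point `(j+ε)/N`. -/
def xg (N : ℕ) (ε : ℝ) (j : ℤ) : ℝ := ((j : ℝ) + ε) / N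

/-- Discrete Fourier coefficients of the logarithmic singularity on the shifted grid. -/
def gamd (N : ℕ) (ε : ℝ) (k : ℤ) : ℂ :=
  avg N (fun j => (lg (xg N ε j) : ℂ) * ee (-k) (xg N ε j))

/-- Discrete Fourier coefficients of the constant function `1` on the shifted grid. -/
def iotd (N : ℕ) (ε : ℝ) (k : ℤ) : ℂ := avg N (fun j => ee (-k) (xg N ε j))

/-- Symbol of the centred difference quotient with step `1/N`. -/
def deld (N : ℕ) (n : ℤ) : ℂ := 2 * I * N * (Real.sin (Real.pi * n / N) : ℂ)

/-- Fourier coefficients of the constant function `1`. -/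
def iot (k : ℤ) : ℂ := if k = 0 then 1 else 0

/-- Symbol of the derivative. -/
def del (n : ℤ) : ℂ := 2 * Real.pi * I * n

lemma avg_add (N : ℕ) (f g : ℤ → ℂ) : avg N (fun j => f j + g j) = avg N f + avg N g := by
  simp [avg, Finset.sum_add_distrib, mul_add]

lemma avg_sub (N : ℕ) (f g : ℤ → ℂ) : avg N (fun j => f j - g j) = avg N f - avg N g := by
  simp [avg, Finset.sum_sub_distrib, mul_sub]

lemma avg_const_mul (N : ℕ) (c : ℂ) (f : ℤ → ℂ) : avg N (fun j => c * f j) = c * avg N f := by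
  simp only [avg, ← Finset.mul_sum]
  ring

lemma avg_sum {ι : Type*} (N : ℕ) (s : Finset ι) (f : ι → ℤ → ℂ) :
    avg N (fun j => ∑ i ∈ s, f i j) = ∑ i ∈ s, avg N (f i) := by
  simp only [avg]
  rw [Finset.sum_comm, Finset.mul_sum]

lemma avg_congr (N : ℕ) {f g : ℤ → ℂ} (h : ∀ j : ℤ, f j = g j) : avg N f = avg N g := by
  simp [avg, h]

lemma norm_avg_le (N : ℕ) [NeZero N] {f : ℤ → ℂ} {C : ℝ} (h : ∀ j : ℤ, ‖f j‖ ≤ C) :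
    ‖avg N f‖ ≤ C := by
  have hN : (0:ℝ) < N := by exact_mod_cast Nat.pos_of_ne_zero (NeZero.ne N)
  unfold avg
  rw [norm_mul, norm_inv, Complex.norm_natCast, inv_mul_le_iff₀ hN]
  refine (norm_sum_le _ _).trans ?_
  calc ∑ j ∈ Finset.range N, ‖f j‖ ≤ ∑ j ∈ Finset.range N, C := Finset.sum_le_sum fun j _ => h j
    _ ≤ N * C := by simp

lemma avg_hasSum {ι : Type*} (N : ℕ) (f : ι → ℤ → ℂ) (g : ℤ → ℂ)
    (h : ∀ j : ℤ, HasSum (fun i => f i j) (g j)) : HasSum (fun i => avg N (f i)) (avg N g) := by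
  unfold avg
  have h1 : HasSum (fun i => ∑ j ∈ Finset.range N, f i j) (∑ j ∈ Finset.range N, g j) :=
    hasSum_sum (f := fun (j : ℕ) i => f i j) (a := fun j : ℕ => g j) fun j _ => h j
  exact h1.mul_left _

lemma avg_ee (N : ℕ) [NeZero N] (ε : ℝ) (k : ℤ) :
    avg N (fun j => ee k (xg N ε j)) = if (N : ℤ) ∣ k then ee k (ε / N) else 0 := by
  have hN : (N:ℝ) ≠ 0 := by exact_mod_cast NeZero.ne N
  have hNc : (N:ℂ) ≠ 0 := by exact_mod_cast NeZero.ne N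
  set w : ℂ := ee k (1 / N) with hw
  have h1 : ∀ j : ℕ, ee k (xg N ε j) = ee k (ε / N) * w ^ j := by
    intro j
    rw [hw]
    unfold ee xg
    rw [← Complex.exp_nat_mul, ← Complex.exp_add]
    congr 1
    push_cast
    ring
  have hwN : w ^ N = 1 := by
    rw [hw]
    have := ee_int k 1
    rw [← this]
    unfold ee
    rw [← Complex.exp_nat_mul]
    congr 1
    push_cast
    field_simp
  have hw1 : w = 1 ↔ (N : ℤ) ∣ k := by
    rw [hw]
    unfold ee
    rw [Complex.exp_eq_one_iff]
    have hpi : (2 * Real.pi * I : ℂ) ≠ 0 := by simp [Real.pi_ne_zero]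
    constructor
    · rintro ⟨n, hn⟩
      refine ⟨n, ?_⟩
      have : (2 * Real.pi * I : ℂ) * (k - N * n) = 0 := by
        push_cast at hn
        field_simp at hn
        linear_combination (2 * Real.pi * I) * hn
      have := (mul_eq_zero.mp this).resolve_left hpi
      have h2 : (k : ℂ) = ((N * n : ℤ) : ℂ) := by
        push_cast
        linear_combination this
      exact_mod_cast h2
    · rintro ⟨n, rfl⟩
      refine ⟨n, ?_⟩
      push_cast
      field_simp
  unfold avg
  simp_rw [h1]
  rw [← Finset.mul_sum]
  split_ifs with h
  · rw [hw1.mpr h]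
    simp
    field_simp
  · have hw' : w ≠ 1 := fun h' => h (hw1.mp h')
    rw [geom_sum_eq hw', hwN]
    simp

/-- The mean value over a period of the grid is invariant under reflections. -/
lemma avg_reflect (N : ℕ) [NeZero N] (f : ℤ → ℂ) (hf : ∀ j, f (j + N) = f j) (i : ℤ) :
    avg N (fun j => f (i - j)) = avg N f := by
  have hper : ∀ j l : ℤ, f (j + N * l) = f j := by
    intro j l
    have hp : Function.Periodic f (N : ℤ) := hf
    have := hp.int_mul l j
    rw [mul_comm]
    simpa using this
  have hz : ∀ g : ℤ → ℂ, ∑ j ∈ Finset.range N, g j = ∑ x : ZMod N, g (x.val : ℤ) := by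
    intro g
    obtain ⟨n, rfl⟩ := Nat.exists_eq_succ_of_ne_zero (NeZero.ne N)
    exact (Fin.sum_univ_eq_sum_range (fun j : ℕ => g (j:ℤ)) (n+1)).symm
  have hF : ∀ (a : ℤ) (x : ZMod N), (a : ZMod N) = x → f a = f (x.val : ℤ) := by
    intro a x hax
    have : ((a - x.val : ℤ) : ZMod N) = 0 := by
      push_cast
      rw [ZMod.natCast_zmod_val, hax, sub_self]
    rw [ZMod.intCast_zmod_eq_zero_iff_dvd] at this
    obtain ⟨l, hl⟩ := this
    have : a = x.val + N * l := by linarith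
    rw [this, hper]
  unfold avg
  rw [hz f, hz (fun j => f (i - j))]
  congr 1
  refine Fintype.sum_equiv (Equiv.subLeft ((i : ZMod N))) _ _ fun x => ?_
  apply hF
  simp

lemma iotd_eq (N : ℕ) [NeZero N] (ε : ℝ) (k : ℤ) :
    iotd N ε k = if (N : ℤ) ∣ k then ee (-k) (ε / N) else 0 := by
  unfold iotd
  rw [avg_ee]
  simp

/-! ### Integral representation of the discrete logarithmic symbol -/

lemma norm_one_sub_ge {z : ℂ} (hz : ‖z‖ = 1) (r : ℝ) : |z.im| ≤ ‖1 - r * z‖ := by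
  have h1 : ‖1 - r * z‖ = ‖(starRingEnd ℂ) z - r‖ := by
    have : (1 - r * z) = z * ((starRingEnd ℂ) z - r) := by
      rw [mul_sub, Complex.mul_conj, Complex.normSq_eq_norm_sq, hz]
      push_cast
      ring
    rw [this, norm_mul, hz, one_mul]
  rw [h1]
  have := Complex.abs_im_le_norm ((starRingEnd ℂ) z - r)
  simpa using this

lemma one_sub_ne {z : ℂ} (hz : ‖z‖ = 1) (him : z.im ≠ 0) (r : ℝ) : 1 - r * z ≠ 0 := by
  have h1 := norm_one_sub_ge hz r
  have h2 := abs_pos.mpr him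
  rw [← norm_pos_iff]
  linarith

/-- The moments `∫₀¹ r^p / (1 − r^N z) dr`. -/
def Jm (N : ℕ) (z : ℂ) (p : ℕ) : ℂ := ∫ r in (0:ℝ)..1, (r : ℂ) ^ p / (1 - (r ^ N : ℝ) * z)

lemma Jm_continuous {z : ℂ} (hz : ‖z‖ = 1) (him : z.im ≠ 0) (N p : ℕ) :
    Continuous (fun r : ℝ => (r : ℂ) ^ p / (1 - (r ^ N : ℝ) * z)) := by
  apply Continuous.div
  · fun_prop
  · fun_prop
  · exact fun r => one_sub_ne hz him _

/-- The geometric series of `1 / (1 - r ^ N z)`, one step at a time. -/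
lemma Jm_rec {z : ℂ} (hz : ‖z‖ = 1) (him : z.im ≠ 0) (N p : ℕ) :
    Jm N z p = ((p : ℂ) + 1)⁻¹ + z * Jm N z (p + N) := by
  unfold Jm
  rw [← intervalIntegral.integral_const_mul]
  have h1 : ∫ r in (0:ℝ)..1, (r : ℂ) ^ p = ((p : ℂ) + 1)⁻¹ := by
    have : ∀ r : ℝ, (r : ℂ) ^ p = ((r ^ p : ℝ) : ℂ) := fun r => by push_cast; rfl
    simp_rw [this]
    rw [intervalIntegral.integral_ofReal, integral_pow]
    simp
  rw [← h1, ← intervalIntegral.integral_add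
    (Continuous.intervalIntegrable (by fun_prop) _ _)
    (Continuous.intervalIntegrable ((Jm_continuous hz him N (p + N)).const_mul z) _ _)]
  congr 1
  ext r
  have := one_sub_ne hz him (r ^ N)
  push_cast at this ⊢
  field_simp
  ring

lemma Jm_bound {z : ℂ} (hz : ‖z‖ = 1) (him : z.im ≠ 0) (N p : ℕ) :
    ‖Jm N z p‖ ≤ |z.im|⁻¹ * ((p : ℝ) + 1)⁻¹ := by
  have hs := abs_pos.mpr him
  have h1 : ‖Jm N z p‖ ≤ ∫ r in (0:ℝ)..1, |z.im|⁻¹ * r ^ p := by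
    unfold Jm
    refine intervalIntegral.norm_integral_le_of_norm_le zero_le_one ?_
      (Continuous.intervalIntegrable (by fun_prop) _ _)
    filter_upwards with r hr
    rw [norm_div, norm_pow, Complex.norm_real, Real.norm_eq_abs, abs_of_pos hr.1, div_eq_mul_inv,
      mul_comm (|z.im|⁻¹)]
    have := norm_one_sub_ge hz (r ^ N)
    have := hr.1
    gcongr
  rw [intervalIntegral.integral_const_mul, integral_pow] at h1
  simpa using h1

lemma Jm_diff {z : ℂ} (hz : ‖z‖ = 1) (him : z.im ≠ 0) (N p : ℕ) :
    ‖Jm N z p - Jm N z (p + 1)‖ ≤ |z.im|⁻¹ * (((p : ℝ) + 1) ^ 2)⁻¹ := by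
  have hs := abs_pos.mpr him
  have h1 : ‖Jm N z p - Jm N z (p + 1)‖ ≤ ∫ r in (0:ℝ)..1, |z.im|⁻¹ * (r ^ p - r ^ (p + 1)) := by
    unfold Jm
    rw [← intervalIntegral.integral_sub
      (Continuous.intervalIntegrable (Jm_continuous hz him N p) _ _)
      (Continuous.intervalIntegrable (Jm_continuous hz him N (p + 1)) _ _)]
    refine intervalIntegral.norm_integral_le_of_norm_le zero_le_one ?_
      (Continuous.intervalIntegrable (by fun_prop) _ _)
    filter_upwards with r hr
    have hr0 := hr.1
    have hr1 := hr.2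
    have h2 : (r : ℂ) ^ p / (1 - (r ^ N : ℝ) * z) - (r : ℂ) ^ (p + 1) / (1 - (r ^ N : ℝ) * z)
        = ((r ^ p - r ^ (p + 1) : ℝ) : ℂ) / (1 - (r ^ N : ℝ) * z) := by
      push_cast
      ring
    have h3 : 0 ≤ r ^ p - r ^ (p + 1) := by
      have := pow_pos hr0 p
      rw [pow_succ]
      nlinarith
    rw [h2, norm_div, Complex.norm_real, Real.norm_eq_abs, abs_of_nonneg h3, div_eq_mul_inv,
      mul_comm (|z.im|⁻¹)]
    have := norm_one_sub_ge hz (r ^ N)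
    gcongr
  rw [intervalIntegral.integral_const_mul, intervalIntegral.integral_sub
    (Continuous.intervalIntegrable (by fun_prop) _ _)
    (Continuous.intervalIntegrable (by fun_prop) _ _), integral_pow, integral_pow] at h1
  refine h1.trans ?_
  gcongr
  simp only [one_pow, ne_eq, Nat.add_eq_zero_iff, one_ne_zero, and_false, not_false_eq_true, zero_pow,
    sub_zero, Nat.cast_add, Nat.cast_one]
  have hp : (0:ℝ) ≤ p := Nat.cast_nonneg p
  rw [div_sub_div _ _ (by positivity) (by positivity), inv_eq_one_div,
    div_le_div_iff₀ (by positivity) (by positivity)]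
  nlinarith

/-- On the unit circle, `log (1 - u)` splits into the residue classes of its power series modulo `N`;
each class is summed as a moment `Jm N (u ^ N) p`. -/
lemma log_one_sub_eq {u : ℂ} (hu : ‖u‖ = 1) (hu1 : u ≠ 1) (N : ℕ) (hz : (u ^ N).im ≠ 0) :
    Complex.log (1 - u) = -∑ p ∈ Finset.range N, u ^ (p + 1) * Jm N (u ^ N) p := by
  have hzn : ‖u ^ N‖ = 1 := by rw [norm_pow, hu, one_pow]
  have hre : u.re < 1 := by
    have h1 := Complex.re_le_norm u
    rw [hu] at h1
    refine lt_of_le_of_ne h1 fun h => hu1 ?_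
    have h2 := Complex.sq_norm u
    rw [hu, Complex.normSq_apply, h] at h2
    apply Complex.ext
    · simpa using h
    · simp
      nlinarith
  have hsl : ∀ r ∈ Set.Icc (0:ℝ) 1, (1 - r * u) ∈ Complex.slitPlane := by
    intro r hr
    left
    simp
    rcases hr.1.eq_or_lt with h | h
    · rw [← h]
      simp
    · nlinarith [hr.2]
  have hne : ∀ r ∈ Set.Icc (0:ℝ) 1, (1 - r * u) ≠ 0 := fun r hr =>
    Complex.slitPlane_ne_zero (hsl r hr)
  have hder : ∀ r ∈ Set.uIcc (0:ℝ) 1,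
      HasDerivAt (fun r : ℝ => Complex.log (1 - r * u)) (-u / (1 - r * u)) r := by
    intro r hr
    rw [Set.uIcc_of_le zero_le_one] at hr
    have h1 : HasDerivAt (fun y : ℝ => (y : ℂ)) 1 r := Complex.ofRealCLM.hasDerivAt
    have h2 := ((h1.mul_const u).const_sub 1).clog_real (hsl r hr)
    simpa using h2
  have hcont : ContinuousOn (fun r : ℝ => -u / (1 - r * u)) (Set.uIcc 0 1) := by
    rw [Set.uIcc_of_le zero_le_one]
    exact ContinuousOn.div (by fun_prop) (by fun_prop) hne
  have hinteg := intervalIntegral.integral_eq_sub_of_hasDerivAt hder hcont.intervalIntegrable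
  simp only [ofReal_one, one_mul, ofReal_zero, zero_mul, sub_zero, Complex.log_one] at hinteg
  rw [← hinteg, ← Finset.sum_neg_distrib]
  have h3 : ∀ p, -(u ^ (p + 1) * Jm N (u ^ N) p)
      = ∫ r in (0:ℝ)..1, -u ^ (p + 1) * ((r : ℂ) ^ p / (1 - (r ^ N : ℝ) * u ^ N)) := by
    intro p
    rw [intervalIntegral.integral_const_mul, Jm]
    ring
  simp_rw [h3]
  rw [← intervalIntegral.integral_finsetSum (fun p _ =>
    Continuous.intervalIntegrable ((Jm_continuous hzn hz N p).const_mul _) _ _)]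
  apply intervalIntegral.integral_congr
  intro r hr
  rw [Set.uIcc_of_le zero_le_one] at hr
  have h4 := hne r hr
  have h5 := one_sub_ne hzn hz (r ^ N)
  have h6 : ∑ p ∈ Finset.range N, -u ^ (p + 1) * ((r : ℂ) ^ p / (1 - (r ^ N : ℝ) * u ^ N))
      = -u * (∑ p ∈ Finset.range N, (r * u) ^ p) / (1 - (r ^ N : ℝ) * u ^ N) := by
    rw [Finset.mul_sum, Finset.sum_div]
    refine Finset.sum_congr rfl fun p _ => ?_
    rw [mul_pow]
    ring
  simp only
  rw [h6, div_eq_div_iff h4 h5]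
  have h7 := mul_neg_geom_sum ((r:ℂ) * u) N
  rw [mul_pow] at h7
  push_cast
  linear_combination u * h7

end NysAux

end

noncomputable section

namespace NysAux

open Complex Filter Topology MeasureTheory

/-! ### Exact discrete symbol of the logarithmic singularity -/

lemma re_lt_one {u : ℂ} (hu : ‖u‖ = 1) (hu1 : u ≠ 1) : u.re < 1 := by
  have h1 := Complex.re_le_norm u
  rw [hu] at h1
  refine lt_of_le_of_ne h1 fun h => hu1 ?_
  have h2 := Complex.sq_norm u
  rw [hu, Complex.normSq_apply, h] at h2
  apply Complex.ext
  · simpa using h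
  · simp
    nlinarith

lemma lg_eq_log (x : ℝ) (hx : ee 1 x ≠ 1) :
    (lg x : ℂ) = Complex.log (1 - ee 1 x) + Complex.log (1 - ee (-1) x) - (2 * Real.log 2 : ℝ) := by
  have hre := re_lt_one (norm_ee 1 x) hx
  have hsl : (1 - ee 1 x) ∈ Complex.slitPlane := by
    left
    simpa using hre
  have hne : (1 - ee 1 x) ≠ 0 := Complex.slitPlane_ne_zero hsl
  have hc : 1 - ee (-1) x = (starRingEnd ℂ) (1 - ee 1 x) := by
    rw [map_sub, conj_ee]
    simp
  have hn : ‖1 - ee 1 x‖ = 2 * |Real.sin (Real.pi * x)| := by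
    have h1 : 1 - ee 1 x = ee 1 x * (ee (-1) x - 1) := by
      rw [mul_sub, ee_mul_neg, mul_one]
    rw [h1, norm_mul, norm_ee, one_mul, ee_one_sub]
    have : -(Real.pi * x * I : ℂ) = ((-(Real.pi * x) : ℝ) : ℂ) * I := by
      push_cast
      ring
    rw [norm_mul, this, Complex.norm_exp_ofReal_mul_I, mul_one, norm_mul, Complex.norm_real]
    simp
  have hs : |Real.sin (Real.pi * x)| ≠ 0 := by
    intro h
    rw [h, mul_zero, norm_eq_zero] at hn
    exact hne hn
  rw [hc, Complex.log_conj _ (Complex.mem_slitPlane_iff_arg.mp hsl).1, Complex.add_conj, Complex.log_re,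
    hn, Real.log_mul two_ne_zero hs, Real.log_abs, lg_eq]
  push_cast
  ring

section
variable (N : ℕ) [NeZero N] (ε : ℝ) (him : (ee 1 ε).im ≠ 0)

lemma ee_xg_pow (n j : ℤ) : ee n (xg N ε j) ^ N = ee n ε := by
  have hN : (N:ℂ) ≠ 0 := by exact_mod_cast NeZero.ne N
  rw [← mul_one (ee n ε), ← ee_int n j, ← ee_add_right]
  unfold ee xg
  rw [← Complex.exp_nat_mul]
  congr 1
  push_cast
  field_simp
  ring

include him in
lemma ee_xg_ne (j : ℤ) : ee 1 (xg N ε j) ≠ 1 := by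
  intro h
  have := ee_xg_pow N ε 1 j
  rw [h, one_pow] at this
  rw [← this] at him
  simp at him

include him in
lemma im_ee_neg : (ee (-1) ε).im ≠ 0 := by
  rw [← conj_ee]
  simpa using him

include him in
/-- Exact discrete Fourier expansion of the logarithmic singularity on the shifted grid. -/
lemma lg_xg (j : ℤ) : (lg (xg N ε j) : ℂ) = -(2 * Real.log 2 : ℝ)
    - ∑ p ∈ Finset.range N, Jm N (ee 1 ε) p * ee ((p:ℤ) + 1) (xg N ε j)
    - ∑ p ∈ Finset.range N, Jm N (ee (-1) ε) p * ee (-((p:ℤ) + 1)) (xg N ε j) := by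
  have h1 := ee_xg_ne N ε him j
  have h2 : ee (-1) (xg N ε j) ≠ 1 := by
    intro h
    have := ee_mul_neg 1 (xg N ε j)
    rw [h, mul_one] at this
    exact h1 this
  have e1 := ee_xg_pow N ε 1 j
  have e2 := ee_xg_pow N ε (-1) j
  rw [lg_eq_log _ h1, log_one_sub_eq (norm_ee _ _) h1 N (by rw [e1]; exact him),
    log_one_sub_eq (norm_ee _ _) h2 N (by rw [e2]; exact im_ee_neg ε him), e1, e2]
  have t1 : ∀ p : ℕ, ee 1 (xg N ε j) ^ (p + 1) * Jm N (ee 1 ε) p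
      = Jm N (ee 1 ε) p * ee ((p:ℤ) + 1) (xg N ε j) := by
    intro p
    rw [ee_pow, mul_comm]
    congr 2
    push_cast
    ring
  have t2 : ∀ p : ℕ, ee (-1) (xg N ε j) ^ (p + 1) * Jm N (ee (-1) ε) p
      = Jm N (ee (-1) ε) p * ee (-((p:ℤ) + 1)) (xg N ε j) := by
    intro p
    rw [ee_pow, mul_comm]
    congr 2
    push_cast
    ring
  simp_rw [t1, t2]
  ring

include him in
lemma gamd_sum (k : ℤ) : gamd N ε k = -(2 * Real.log 2 : ℝ) * iotd N ε k
    - ∑ p ∈ Finset.range N, Jm N (ee 1 ε) p *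
        (if (N:ℤ) ∣ (p:ℤ) + 1 - k then ee ((p:ℤ) + 1 - k) (ε / N) else 0)
    - ∑ p ∈ Finset.range N, Jm N (ee (-1) ε) p *
        (if (N:ℤ) ∣ -((p:ℤ) + 1) - k then ee (-((p:ℤ) + 1) - k) (ε / N) else 0) := by
  have h1 : gamd N ε k = avg N (fun j => -(2 * Real.log 2 : ℝ) * ee (-k) (xg N ε j)
      - ∑ p ∈ Finset.range N, Jm N (ee 1 ε) p * ee ((p:ℤ) + 1 - k) (xg N ε j)
      - ∑ p ∈ Finset.range N, Jm N (ee (-1) ε) p * ee (-((p:ℤ) + 1) - k) (xg N ε j)) := by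
    refine avg_congr N fun j => ?_
    rw [lg_xg N ε him, sub_mul, sub_mul, Finset.sum_mul, Finset.sum_mul]
    congr 2
    · refine Finset.sum_congr rfl fun p _ => ?_
      rw [sub_eq_add_neg _ k, ee_add _ (-k)]
      ring
    · ext p
      rw [sub_eq_add_neg _ k, ee_add _ (-k)]
      ring
  rw [h1, avg_sub, avg_sub, avg_const_mul, avg_sum, avg_sum]
  simp_rw [avg_const_mul]
  rw [iotd]
  congr 2
  · refine Finset.sum_congr rfl fun p _ => ?_
    rw [avg_ee]
  · ext p
    rw [avg_ee]

lemma ee_mul_div (l : ℤ) : ee (N * l) (ε / N) = ee l ε := by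
  have hN : (N:ℂ) ≠ 0 := by exact_mod_cast NeZero.ne N
  unfold ee
  congr 1
  push_cast
  field_simp

/-- The dual half of the integral representation, common to all frequencies `0 ≤ k < N`. -/
lemma gamd_aux (k : ℕ) (hk : k < N) : ∑ p ∈ Finset.range N, Jm N (ee (-1) ε) p *
        (if (N:ℤ) ∣ -((p:ℤ) + 1) - k then ee (-((p:ℤ) + 1) - k) (ε / N) else 0)
      = ee (-1) ε * Jm N (ee (-1) ε) (N - 1 - k) := by
  rw [Finset.sum_eq_single (N - 1 - k)]
  · have : -(((N - 1 - k : ℕ):ℤ) + 1) - (k:ℤ) = N * (-1) := by omega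
    rw [this, if_pos (Dvd.intro _ rfl), ee_mul_div, mul_comm]
  · intro p hp hne
    rw [Finset.mem_range] at hp
    rw [if_neg, mul_zero]
    rintro ⟨l, hl⟩
    have h1 : -2 < l := by
      by_contra hc
      have : (N:ℤ) * l ≤ N * (-2) := mul_le_mul_of_nonneg_left (by omega) (by omega)
      omega
    have h2 : l < 0 := by
      by_contra hc
      have : (N:ℤ) * 0 ≤ N * l := mul_le_mul_of_nonneg_left (by omega) (by omega)
      omega
    have h3 : l = -1 := by omega
    subst h3
    omega
  · intro h
    exact absurd (Finset.mem_range.mpr (by omega)) h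

include him in
/-- Integral representation of the discrete symbol at the frequencies `0 < k < N`. -/
lemma gamd_pos (k : ℕ) (hk0 : 0 < k) (hk : k < N) : gamd N ε k =
    -(Jm N (ee 1 ε) (k - 1) + ee (-1) ε * Jm N (ee (-1) ε) (N - 1 - k)) := by
  rw [gamd_sum N ε him, gamd_aux N ε k hk, iotd_eq]
  have hnd : ¬ (N:ℤ) ∣ (k:ℤ) := by
    intro h
    have := Int.le_of_dvd (by omega) h
    omega
  rw [if_neg hnd, Finset.sum_eq_single (k - 1)]
  · have : ((k - 1 : ℕ):ℤ) + 1 - k = 0 := by omega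
    rw [this]
    simp
    ring
  · intro p hp hne
    rw [Finset.mem_range] at hp
    rw [if_neg, mul_zero]
    intro h
    have h0 : (p:ℤ) + 1 - k = 0 := by
      refine Int.eq_zero_of_abs_lt_dvd h ?_
      rw [abs_lt]
      constructor <;> omega
    omega
  · intro h
    exact absurd (Finset.mem_range.mpr (by omega)) h

include him in
/-- Exact formula for the error of the discrete symbol: the frequencies aliased to `k`. -/
lemma gamd_sub_gam (k : ℕ) (hk : k < N) : gamd N ε k - gam k =
    -(ee 1 ε * Jm N (ee 1 ε) (k + N - 1) + ee (-1) ε * Jm N (ee (-1) ε) (N - 1 - k)) := by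
  rcases Nat.eq_zero_or_pos k with h0 | h0
  · subst h0
    rw [gamd_sum N ε him, gamd_aux N ε 0 hk, iotd_eq, Finset.sum_eq_single (N - 1)]
    · have : ((N - 1 : ℕ):ℤ) + 1 - ((0:ℕ):ℤ) = N * 1 := by omega
      rw [this, ee_mul_div]
      simp [gam]
      ring
    · intro p hp hne
      rw [Finset.mem_range] at hp
      rw [if_neg, mul_zero]
      intro h
      have := Int.le_of_dvd (by omega) h
      omega
    · intro h
      exact absurd (Finset.mem_range.mpr (by omega)) h
  · rw [gamd_pos N ε him k h0 hk, Jm_rec (norm_ee _ _) him, gam, if_neg (by omega),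
      show k - 1 + N = k + N - 1 by omega]
    have : ((k - 1 : ℕ) : ℂ) + 1 = k := by
      have : ((k - 1 + 1 : ℕ) : ℂ) = k := by rw [Nat.sub_add_cancel h0]
      rw [← this]
      push_cast
      rfl
    rw [this]
    simp
    ring

lemma gamd_neg (k : ℤ) : gamd N ε (-k) = (starRingEnd ℂ) (gamd N ε k) := by
  unfold gamd avg
  rw [map_mul, map_sum]
  simp [conj_ee]

lemma gam_neg (k : ℤ) : gam (-k) = (starRingEnd ℂ) (gam k) := by
  unfold gam
  simp only [neg_eq_zero, Int.cast_neg, abs_neg]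
  split_ifs <;> rw [map_neg, Complex.conj_ofReal]

/-- The discrete symbol is quasi-periodic, with the multiplier `ee (-l) ε` coming from the shift. -/
lemma gamd_add_mul (k l : ℤ) : gamd N ε (k + N * l) = ee (-l) ε * gamd N ε k := by
  unfold gamd
  rw [← avg_const_mul]
  refine avg_congr N fun j => ?_
  have h1 : ee (-(N * l)) (xg N ε j) = ee (-l) ε := by
    have := ee_xg_pow N ε (-l) j
    rw [ee_pow] at this
    rw [← this]
    congr 1
    ring
  rw [neg_add, ee_add, h1]
  ring

end

end NysAux

end

noncomputable section

namespace NysAux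

open Complex Filter Topology MeasureTheory

/-! ### Uniform bounds for the discrete symbols -/

section
variable (N : ℕ) [NeZero N] (ε : ℝ) (him : (ee 1 ε).im ≠ 0)

lemma abs_im_neg : |(ee (-1) ε).im| = |(ee 1 ε).im| := by
  rw [← conj_ee]
  simp

lemma cast_N_pos : (0:ℝ) < N := by exact_mod_cast Nat.pos_of_ne_zero (NeZero.ne N)

lemma one_le_N : (1:ℝ) ≤ N := by exact_mod_cast Nat.one_le_iff_ne_zero.mpr (NeZero.ne N)

/-- The error of the discrete logarithmic symbol. -/
def rho (N : ℕ) (ε : ℝ) (k : ℤ) : ℂ := gamd N ε k - gam k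

lemma rho_neg (k : ℤ) : rho N ε (-k) = (starRingEnd ℂ) (rho N ε k) := by
  unfold rho
  rw [gamd_neg, gam_neg, map_sub]

include him in
lemma rho_bound_nat (k : ℕ) (hk : 4 * k ≤ 3 * N) :
    ‖rho N ε k‖ ≤ 5 * |(ee 1 ε).im|⁻¹ * (N : ℝ)⁻¹ := by
  have hNp := cast_N_pos N
  have hN0 : 0 < N := Nat.pos_of_ne_zero (NeZero.ne N)
  have hs := abs_pos.mpr him
  unfold rho
  rw [gamd_sub_gam N ε him k (by omega), norm_neg]
  refine (norm_add_le _ _).trans ?_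
  rw [norm_mul, norm_mul, norm_ee, norm_ee, one_mul, one_mul]
  have h1 := Jm_bound (norm_ee 1 ε) him N (k + N - 1)
  have h2 := Jm_bound (norm_ee (-1) ε) (im_ee_neg ε him) N (N - 1 - k)
  rw [abs_im_neg] at h2
  have e1 : ((k + N - 1 : ℕ) : ℝ) + 1 = k + N := by
    have : k + N - 1 + 1 = k + N := by omega
    exact_mod_cast this
  have e2 : ((N - 1 - k : ℕ) : ℝ) + 1 = N - k := by
    have : N - 1 - k + 1 + k = N := by omega
    have : ((N - 1 - k : ℕ) : ℝ) + 1 + k = N := by exact_mod_cast this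
    linarith
  rw [e1] at h1
  rw [e2] at h2
  have hk' : (4:ℝ) * k ≤ 3 * N := by exact_mod_cast hk
  have i1 : ((k:ℝ) + N)⁻¹ ≤ (N:ℝ)⁻¹ := by
    gcongr
    linarith [(Nat.cast_nonneg k : (0:ℝ) ≤ k)]
  have i2 : ((N:ℝ) - k)⁻¹ ≤ 4 * (N:ℝ)⁻¹ := by
    rw [inv_le_comm₀ (by linarith) (by positivity), mul_inv, inv_inv]
    linarith
  have := inv_pos.mpr hs
  nlinarith

include him in
lemma rho_bound (k : ℤ) (hk : 4 * |k| ≤ 3 * N) :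
    ‖rho N ε k‖ ≤ 5 * |(ee 1 ε).im|⁻¹ * (N : ℝ)⁻¹ := by
  obtain ⟨n, rfl | rfl⟩ := Int.eq_nat_or_neg k
  · exact rho_bound_nat N ε him n (by rw [Nat.abs_cast] at hk; omega)
  · rw [rho_neg, RCLike.norm_conj]
    exact rho_bound_nat N ε him n (by rw [abs_neg, Nat.abs_cast] at hk; omega)

include him in
lemma rho_step_nat (k : ℕ) (hk : 4 * (k + 1) ≤ 3 * N) :
    ‖rho N ε (k + 1) - rho N ε k‖ ≤ 17 * |(ee 1 ε).im|⁻¹ * ((N : ℝ) ^ 2)⁻¹ := by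
  have hNp := cast_N_pos N
  have hN0 : 0 < N := Nat.pos_of_ne_zero (NeZero.ne N)
  have hs := abs_pos.mpr him
  unfold rho
  have hg := gamd_sub_gam N ε him (k + 1) (by omega)
  push_cast at hg
  rw [gamd_sub_gam N ε him k (by omega), hg]
  have h1 := Jm_diff (norm_ee 1 ε) him N (k + N - 1)
  have h2 := Jm_diff (norm_ee (-1) ε) (im_ee_neg ε him) N (N - 1 - (k + 1))
  rw [show k + N - 1 + 1 = k + 1 + N - 1 by omega] at h1
  rw [show N - 1 - (k + 1) + 1 = N - 1 - k by omega] at h2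
  rw [abs_im_neg] at h2
  have e1 : ((k + N - 1 : ℕ) : ℝ) + 1 = k + N := by
    have : k + N - 1 + 1 = k + N := by omega
    exact_mod_cast this
  have e2 : ((N - 1 - (k + 1) : ℕ) : ℝ) + 1 = N - (k + 1) := by
    have : N - 1 - (k + 1) + 1 + (k + 1) = N := by omega
    have : ((N - 1 - (k + 1) : ℕ) : ℝ) + 1 + (k + 1) = N := by exact_mod_cast this
    linarith
  rw [e1] at h1
  rw [e2] at h2
  have hk' : (4:ℝ) * (k + 1) ≤ 3 * N := by exact_mod_cast hk
  have i1 : (((k:ℝ) + N) ^ 2)⁻¹ ≤ ((N:ℝ) ^ 2)⁻¹ := by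
    gcongr
    linarith [(Nat.cast_nonneg k : (0:ℝ) ≤ k)]
  have i2 : (((N:ℝ) - (k + 1)) ^ 2)⁻¹ ≤ 16 * ((N:ℝ) ^ 2)⁻¹ := by
    have h3 : (N:ℝ) / 4 ≤ N - (k + 1) := by linarith
    have h4 : ((N:ℝ) / 4) ^ 2 ≤ (N - (k + 1)) ^ 2 := by gcongr
    calc (((N:ℝ) - (k + 1)) ^ 2)⁻¹ ≤ (((N:ℝ) / 4) ^ 2)⁻¹ := by gcongr
      _ = _ := by field_simp; norm_num
  set a := Jm N (ee 1 ε) (k + N - 1)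
  set b := Jm N (ee 1 ε) (k + 1 + N - 1)
  set c := Jm N (ee (-1) ε) (N - 1 - (k + 1))
  set d := Jm N (ee (-1) ε) (N - 1 - k)
  have e3 : -(ee 1 ε * b + ee (-1) ε * c) - -(ee 1 ε * a + ee (-1) ε * d)
      = ee 1 ε * (a - b) - ee (-1) ε * (c - d) := by ring
  rw [e3]
  refine (norm_sub_le _ _).trans ?_
  rw [norm_mul, norm_mul, norm_ee, norm_ee, one_mul, one_mul]
  have := inv_pos.mpr hs
  nlinarith

include him in
/-- The error of the discrete symbol varies slowly with the frequency. This gains one order over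
`rho_bound`, and is what makes the discrete remainder matrix of order zero. -/
lemma rho_step (k : ℤ) (hk : 4 * |k| ≤ 3 * N) (hk1 : 4 * |k + 1| ≤ 3 * N) :
    ‖rho N ε (k + 1) - rho N ε k‖ ≤ 17 * |(ee 1 ε).im|⁻¹ * ((N : ℝ) ^ 2)⁻¹ := by
  by_cases h : 0 ≤ k
  · obtain ⟨n, rfl⟩ := Int.eq_ofNat_of_zero_le h
    refine rho_step_nat N ε him n ?_
    have := le_abs_self ((n:ℤ) + 1)
    omega
  · obtain ⟨n, hn⟩ := Int.eq_ofNat_of_zero_le (show 0 ≤ -(k + 1) by omega)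
    have e1 : k + 1 = -(n:ℤ) := by omega
    have e2 : k = -((n:ℤ) + 1) := by omega
    rw [e1]
    nth_rewrite 1 [e2]
    rw [rho_neg, rho_neg, ← map_sub, RCLike.norm_conj, norm_sub_rev]
    refine rho_step_nat N ε him n ?_
    have := neg_le_abs k
    omega

include him in
lemma rho_lip_aux (a : ℤ) (ha : 4 * |a| ≤ 3 * N) (n : ℕ) (hb : 4 * |a + n| ≤ 3 * N) :
    ‖rho N ε (a + n) - rho N ε a‖ ≤ n * (17 * |(ee 1 ε).im|⁻¹ * ((N : ℝ) ^ 2)⁻¹) := by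
  induction n with
  | zero => simp
  | succ n ih =>
    have hb' : 4 * |a + (n:ℤ)| ≤ 3 * N := by
      rcases abs_cases a with h1 | h1 <;> rcases abs_cases (a + (n:ℤ)) with h2 | h2 <;>
        rcases abs_cases (a + ((n+1:ℕ):ℤ)) with h3 | h3 <;> push_cast at * <;> omega
    have h1 := ih hb'
    have h2 := rho_step N ε him (a + n) hb' (by push_cast at hb; rw [add_assoc]; exact hb)
    have e : rho N ε (a + (n + 1 : ℕ)) - rho N ε a
        = (rho N ε (a + n + 1) - rho N ε (a + n)) + (rho N ε (a + n) - rho N ε a) := by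
      push_cast
      rw [add_assoc]
      ring
    rw [e]
    refine (norm_add_le _ _).trans ?_
    push_cast
    linarith

include him in
lemma rho_lip (m q : ℤ) (hm : 4 * |m| ≤ 3 * N) (hq : 4 * |m + q| ≤ 3 * N) :
    ‖rho N ε (m + q) - rho N ε m‖ ≤ |(q:ℝ)| * (17 * |(ee 1 ε).im|⁻¹ * ((N : ℝ) ^ 2)⁻¹) := by
  obtain ⟨n, rfl | rfl⟩ := Int.eq_nat_or_neg q
  · simpa using rho_lip_aux N ε him m hm n hq
  · have := rho_lip_aux N ε him (m + -(n:ℤ)) hq n (by simpa using hm)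
    rw [norm_sub_rev]
    simpa using this

lemma norm_gam_le (k : ℤ) : ‖gam k‖ ≤ 2 := by
  unfold gam
  split_ifs with h
  · rw [norm_neg, Complex.norm_real, Real.norm_eq_abs,
      abs_of_nonneg (by have := Real.log_nonneg one_le_two; positivity)]
    have := Real.log_two_lt_d9
    linarith
  · rw [norm_neg, Complex.norm_real, Real.norm_eq_abs, abs_inv, abs_abs]
    have : (1:ℝ) ≤ |(k:ℝ)| := by exact_mod_cast Int.one_le_abs h
    exact (inv_le_one_of_one_le₀ this).trans (by norm_num)

include him in
lemma gamd_bounded (k : ℤ) : ‖gamd N ε k‖ ≤ 5 * |(ee 1 ε).im|⁻¹ + 2 := by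
  have hN0 : 0 < (N:ℤ) := by exact_mod_cast Nat.pos_of_ne_zero (NeZero.ne N)
  have key : ∀ k : ℤ, 4 * |k| ≤ 3 * N → ‖gamd N ε k‖ ≤ 5 * |(ee 1 ε).im|⁻¹ + 2 := by
    intro k hk
    have h1 := rho_bound N ε him k hk
    have h2 := norm_gam_le k
    have e : gamd N ε k = rho N ε k + gam k := by unfold rho; ring
    rw [e]
    refine (norm_add_le _ _).trans (add_le_add (h1.trans ?_) h2)
    have h3 : (N:ℝ)⁻¹ ≤ 1 := inv_le_one_of_one_le₀ (one_le_N N)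
    have h4 : (0:ℝ) ≤ 5 * |(ee 1 ε).im|⁻¹ := by positivity
    exact mul_le_of_le_one_right h4 h3
  have h0 := Int.emod_nonneg k hN0.ne'
  have h1 := Int.emod_lt_of_pos k hN0
  have e0 := Int.emod_add_mul_ediv k N
  by_cases h : 4 * (k % N) ≤ 3 * N
  · rw [← e0, gamd_add_mul, norm_mul, norm_ee, one_mul]
    exact key _ (by rw [abs_of_nonneg h0]; exact h)
  · have e1 : k = (k % N - N) + N * (k / N + 1) := by linarith
    rw [e1, gamd_add_mul, norm_mul, norm_ee, one_mul]
    exact key _ (by rw [abs_of_nonpos (by omega)]; omega)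

include him in
lemma gamd_lower_nat (k : ℕ) (hk0 : 0 < k) (hk : 2 * k ≤ N) :
    |(ee 1 ε).im| / (6 * k) ≤ ‖gamd N ε k‖ := by
  have hN0 : 0 < N := Nat.pos_of_ne_zero (NeZero.ne N)
  set z := ee 1 ε with hz
  have hzn : ‖z‖ = 1 := norm_ee _ _
  have hz' : ee (-1) ε = (starRingEnd ℂ) z := by rw [hz, conj_ee]
  have hzz : z * (starRingEnd ℂ) z = 1 := by rw [← hz', hz, ee_mul_neg]
  have him' : ((starRingEnd ℂ) z).im ≠ 0 := by simpa using him
  have hzn' : ‖(starRingEnd ℂ) z‖ = 1 := by rw [RCLike.norm_conj, hzn]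
  have h1 : ‖gamd N ε k‖
      = ‖z * Jm N z (k - 1) + Jm N ((starRingEnd ℂ) z) (N - 1 - k)‖ := by
    rw [gamd_pos N ε him k hk0 (by omega), norm_neg, ← one_mul ‖_ + _‖, ← hzn, ← norm_mul, mul_add,
      ← mul_assoc, hz', hzz, one_mul]
  rw [h1]
  have hc1 := (Jm_continuous hzn him N (k - 1)).const_mul z
  have hc2 := Jm_continuous hzn' him' N (N - 1 - k)
  unfold Jm
  rw [← intervalIntegral.integral_const_mul, ← intervalIntegral.integral_add
    (hc1.intervalIntegrable _ _) (hc2.intervalIntegrable _ _)]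
  refine le_trans ?_ (Complex.abs_im_le_norm _)
  have h2 := Complex.imCLM.intervalIntegral_comp_comm ((hc1.fun_add hc2).intervalIntegrable (μ := volume) 0 1)
  simp only [Complex.imCLM_apply] at h2
  rw [← h2]
  have h3 : ∀ r : ℝ, (z * ((r:ℂ) ^ (k - 1) / (1 - (r ^ N : ℝ) * z))
      + (r:ℂ) ^ (N - 1 - k) / (1 - (r ^ N : ℝ) * (starRingEnd ℂ) z)).im
      = z.im * ((r ^ (k - 1) - r ^ (2 * N - 1 - k)) / Complex.normSq (1 - (r ^ N : ℝ) * z)) := by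
    intro r
    have n1 := one_sub_ne hzn him (r ^ N)
    have n2 := one_sub_ne hzn' him' (r ^ N)
    have hD : (Complex.normSq (1 - (r ^ N : ℝ) * z) : ℂ)
        = (1 - (r ^ N : ℝ) * z) * (1 - (r ^ N : ℝ) * (starRingEnd ℂ) z) := by
      rw [← Complex.mul_conj, map_sub, map_mul, Complex.conj_ofReal, map_one]
    have hD0 : Complex.normSq (1 - (r ^ N : ℝ) * z) ≠ 0 := by
      rw [Complex.normSq_eq_norm_sq]
      have := norm_pos_iff.mpr n1
      positivity
    have e1 : z * ((r:ℂ) ^ (k - 1) / (1 - (r ^ N : ℝ) * z))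
      + (r:ℂ) ^ (N - 1 - k) / (1 - (r ^ N : ℝ) * (starRingEnd ℂ) z)
      = (((r ^ (k - 1) : ℝ) : ℂ) * (z - (r ^ N : ℝ)) + ((r ^ (N - 1 - k) : ℝ) : ℂ)
        * (1 - (r ^ N : ℝ) * z)) / (Complex.normSq (1 - (r ^ N : ℝ) * z) : ℝ) := by
      rw [hD, mul_div_assoc', div_add_div _ _ n1 n2]
      congr 1
      push_cast
      linear_combination (-(r:ℂ) ^ N * r ^ (k - 1)) * hzz
    rw [e1, Complex.div_ofReal_im]
    have e2 : r ^ (2 * N - 1 - k) = r ^ (N - 1 - k) * r ^ N := by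
      rw [← pow_add]
      congr 1
      omega
    rw [e2]
    simp only [add_im, mul_im, sub_im, sub_re, ofReal_re, ofReal_im, one_re, one_im, mul_re]
    field_simp
    ring
  simp_rw [h3]
  rw [intervalIntegral.integral_const_mul, abs_mul]
  have h4 : (∫ r in (0:ℝ)..1, (r ^ (k - 1) - r ^ (2 * N - 1 - k)) / 4)
      ≤ ∫ r in (0:ℝ)..1, (r ^ (k - 1) - r ^ (2 * N - 1 - k)) / Complex.normSq (1 - (r ^ N : ℝ) * z) := by
    have hpos : ∀ r : ℝ, 0 < Complex.normSq (1 - (r ^ N : ℝ) * z) := fun r =>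
      Complex.normSq_pos.mpr (one_sub_ne hzn him (r ^ N))
    refine intervalIntegral.integral_mono_on zero_le_one
      (Continuous.intervalIntegrable (by fun_prop) _ _)
      (Continuous.intervalIntegrable ?_ _ _) fun r hr => ?_
    · refine Continuous.div (by fun_prop) ?_ fun r => (hpos r).ne'
      exact Complex.continuous_normSq.comp (by fun_prop)
    · have hr1 : r ^ N ≤ 1 := pow_le_one₀ hr.1 hr.2
      have hr0 : 0 ≤ r ^ N := pow_nonneg hr.1 N
      have hD4 : Complex.normSq (1 - (r ^ N : ℝ) * z) ≤ 4 := by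
        rw [Complex.normSq_eq_norm_sq]
        have : ‖1 - ((r ^ N : ℝ):ℂ) * z‖ ≤ 2 := by
          refine (norm_sub_le _ _).trans ?_
          rw [norm_mul, hzn, mul_one, Complex.norm_real, norm_one, Real.norm_eq_abs, abs_of_nonneg hr0]
          linarith
        nlinarith [norm_nonneg (1 - ((r ^ N : ℝ):ℂ) * z)]
      have hnn : 0 ≤ r ^ (k - 1) - r ^ (2 * N - 1 - k) :=
        sub_nonneg.mpr (pow_le_pow_of_le_one hr.1 hr.2 (by omega))
      exact div_le_div_of_nonneg_left hnn (hpos r) hD4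
  rw [intervalIntegral.integral_div, intervalIntegral.integral_sub
    (Continuous.intervalIntegrable (by fun_prop) _ _)
    (Continuous.intervalIntegrable (by fun_prop) _ _), integral_pow, integral_pow] at h4
  have e1 : ((k - 1 : ℕ) : ℝ) + 1 = k := by
    have : k - 1 + 1 = k := by omega
    exact_mod_cast this
  have e2 : ((2 * N - 1 - k : ℕ) : ℝ) + 1 = 2 * N - k := by
    have : 2 * N - 1 - k + 1 + k = 2 * N := by omega
    have : ((2 * N - 1 - k : ℕ) : ℝ) + 1 + k = 2 * N := by exact_mod_cast this
    linarith
  rw [e1, e2] at h4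
  simp only [one_pow, ne_eq, Nat.add_eq_zero_iff, one_ne_zero, and_false, not_false_eq_true,
    zero_pow, sub_zero] at h4
  have hkp : (0:ℝ) < k := by exact_mod_cast hk0
  have hk' : (2:ℝ) * k ≤ N := by exact_mod_cast hk
  have h5 : 1 / (2 * (N:ℝ) - k) ≤ 1 / (3 * k) :=
    one_div_le_one_div_of_le (by positivity) (by linarith)
  have h6 : 1 / (6 * (k:ℝ)) ≤ (1 / k - 1 / (2 * (N:ℝ) - k)) / 4 := by
    have : 1 / (6 * (k:ℝ)) = (1 / k - 1 / (3 * (k:ℝ))) / 4 := by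
      field_simp
      norm_num
    rw [this]
    linarith
  rw [div_eq_mul_one_div]
  refine mul_le_mul_of_nonneg_left ?_ (abs_nonneg _)
  exact (h6.trans h4).trans (le_abs_self _)

include him in
/-- Ellipticity of the discrete logarithmic symbol. -/
lemma gamd_lower (k : ℤ) (hk0 : k ≠ 0) (hk : 2 * |k| ≤ N) :
    |(ee 1 ε).im| / (6 * |(k:ℝ)|) ≤ ‖gamd N ε k‖ := by
  obtain ⟨n, rfl | rfl⟩ := Int.eq_nat_or_neg k
  · have := gamd_lower_nat N ε him n (by omega) (by rw [Nat.abs_cast] at hk; omega)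
    simpa using this
  · rw [gamd_neg, RCLike.norm_conj]
    have := gamd_lower_nat N ε him n (by omega) (by rw [abs_neg, Nat.abs_cast] at hk; omega)
    simpa using this

end

end NysAux

end

noncomputable section

namespace NysAux

open Complex Filter Topology MeasureTheory

/-! ### The continuous and discrete symbol estimates in the form used by the matrix bounds -/

lemma wt_le_two_mul {m q : ℤ} (h : |m| ≤ 2 * |q| + 1) : wt m ≤ 2 * wt q := by
  unfold wt
  have : ((|m| : ℤ) : ℝ) ≤ ((2 * |q| + 1 : ℤ) : ℝ) := by exact_mod_cast h
  push_cast at this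
  linarith

lemma wt_mono {m q : ℤ} (h : |m| ≤ |q|) : wt m ≤ wt q := by
  unfold wt
  have : ((|m| : ℤ) : ℝ) ≤ ((|q| : ℤ) : ℝ) := by exact_mod_cast h
  push_cast at this
  linarith

/-- If `q` is comparable to `m`, any bounded quantity is `O(wt m⁻² wt q³)`. -/
lemma le_of_wt_le {m q : ℤ} (h : wt m ≤ 2 * wt q) {x D : ℝ} (hD : 0 ≤ D) (hx : x ≤ D) :
    x ≤ 4 * D * (wt m ^ 2)⁻¹ * wt q ^ 3 := by
  have hm := wt_pos m
  have hq := one_le_wt q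
  rw [mul_assoc, mul_comm (_⁻¹), ← mul_assoc, ← div_eq_mul_inv, le_div_iff₀ (by positivity)]
  have h1 : wt m ^ 2 ≤ (2 * wt q) ^ 2 := by gcongr
  have h2 : wt q ^ 2 ≤ wt q ^ 3 := pow_le_pow_right₀ hq (by norm_num)
  calc x * wt m ^ 2 ≤ D * (2 * wt q) ^ 2 := by gcongr
    _ = 4 * D * wt q ^ 2 := by ring
    _ ≤ _ := by gcongr

lemma abs_le_wt_cube (q : ℤ) : |(q:ℝ)| ≤ wt q ^ 3 := by
  have hq := one_le_wt q
  exact (abs_le_wt q).trans (le_self_pow₀ hq (by norm_num))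

lemma gam_diff (m q : ℤ) : ‖gam (m + q) - gam m‖ ≤ 16 * (wt m ^ 2)⁻¹ * wt q ^ 3 := by
  by_cases h : |m| ≤ 2 * |q|
  · have h1 : ‖gam (m + q) - gam m‖ ≤ 4 :=
      (norm_sub_le _ _).trans (by linarith [norm_gam_le (m + q), norm_gam_le m])
    have := le_of_wt_le (wt_le_two_mul (by omega : |m| ≤ 2 * |q| + 1)) (by norm_num) h1
    norm_num at this
    exact this
  · have hm0 : m ≠ 0 := by
      rintro rfl
      simp at h
    have h2 : |m| ≤ 2 * |m + q| := by
      rcases abs_cases m with h1 | h1 <;> rcases abs_cases q with h2 | h2 <;>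
        rcases abs_cases (m + q) with h3 | h3 <;> omega
    have hm1 := Int.one_le_abs hm0
    have hmq0 : m + q ≠ 0 := by
      intro h3
      rw [h3] at h2
      simp at h2
      omega
    have e : gam (m + q) - gam m = ((|(m:ℝ)|⁻¹ - |((m + q : ℤ):ℝ)|⁻¹ : ℝ) : ℂ) := by
      unfold gam
      rw [if_neg hm0, if_neg hmq0]
      push_cast
      ring
    rw [e, Complex.norm_real, Real.norm_eq_abs]
    have a1 : (1:ℝ) ≤ |(m:ℝ)| := by exact_mod_cast hm1
    have a2 : |(m:ℝ)| ≤ 2 * |((m + q : ℤ):ℝ)| := by exact_mod_cast h2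
    have a3 : (0:ℝ) < |((m + q : ℤ):ℝ)| := by linarith
    rw [inv_sub_inv (by linarith) a3.ne', abs_div, abs_mul, abs_abs, abs_abs]
    have a4 : |(|((m + q : ℤ):ℝ)| - |(m:ℝ)|)| ≤ |(q:ℝ)| := by
      refine (abs_abs_sub_abs_le_abs_sub _ _).trans (le_of_eq ?_)
      push_cast
      congr 1
      ring
    have a5 : wt m ≤ 2 * |(m:ℝ)| := by unfold wt; linarith
    have hw := wt_pos m
    have hq := abs_le_wt_cube q
    have hq3 := wt_pos q
    rw [div_le_iff₀ (by positivity)]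
    have a6 : wt m ^ 2 ≤ 8 * (|(m:ℝ)| * |((m + q : ℤ):ℝ)|) := by nlinarith
    calc |(|((m + q : ℤ):ℝ)| - |(m:ℝ)|)| ≤ wt q ^ 3 := a4.trans hq
      _ = (wt m ^ 2)⁻¹ * wt q ^ 3 * (wt m ^ 2) := by field_simp
      _ ≤ (wt m ^ 2)⁻¹ * wt q ^ 3 * (8 * (|(m:ℝ)| * |((m + q : ℤ):ℝ)|)) := by gcongr
      _ ≤ _ := by
        have : 0 ≤ (wt m ^ 2)⁻¹ * wt q ^ 3 * (8 * (|(m:ℝ)| * |((m + q : ℤ):ℝ)|)) := by positivity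
        linarith

lemma norm_del (n : ℤ) : ‖del n‖ = 2 * Real.pi * |(n:ℝ)| := by
  unfold del
  simp [abs_of_pos Real.pi_pos]

lemma norm_deld (N : ℕ) (n : ℤ) : ‖deld N n‖ = 2 * N * |Real.sin (Real.pi * n / N)| := by
  unfold deld
  rw [norm_mul, Complex.norm_real]
  simp

lemma norm_deld_le (N : ℕ) [NeZero N] (n : ℤ) : ‖deld N n‖ ≤ 2 * Real.pi * |(n:ℝ)| := by
  rw [norm_deld]
  have hN := cast_N_pos N
  have h1 : |Real.sin (Real.pi * n / N)| ≤ |Real.pi * n / N| := Real.abs_sin_le_abs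
  rw [abs_div, abs_mul, abs_of_pos Real.pi_pos, abs_of_pos hN] at h1
  calc 2 * N * |Real.sin (Real.pi * n / N)| ≤ 2 * N * (Real.pi * |(n:ℝ)| / N) := by gcongr
    _ = _ := by field_simp

lemma deld_lower (N : ℕ) [NeZero N] (n : ℤ) (h : 2 * |n| ≤ N) : 4 * |(n:ℝ)| ≤ ‖deld N n‖ := by
  rw [norm_deld]
  have hN := cast_N_pos N
  have h' : 2 * |(n:ℝ)| ≤ N := by exact_mod_cast h
  have h1 := Real.mul_abs_le_abs_sin (x := Real.pi * n / N) (by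
    rw [abs_div, abs_mul, abs_of_pos Real.pi_pos, abs_of_pos hN, div_le_iff₀ hN]
    nlinarith [Real.pi_pos])
  rw [abs_div, abs_mul, abs_of_pos Real.pi_pos, abs_of_pos hN] at h1
  calc 4 * |(n:ℝ)| = 2 * N * (2 / Real.pi * (Real.pi * |(n:ℝ)| / N)) := by
        have := Real.pi_pos
        field_simp
        ring
    _ ≤ _ := by gcongr

lemma abs_sin_sub_le (x : ℝ) : |Real.sin x - x| ≤ 2 * x ^ 2 := by
  by_cases hx : |x| ≤ 1
  · have h := Real.sin_bound hx
    have e : Real.sin x - x = (Real.sin x - (x - x ^ 3 / 6)) - x ^ 3 / 6 := by ring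
    have h1 : |x| ^ 5 ≤ x ^ 2 := by
      rw [← sq_abs x]
      exact pow_le_pow_of_le_one (abs_nonneg _) hx (by norm_num)
    have h2 : |x ^ 3 / 6| ≤ x ^ 2 / 6 := by
      rw [abs_div, abs_pow, abs_of_pos (by norm_num : (0:ℝ) < 6), ← sq_abs x]
      gcongr ?_ / 6
      exact pow_le_pow_of_le_one (abs_nonneg _) hx (by norm_num)
    rw [e]
    refine (abs_sub _ _).trans ?_
    nlinarith [sq_nonneg x]
  · push Not at hx
    refine (abs_sub _ _).trans ?_
    have := Real.abs_sin_le_one x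
    rw [← sq_abs x]
    nlinarith

lemma deld_sub_del (N : ℕ) [NeZero N] (n : ℤ) :
    ‖deld N n - del n‖ ≤ 40 * (N:ℝ)⁻¹ * wt n ^ 2 := by
  have hN := cast_N_pos N
  have e : deld N n - del n
      = 2 * I * N * ((Real.sin (Real.pi * n / N) - Real.pi * n / N : ℝ) : ℂ) := by
    unfold deld del
    have : (N:ℂ) ≠ 0 := by exact_mod_cast hN.ne'
    push_cast
    field_simp
  rw [e, norm_mul, Complex.norm_real, Real.norm_eq_abs]
  have h1 := abs_sin_sub_le (Real.pi * n / N)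
  have h2 : ‖(2:ℂ) * I * N‖ = 2 * N := by simp
  rw [h2]
  have h3 : (n:ℝ) ^ 2 ≤ wt n ^ 2 := by
    rw [← sq_abs]
    have := abs_le_wt n
    gcongr
  have h4 : Real.pi ^ 2 ≤ 10 := by nlinarith [Real.pi_lt_d2, Real.pi_pos]
  calc 2 * N * |Real.sin (Real.pi * n / N) - Real.pi * n / N|
      ≤ 2 * N * (2 * (Real.pi * n / N) ^ 2) := by gcongr
    _ = 4 * (N:ℝ)⁻¹ * (Real.pi ^ 2 * (n:ℝ) ^ 2) := by field_simp; ring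
    _ ≤ 4 * (N:ℝ)⁻¹ * (10 * wt n ^ 2) := by gcongr
    _ = _ := by ring

lemma abs_le_of_dvd {N : ℕ} {m q : ℤ} (hm : 2 * |m| ≤ N) (h : (N:ℤ) ∣ m + q) (h0 : m + q ≠ 0) :
    (N:ℤ) ≤ 2 * |q| := by
  have h1 := Int.le_of_dvd (abs_pos.mpr h0) ((dvd_abs _ _).mpr h)
  have := abs_add_le m q
  omega

/-- The constant in all symbol bounds. -/
def Bs (ε : ℝ) : ℝ := 100 * |(ee 1 ε).im|⁻¹ + 100

section
variable (N : ℕ) [NeZero N] (ε : ℝ)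

lemma Bs_ge : 100 ≤ Bs ε := by
  unfold Bs
  have : 0 ≤ |(ee 1 ε).im|⁻¹ := by positivity
  linarith

lemma norm_iotd_le (k : ℤ) : ‖iotd N ε k‖ ≤ 1 := by
  rw [iotd_eq]
  split_ifs
  · rw [norm_ee]
  · simp

lemma iot_bound (m q : ℤ) : ‖iot (m + q)‖ ≤ 4 * (wt m ^ 2)⁻¹ * wt q ^ 3 := by
  have hm := wt_pos m
  have hq := wt_pos q
  unfold iot
  split_ifs with h
  · have : |m| = |q| := by
      rw [show m = -q by omega, abs_neg]
    have := le_of_wt_le (m := m) (q := q) (wt_le_two_mul (by have := abs_nonneg q; omega))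
      zero_le_one (le_refl 1)
    simpa using this
  · rw [norm_zero]
    positivity

/-- The symbols of the continuous operator satisfy the common bounds. -/
lemma symB_cont (m : ℤ) : SymB del gam iot m (Bs ε) := by
  have hB := Bs_ge ε
  refine ⟨fun n => ?_, fun q => ?_, fun q => ?_, fun q => ?_⟩
  · rw [norm_del]
    have h1 := abs_le_wt n
    have := Real.pi_lt_d2
    have h2 := wt_pos n
    have h3 := abs_nonneg (n:ℝ)
    have := Real.pi_pos
    nlinarith
  · refine (gam_diff m q).trans ?_
    have := wt_pos m
    have := wt_pos q
    gcongr
    linarith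
  · exact (norm_gam_le _).trans (by linarith)
  · refine (iot_bound m q).trans ?_
    have := wt_pos m
    have := wt_pos q
    gcongr
    linarith

/-- The discrete symbols satisfy the common bounds at the resolved frequencies, uniformly in `N`. -/
lemma symB_disc (him : (ee 1 ε).im ≠ 0) (m : ℤ) (hm : 2 * |m| ≤ N) :
    SymB (deld N) (gamd N ε) (iotd N ε) m (Bs ε) := by
  have hB := Bs_ge ε
  have hwm := wt_pos m
  have hσ : 0 ≤ |(ee 1 ε).im|⁻¹ := by positivity
  have hN := one_le_N N
  refine ⟨fun n => ?_, fun q => ?_, fun q => ?_, fun q => ?_⟩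
  · refine (norm_deld_le N n).trans ?_
    have h1 := abs_le_wt n
    have := Real.pi_lt_d2
    have h2 := wt_pos n
    have h3 := abs_nonneg (n:ℝ)
    have := Real.pi_pos
    nlinarith
  · have hwq := wt_pos q
    by_cases h : 4 * |q| ≤ N
    · have h1 := rho_lip N ε him m q (by have := abs_nonneg m; omega)
        (by have := abs_add_le m q; have := abs_nonneg m; omega)
      have h2 := gam_diff m q
      have e : gamd N ε (m + q) - gamd N ε m
          = (rho N ε (m + q) - rho N ε m) + (gam (m + q) - gam m) := by unfold rho; ring
      have h3 : wt m ≤ 2 * N := by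
        unfold wt
        have : 2 * |(m:ℝ)| ≤ N := by exact_mod_cast hm
        linarith
      have h4 : ((N:ℝ) ^ 2)⁻¹ ≤ 4 * (wt m ^ 2)⁻¹ := by
        rw [← div_eq_mul_inv, le_div_iff₀ (by positivity), inv_mul_le_iff₀ (by positivity)]
        nlinarith
      rw [e]
      refine (norm_add_le _ _).trans ?_
      have h5 : |(q:ℝ)| * (17 * |(ee 1 ε).im|⁻¹ * ((N : ℝ) ^ 2)⁻¹)
          ≤ wt q ^ 3 * (17 * |(ee 1 ε).im|⁻¹ * (4 * (wt m ^ 2)⁻¹)) := by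
        have := abs_le_wt_cube q
        gcongr
      have h6 : 0 ≤ (wt m ^ 2)⁻¹ * wt q ^ 3 := by positivity
      unfold Bs
      nlinarith [mul_nonneg hσ h6]
    · have h1 : ‖gamd N ε (m + q) - gamd N ε m‖ ≤ 2 * (5 * |(ee 1 ε).im|⁻¹ + 2) :=
        (norm_sub_le _ _).trans (by
          linarith [gamd_bounded N ε him (m + q), gamd_bounded N ε him m])
      refine (le_of_wt_le (wt_le_two_mul (m := m) (q := q) (by omega)) (by positivity) h1).trans ?_
      gcongr
      unfold Bs
      linarith
  · refine (gamd_bounded N ε him _).trans ?_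
    unfold Bs
    linarith
  · have hwq := wt_pos q
    by_cases h : (N:ℤ) ∣ m + q
    · have h1 : |m| ≤ |q| := by
        by_cases h0 : m + q = 0
        · rw [show m = -q by omega, abs_neg]
        · have := abs_le_of_dvd hm h h0
          omega
      refine (le_of_wt_le (m := m) (q := q) (wt_le_two_mul (by have := abs_nonneg q; omega))
        zero_le_one (norm_iotd_le N ε _)).trans ?_
      gcongr
      linarith
    · rw [iotd_eq, if_neg h, norm_zero]
      have : 0 ≤ Bs ε := by linarith
      positivity

lemma gamd_sub (him : (ee 1 ε).im ≠ 0) (m : ℤ) (hm : 2 * |m| ≤ N) (q : ℤ) :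
    ‖gamd N ε (m + q) - gam (m + q)‖ ≤ Bs ε * (N:ℝ)⁻¹ * wt q ^ 3 := by
  have hσ : 0 ≤ |(ee 1 ε).im|⁻¹ := by positivity
  have hN := cast_N_pos N
  have hq3 : 1 ≤ wt q ^ 3 := one_le_pow₀ (one_le_wt q)
  have hB := Bs_ge ε
  by_cases h : 4 * |q| ≤ N
  · have h1 := rho_bound N ε him (m + q)
        (by have := abs_add_le m q; have := abs_nonneg m; omega)
    unfold rho at h1
    refine h1.trans ?_
    have : 5 * |(ee 1 ε).im|⁻¹ * (N:ℝ)⁻¹ ≤ Bs ε * (N:ℝ)⁻¹ := by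
      gcongr
      unfold Bs
      linarith
    refine this.trans ?_
    have : 0 ≤ Bs ε * (N:ℝ)⁻¹ := by positivity
    nlinarith
  · have h1 : ‖gamd N ε (m + q) - gam (m + q)‖ ≤ (5 * |(ee 1 ε).im|⁻¹ + 2) + 2 :=
      (norm_sub_le _ _).trans (add_le_add (gamd_bounded N ε him _) (norm_gam_le _))
    push Not at h
    have h2 : (N:ℝ) ≤ 4 * |(q:ℝ)| := by exact_mod_cast h.le
    have h3 : 1 ≤ 4 * ((N:ℝ)⁻¹ * wt q ^ 3) := by
      have := abs_le_wt_cube q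
      rw [inv_mul_eq_div, ← mul_div_assoc, le_div_iff₀ hN]
      linarith
    refine h1.trans ?_
    have h4 : 0 ≤ (N:ℝ)⁻¹ * wt q ^ 3 := by positivity
    unfold Bs
    nlinarith [mul_nonneg hσ h4]

lemma iotd_sub (m : ℤ) (hm : 2 * |m| ≤ N) (q : ℤ) :
    ‖iotd N ε (m + q) - iot (m + q)‖ ≤ Bs ε * (N:ℝ)⁻¹ * wt q ^ 3 := by
  have hN := cast_N_pos N
  have hq3 := wt_pos q
  have hB := Bs_ge ε
  have hB0 : 0 ≤ Bs ε := by linarith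
  have hnn : 0 ≤ Bs ε * (N:ℝ)⁻¹ * wt q ^ 3 := by positivity
  rw [iotd_eq]
  unfold iot
  by_cases h0 : m + q = 0
  · rw [h0]
    simpa [ee_zero] using hnn
  · rw [if_neg h0]
    split_ifs with h
    · rw [sub_zero, norm_ee]
      have h1 : (N:ℝ) ≤ 2 * |(q:ℝ)| := by exact_mod_cast abs_le_of_dvd hm h h0
      have := abs_le_wt_cube q
      rw [mul_assoc, inv_mul_eq_div, ← mul_div_assoc, le_div_iff₀ hN]
      nlinarith
    · simpa using hnn

end

/-- Principal symbol of `W`, or of its discretization. -/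
def Lam (α : ℂ) (δ γ : ℤ → ℂ) (n : ℤ) : ℂ :=
  -(I / (2 * Real.pi) * α * δ n ^ 2 * γ n)

lemma norm_Lam (α : ℂ) (δ γ : ℤ → ℂ) (n : ℤ) :
    ‖Lam α δ γ n‖ = ‖α‖ / (2 * Real.pi) * ‖δ n‖ ^ 2 * ‖γ n‖ := by
  unfold Lam
  have : ‖I / (2 * (Real.pi : ℂ))‖ = 1 / (2 * Real.pi) := by simp [abs_of_pos Real.pi_pos]
  rw [norm_neg, norm_mul, norm_mul, norm_mul, norm_pow, this]
  ring

/-- Ellipticity of the discrete principal symbol, uniformly in `N`. -/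
lemma Lamd_lower (α : ℂ) (ε : ℝ) (hα : α ≠ 0) (him : (ee 1 ε).im ≠ 0) : ∃ c > 0, ∀ (N : ℕ) [NeZero N]
    (n : ℤ), n ≠ 0 → 2 * |n| ≤ N → c * wt n ≤ ‖Lam α (deld N) (gamd N ε) n‖ := by
  have hσ := abs_pos.mpr him
  have hα' := norm_pos_iff.mpr hα
  have hpi := Real.pi_pos
  refine ⟨‖α‖ / (2 * Real.pi) * |(ee 1 ε).im|, by positivity, fun N _ n hn hnN => ?_⟩
  rw [norm_Lam]
  have h1 := gamd_lower N ε him n hn hnN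
  have h2 := deld_lower N n hnN
  have h3 : (1:ℝ) ≤ |(n:ℝ)| := by exact_mod_cast Int.one_le_abs hn
  have h4 : wt n ≤ 2 * |(n:ℝ)| := by unfold wt; linarith
  have h5 : wt n ≤ (4 * |(n:ℝ)|) ^ 2 * (1 / (6 * |(n:ℝ)|)) := by
    refine h4.trans ?_
    rw [mul_one_div, le_div_iff₀ (by positivity)]
    nlinarith
  calc ‖α‖ / (2 * Real.pi) * |(ee 1 ε).im| * wt n
      ≤ ‖α‖ / (2 * Real.pi) * |(ee 1 ε).im| * ((4 * |(n:ℝ)|) ^ 2 * (1 / (6 * |(n:ℝ)|))) := by gcongr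
    _ = ‖α‖ / (2 * Real.pi) * (4 * |(n:ℝ)|) ^ 2 * (|(ee 1 ε).im| / (6 * |(n:ℝ)|)) := by ring
    _ ≤ _ := by gcongr

lemma Lam_lower (α : ℂ) (hα : α ≠ 0) : ∃ c > 0, ∀ n : ℤ, n ≠ 0 → c * wt n ≤ ‖Lam α del gam n‖ := by
  have hα' := norm_pos_iff.mpr hα
  have hpi := Real.pi_pos
  refine ⟨‖α‖ / (2 * Real.pi), by positivity, fun n hn => ?_⟩
  rw [norm_Lam, norm_del]
  have h3 : (1:ℝ) ≤ |(n:ℝ)| := by exact_mod_cast Int.one_le_abs hn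
  have h4 : wt n ≤ 2 * |(n:ℝ)| := by unfold wt; linarith
  have e : ‖gam n‖ = |(n:ℝ)|⁻¹ := by
    unfold gam
    rw [if_neg hn, norm_neg, Complex.norm_real, Real.norm_eq_abs, abs_inv, abs_abs]
  rw [e]
  have h5 : wt n ≤ (2 * Real.pi * |(n:ℝ)|) ^ 2 * |(n:ℝ)|⁻¹ := by
    refine h4.trans ?_
    rw [← div_eq_mul_inv, le_div_iff₀ (by positivity)]
    have := Real.pi_gt_three
    have h6 : 1 ≤ Real.pi ^ 2 := by nlinarith
    nlinarith [sq_nonneg |(n:ℝ)|]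
  rw [mul_assoc]
  gcongr

lemma norm_Lam_le (α : ℂ) : ∃ C, 0 ≤ C ∧ ∀ n : ℤ, ‖Lam α del gam n‖ ≤ C * wt n := by
  have hpi := Real.pi_pos
  refine ⟨‖α‖ / (2 * Real.pi) * (2 * Real.pi) ^ 2, by positivity, fun n => ?_⟩
  rw [norm_Lam, norm_del]
  have h0 := wt_pos n
  by_cases hn : n = 0
  · subst hn
    simp
    positivity
  have h3 : (1:ℝ) ≤ |(n:ℝ)| := by exact_mod_cast Int.one_le_abs hn
  have e : ‖gam n‖ = |(n:ℝ)|⁻¹ := by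
    unfold gam
    rw [if_neg hn, norm_neg, Complex.norm_real, Real.norm_eq_abs, abs_inv, abs_abs]
  rw [e]
  have h4 := abs_le_wt n
  calc ‖α‖ / (2 * Real.pi) * (2 * Real.pi * |(n:ℝ)|) ^ 2 * |(n:ℝ)|⁻¹
      = ‖α‖ / (2 * Real.pi) * (2 * Real.pi) ^ 2 * |(n:ℝ)| := by field_simp
    _ ≤ _ := by gcongr

/-- Consistency of the discrete principal symbol. -/
lemma Lam_diff (α : ℂ) (ε : ℝ) (him : (ee 1 ε).im ≠ 0) : ∃ C, 0 ≤ C ∧ ∀ (N : ℕ) [NeZero N]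
    (n : ℤ), 2 * |n| ≤ N →
    ‖Lam α (deld N) (gamd N ε) n - Lam α del gam n‖ ≤ C * (N:ℝ)⁻¹ * wt n ^ 2 := by
  have hpi := Real.pi_pos
  have hB := Bs_ge ε
  have hB0 : 0 ≤ Bs ε := by linarith
  refine ⟨‖α‖ / (2 * Real.pi) * ((2 * Real.pi) ^ 2 * Bs ε + 2 * (2 * Real.pi) * 40 * 2),
    by positivity, fun N _ n hn => ?_⟩
  have hN := cast_N_pos N
  have hw := wt_pos n
  have hw1 := one_le_wt n
  have hnw := abs_le_wt n
  set d := deld N n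
  set d0 := del n
  set g := gamd N ε n
  set g0 := gam n
  have e : Lam α (deld N) (gamd N ε) n - Lam α del gam n
      = -(I / (2 * Real.pi) * α * (d ^ 2 * (g - g0) + (d + d0) * ((d - d0) * g0))) := by
    unfold Lam
    ring
  have h1 : ‖d‖ ≤ 2 * Real.pi * |(n:ℝ)| := norm_deld_le N n
  have h2 : ‖d0‖ = 2 * Real.pi * |(n:ℝ)| := norm_del n
  have h3 : ‖g - g0‖ ≤ Bs ε * (N:ℝ)⁻¹ := by
    have := gamd_sub N ε him n hn 0
    simpa [wt] using this
  have h4 := deld_sub_del N n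
  have h5 : |(n:ℝ)| * ‖g0‖ ≤ 1 := by
    by_cases hn : n = 0
    · subst hn; simp
    · have : (1:ℝ) ≤ |(n:ℝ)| := by exact_mod_cast Int.one_le_abs hn
      have e : ‖g0‖ = |(n:ℝ)|⁻¹ := by
        simp only [g0]
        unfold gam
        rw [if_neg hn, norm_neg, Complex.norm_real, Real.norm_eq_abs, abs_inv, abs_abs]
      rw [e, mul_inv_cancel₀ (by linarith)]
  rw [e, norm_neg, norm_mul]
  have e2 : ‖I / (2 * Real.pi) * α‖ = ‖α‖ / (2 * Real.pi) := by
    simp [abs_of_pos Real.pi_pos]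
    ring
  rw [e2]
  rw [mul_assoc (‖α‖ / (2 * Real.pi)), mul_assoc (‖α‖ / (2 * Real.pi))]
  gcongr
  refine (norm_add_le _ _).trans ?_
  have t1 : ‖d ^ 2 * (g - g0)‖ ≤ (2 * Real.pi * wt n) ^ 2 * (Bs ε * (N:ℝ)⁻¹) := by
    rw [norm_mul, norm_pow]
    gcongr
    exact h1.trans (by gcongr)
  have t2 : ‖(d + d0) * ((d - d0) * g0)‖ ≤ 2 * (2 * Real.pi) * (40 * (N:ℝ)⁻¹ * wt n ^ 2) := by
    rw [norm_mul, norm_mul]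
    have h6 : ‖d + d0‖ ≤ 2 * (2 * Real.pi) * |(n:ℝ)| := (norm_add_le _ _).trans (by linarith)
    calc ‖d + d0‖ * (‖d - d0‖ * ‖g0‖)
        ≤ (2 * (2 * Real.pi) * |(n:ℝ)|) * ((40 * (N:ℝ)⁻¹ * wt n ^ 2) * ‖g0‖) := by gcongr
      _ = (2 * (2 * Real.pi) * (40 * (N:ℝ)⁻¹ * wt n ^ 2)) * (|(n:ℝ)| * ‖g0‖) := by ring
      _ ≤ (2 * (2 * Real.pi) * (40 * (N:ℝ)⁻¹ * wt n ^ 2)) * 1 := by gcongr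
      _ = _ := by ring
  have t3 : 0 ≤ (N:ℝ)⁻¹ * wt n ^ 2 := by positivity
  nlinarith

end NysAux

end

noncomputable section

namespace NysAux

open Complex Filter Topology MeasureTheory

/-! ### Fourier expansion of the continuous operator -/

lemma hasSum_triple {A : ℝ → ℝ → ℂ} (hA : SPK A) {x : ℤ → ℂ} (hx : Summable fun m => ‖x m‖)
    {ψ : ℝ → ℂ} (hψ : ∀ t, HasSum (fun m => x m * ee m t) (ψ t)) (s t : ℝ) :
    HasSum (fun i : (ℤ × ℤ) × ℤ => c2 A i.1.1 i.1.2 * x i.2 * (ee i.1.1 s * ee (i.1.2 + i.2) t))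
      (A s t * ψ t) := by
  have hS : Summable fun pq : ℤ × ℤ => ‖c2 A pq.1 pq.2 * (ee pq.1 s * ee pq.2 t)‖ := by
    simpa [norm_ee] using (RD2_c2 hA).summable
  have hS2 : Summable fun m => ‖x m * ee m t‖ := by simpa [norm_ee] using hx
  have hS3 := summable_mul_of_summable_norm
    (f := fun pq : ℤ × ℤ => c2 A pq.1 pq.2 * (ee pq.1 s * ee pq.2 t)) (g := fun m => x m * ee m t)
    hS hS2
  have h : HasSum (fun i : (ℤ × ℤ) × ℤ => c2 A i.1.1 i.1.2 * (ee i.1.1 s * ee i.1.2 t)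
      * (x i.2 * ee i.2 t)) (A s t * ψ t) := HasSum.mul
    (f := fun pq : ℤ × ℤ => c2 A pq.1 pq.2 * (ee pq.1 s * ee pq.2 t)) (g := fun m => x m * ee m t)
    (hasSum_c2 hA s t) (hψ t) hS3
  refine h.congr_fun fun i => ?_
  rw [ee_add]
  ring

lemma summable_triple {a : ℤ → ℤ → ℂ} (ha : RD2 a) {x : ℤ → ℂ} (hx : Summable fun m => ‖x m‖) :
    Summable (fun i : (ℤ × ℤ) × ℤ => ‖a i.1.1 i.1.2 * x i.2‖) := by
  have := summable_mul_of_summable_norm (f := fun i : ℤ × ℤ => ‖a i.1 i.2‖) (g := fun m => ‖x m‖)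
    (by simpa using ha.summable) (by simpa using hx)
  exact this.congr fun i => (norm_mul _ _).symm

/-- The change of indices `(p, q, m) ↦ (p + q + m, m, q)`. -/
def tripleEquiv : (ℤ × ℤ) × ℤ ≃ (ℤ × ℤ) × ℤ where
  toFun i := ((i.1.1 + i.1.2 + i.2, i.2), i.1.2)
  invFun i := ((i.1.1 - i.1.2 - i.2, i.2), i.1.2)
  left_inv i := by ext <;> simp
  right_inv i := by ext <;> simp

/-- Collecting the terms of a triple series by output frequency produces the matrix `Mm a κ`. -/
lemma hasSum_Mm {a : ℤ → ℤ → ℂ} (ha : RD2 a) {κ : ℤ → ℂ} {B : ℝ} (hκ : ∀ k, ‖κ k‖ ≤ B)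
    {x : ℤ → ℂ} (s : ℝ) (S : ℂ)
    (h : HasSum (fun i : (ℤ × ℤ) × ℤ => a i.1.1 i.1.2 * x i.2 *
      (ee i.1.1 s * (ee (i.1.2 + i.2) s * κ (i.1.2 + i.2)))) S) :
    HasSum (fun i : ℤ × ℤ => Mm a κ i.1 i.2 * x i.2 * ee i.1 s) S := by
  have h2 := (tripleEquiv.symm.hasSum_iff).mpr h
  refine h2.prod_fiberwise fun i => ?_
  obtain ⟨n, m⟩ := i
  obtain ⟨C, -, hC⟩ := Mm_bound ha 0 0
  have h3 := ((hC κ m B (by simpa using fun q => hκ (m + q)) n).1.of_norm.hasSum.mul_right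
    (x m * ee n s))
  have e : (∑' q, a (n - m - q) q * κ (m + q)) * (x m * ee n s) = Mm a κ n m * x m * ee n s := by
    unfold Mm
    ring
  rw [e] at h3
  refine h3.congr_fun fun q => ?_
  simp only [tripleEquiv, Equiv.coe_fn_symm_mk, Function.comp]
  rw [show ee n s = ee (n - m - q) s * ee (q + m) s by rw [← ee_add]; congr 1; ring, add_comm m q]
  ring

lemma integral_shift (k : ℝ → ℂ) (hk : Function.Periodic k 1) (r : ℤ) (s : ℝ) :
    ∫ t in (0:ℝ)..1, k (s - t) * ee r t = ee r s * fc k r := by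
  have h1 : ∀ t, k (s - t) * ee r t = (fun u => ee r s * (k u * ee (-r) u)) (s - t) := by
    intro t
    simp only
    rw [show ee r t = ee r s * ee (-r) (s - t) by
      rw [← ee_neg_right, ← ee_add_right]; congr 1; ring]
    ring
  rw [intervalIntegral.integral_congr (g := fun t => (fun u => ee r s * (k u * ee (-r) u)) (s - t))
    fun t _ => h1 t, intervalIntegral.integral_comp_sub_left (fun u => ee r s * (k u * ee (-r) u)),
    intervalIntegral.integral_const_mul, fc_eq]
  congr 1
  have hp : Function.Periodic (fun u => k u * ee (-r) u) 1 := fun u => by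
    simp only
    rw [hk u, ee_periodic (-r) u]
  have := hp.intervalIntegral_add_eq (s - 1) 0
  simpa using this

/-- The integral operator with kernel `A(s,t) k(s-t)` has Fourier matrix `Mm (c2 A) κ`, where `κ` is
the sequence of Fourier coefficients of `k`. -/
lemma hasSum_conv {A : ℝ → ℝ → ℂ} (hA : SPK A) {k : ℝ → ℂ} (hk : Function.Periodic k 1)
    (hki : ∀ a b, IntervalIntegrable k volume a b) {κ : ℤ → ℂ} (hκ : ∀ r, fc k r = κ r)
    {B : ℝ} (hB : ∀ r, ‖κ r‖ ≤ B) {x : ℤ → ℂ} (hx : Summable fun m => ‖x m‖)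
    {ψ : ℝ → ℂ} (hψ : ∀ t, HasSum (fun m => x m * ee m t) (ψ t)) (s : ℝ) :
    HasSum (fun i : ℤ × ℤ => Mm (c2 A) κ i.1 i.2 * x i.2 * ee i.1 s)
      (∫ t in (0:ℝ)..1, A s t * k (s - t) * ψ t) := by
  refine hasSum_Mm (RD2_c2 hA) hB s _ ?_
  have hinteg : IntervalIntegrable (fun t => k (s - t)) volume 0 1 := by
    simpa using (hki s (s - 1)).comp_sub_left s
  have h0 : ∀ i : (ℤ × ℤ) × ℤ, c2 A i.1.1 i.1.2 * x i.2 *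
      (ee i.1.1 s * (ee (i.1.2 + i.2) s * κ (i.1.2 + i.2)))
      = ∫ t in (0:ℝ)..1, k (s - t) *
        (c2 A i.1.1 i.1.2 * x i.2 * (ee i.1.1 s * ee (i.1.2 + i.2) t)) := by
    intro i
    rw [← hκ, ← integral_shift k hk, ← intervalIntegral.integral_const_mul,
      ← intervalIntegral.integral_const_mul]
    congr 1
    ext t
    ring
  simp_rw [h0]
  have hT := summable_triple (RD2_c2 hA) hx
  refine intervalIntegral.hasSum_integral_of_dominated_convergence
    (fun i t => ‖c2 A i.1.1 i.1.2 * x i.2‖ * ‖k (s - t)‖) (fun i => ?_) (fun i => ?_) ?_ ?_ ?_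
  · refine AEStronglyMeasurable.mul ?_ ?_
    · exact hinteg.aestronglyMeasurable_restrict_uIoc
    · refine Continuous.aestronglyMeasurable ?_
      have := continuous_ee (i.1.2 + i.2)
      fun_prop
  · refine Eventually.of_forall fun t _ => ?_
    rw [norm_mul, norm_mul (_ * _), norm_mul (ee _ _), norm_ee, norm_ee, mul_comm]
    simp
  · exact Eventually.of_forall fun t _ => hT.mul_right _
  · simp_rw [tsum_mul_right]
    exact hinteg.norm.const_mul _
  · refine Eventually.of_forall fun t _ => ?_
    have := (hasSum_triple hA hx hψ s t).mul_left (k (s - t))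
    rwa [show A s t * k (s - t) * ψ t = k (s - t) * (A s t * ψ t) by ring]

/-- Fourier matrix of the operator with kernel `logKer A K`; the symbols are parameters. -/
def Vm (A K : ℝ → ℝ → ℂ) (γ ι : ℤ → ℂ) (n m : ℤ) : ℂ :=
  Mm (c2 fun s t => I / (2 * Real.pi) * A s t) γ n m + Mm (c2 K) ι n m

lemma _root_.SPK.const_mul {A : ℝ → ℝ → ℂ} (hA : SPK A) (c : ℂ) : SPK fun s t => c * A s t := by
  obtain ⟨h1, h2, h3⟩ := hA
  exact ⟨contDiff_const.mul h1, fun s t => by simp only [h2], fun s t => by simp only [h3]⟩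

lemma fc_one (r : ℤ) : fc (fun _ => 1) r = iot r := by
  rw [fc_eq]
  simp only [one_mul]
  rw [integral_ee]
  unfold iot
  simp

lemma norm_iot_le (r : ℤ) : ‖iot r‖ ≤ 1 := by
  unfold iot
  split_ifs <;> simp

lemma logKer_eq (A K : ℝ → ℝ → ℂ) (s t : ℝ) :
    logKer A K s t = I / (2 * Real.pi) * A s t * (lg (s - t) : ℂ) + K s t * 1 := by
  unfold logKer lg
  rw [mul_one]

lemma hasSum_Vop {A K : ℝ → ℝ → ℂ} (hA : SPK A) (hK : SPK K) {x : ℤ → ℂ}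
    (hx : Summable fun m => ‖x m‖) {ψ : ℝ → ℂ} (hψc : Continuous ψ)
    (hψ : ∀ t, HasSum (fun m => x m * ee m t) (ψ t)) (s : ℝ) :
    HasSum (fun i : ℤ × ℤ => Vm A K gam iot i.1 i.2 * x i.2 * ee i.1 s)
      (Vop (logKer A K) ψ s) := by
  have h1 := hasSum_conv (hA.const_mul (I / (2 * Real.pi))) (k := fun x => (lg x : ℂ))
    (fun x => by simp only [lg_periodic x]) intervalIntegrable_lgC fc_lg norm_gam_le hx hψ s
  have h2 := hasSum_conv hK (k := fun _ => 1) (fun x => rfl)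
    (fun a b => intervalIntegrable_const) fc_one norm_iot_le hx hψ s
  have e : Vop (logKer A K) ψ s
      = (∫ t in (0:ℝ)..1, I / (2 * Real.pi) * A s t * (lg (s - t) : ℂ) * ψ t)
        + ∫ t in (0:ℝ)..1, K s t * 1 * ψ t := by
    rw [← intervalIntegral.integral_add]
    · unfold Vop
      congr 1
      ext t
      rw [logKer_eq]
      ring
    · have hinteg : IntervalIntegrable (fun t => (lg (s - t) : ℂ)) volume 0 1 := by
        simpa using (intervalIntegrable_lgC s (s - 1)).comp_sub_left s
      have hc : Continuous fun t => I / (2 * Real.pi) * A s t * ψ t := by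
        have := (hA.smooth2 s).continuous
        fun_prop
      have := hinteg.mul_continuousOn hc.continuousOn
      refine this.congr ?_
      exact fun t _ => by ring
    · refine Continuous.intervalIntegrable ?_ _ _
      have := (hK.smooth2 s).continuous
      fun_prop
  rw [e]
  refine (h1.add h2).congr_fun fun i => ?_
  unfold Vm
  ring

lemma Vm_bound {A K : ℝ → ℝ → ℂ} (hA : SPK A) (hK : SPK K) (k : ℕ) (B : ℝ) : ∃ C : ℝ, 0 ≤ C ∧
    ∀ γ ι : ℤ → ℂ, (∀ r, ‖γ r‖ ≤ B) → (∀ r, ‖ι r‖ ≤ B) → ∀ n m,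
      ‖Vm A K γ ι n m‖ ≤ C * (wt (n - m) ^ k)⁻¹ := by
  obtain ⟨C1, h1, h1'⟩ := Mm_bound (RD2_c2 (hA.const_mul (I / (2 * Real.pi)))) k 0
  obtain ⟨C2, h2, h2'⟩ := Mm_bound (RD2_c2 hK) k 0
  refine ⟨C1 * |B| + C2 * |B|, by positivity, fun γ ι hγ hι n m => ?_⟩
  have e1 := (h1' γ m |B| (by simpa using fun q => (hγ (m + q)).trans (le_abs_self B)) n).2.2
  have e2 := (h2' ι m |B| (by simpa using fun q => (hι (m + q)).trans (le_abs_self B)) n).2.2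
  unfold Vm
  refine (norm_add_le _ _).trans ?_
  rw [add_mul]
  exact add_le_add e1 e2

/-- Summability of double series with off-diagonal decay. -/
lemma summable_offdiag {x : ℤ → ℂ} {j : ℕ} (hx : Summable fun m => ‖x m‖ * wt m ^ j)
    {F : ℤ × ℤ → ℂ} {C : ℝ} (hC : 0 ≤ C)
    (hF : ∀ n m, ‖F (n, m)‖ ≤ C * (wt (n - m) ^ 2)⁻¹ * (‖x m‖ * wt m ^ j)) :
    Summable fun i => ‖F i‖ := by
  have h1 := Summable.mul_of_nonneg (f := fun r : ℤ => C * (wt r ^ 2)⁻¹)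
    (g := fun m : ℤ => ‖x m‖ * wt m ^ j) (summable_wt.mul_left C) hx ?_ ?_
  · have h2 := (Equiv.summable_iff (f := fun i : ℤ × ℤ =>
      C * (wt i.1 ^ 2)⁻¹ * (‖x i.2‖ * wt i.2 ^ j))
      { toFun := fun i => (i.1 - i.2, i.2), invFun := fun i => (i.1 + i.2, i.2),
        left_inv := fun i => by simp, right_inv := fun i => by simp : (ℤ × ℤ) ≃ (ℤ × ℤ) }).mpr h1
    exact Summable.of_nonneg_of_le (fun i => norm_nonneg _) (fun i => hF i.1 i.2) h2
  · intro r
    have := wt_pos r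
    simp only [Pi.zero_apply]
    positivity
  · intro m
    have := wt_pos m
    simp only [Pi.zero_apply]
    positivity

end NysAux

end

noncomputable section

namespace NysAux

open Complex Filter Topology MeasureTheory

/-! ### Splitting of the Fourier matrix of the hypersingular operator -/

/-- Fourier matrix of `W`, or of its discretization when the symbols are the discrete ones. -/
def Wm (A1 K1 A2 K2 : ℝ → ℝ → ℂ) (δ γ ι : ℤ → ℂ) (n m : ℤ) : ℂ :=
  -(δ n * δ m) * Vm A1 K1 γ ι n m + Vm A2 K2 γ ι n m

/-- Double Fourier coefficients of `(i/(2π))(A₁ − α)`. -/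
def bet (A1 : ℝ → ℝ → ℂ) (α : ℂ) (p q : ℤ) : ℂ :=
  c2 (fun s t => I / (2 * Real.pi) * A1 s t) p q
    - if p = 0 ∧ q = 0 then I / (2 * Real.pi) * α else 0

lemma RD2_bet {A1 : ℝ → ℝ → ℂ} (hA : SPK A1) (α : ℂ) : RD2 (bet A1 α) := by
  intro k
  obtain ⟨C, hC⟩ := RD2_c2 (hA.const_mul (I / (2 * Real.pi))) k
  refine ⟨C + ‖I / (2 * Real.pi) * α‖, fun p q => ?_⟩
  have h1 := hC p q
  have hp := wt_pos p
  have hq := wt_pos q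
  have h2 : ‖(if p = 0 ∧ q = 0 then I / (2 * Real.pi) * α else 0 : ℂ)‖ * (wt p ^ k * wt q ^ k)
      ≤ ‖I / (2 * Real.pi) * α‖ := by
    split_ifs with h
    · obtain ⟨rfl, rfl⟩ := h
      simp [wt]
    · simp only [norm_zero, zero_mul]
      positivity
  refine le_trans ?_ (add_le_add h1 h2)
  rw [← add_mul]
  unfold bet
  gcongr
  exact norm_sub_le _ _

lemma fc_const (c : ℂ) (r : ℤ) : fc (fun _ => c) r = c * iot r := by
  rw [← fc_one, fc_eq, fc_eq, ← intervalIntegral.integral_const_mul]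
  simp

/-- Since `A₁ = α` on the diagonal, the anti-diagonal sums of `bet` vanish. -/
lemma bet_diag {A1 : ℝ → ℝ → ℂ} (hA : SPK A1) {α : ℂ} (hα : ∀ s, A1 s s = α) (r : ℤ) :
    ∑' q, bet A1 α (r - q) q = 0 := by
  have hB := hA.const_mul (I / (2 * Real.pi))
  set a := c2 fun s t => I / (2 * Real.pi) * A1 s t with ha
  have hS := (RD2_c2 hB).summable
  have h1 := fc_of_hasSum (fun pq : ℤ × ℤ => a pq.1 pq.2) (fun pq => pq.1 + pq.2) hS
    (fun _ => I / (2 * Real.pi) * α) (fun t => by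
      have := hasSum_c2 hB t t
      rw [hα] at this
      exact this.congr_fun fun i => by rw [ee_add]) r
  rw [fc_const] at h1
  have h2 := ((Equiv.prodComm ℤ ℤ).hasSum_iff.mpr h1).prod_fiberwise (g := fun q => a (r - q) q)
    fun q => by
      refine (hasSum_ite_eq (r - q) (a (r - q) q)).congr_fun fun p => ?_
      change (if p + q = r then a p q else 0) = if p = r - q then a (r - q) q else 0
      by_cases h : p = r - q
      · rw [if_pos h, if_pos (by omega), h]
      · rw [if_neg h, if_neg (by omega)]
  have h3 : HasSum (fun q => if r - q = 0 ∧ q = 0 then I / (2 * Real.pi) * α else 0)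
      (I / (2 * Real.pi) * α * iot r) := by
    refine (hasSum_ite_eq (0:ℤ) (I / (2 * Real.pi) * α * iot r)).congr_fun fun q => ?_
    unfold iot
    by_cases hq : q = 0
    · subst hq
      by_cases hr : r = 0 <;> simp [hr]
    · simp [hq]
  have := (h2.sub h3).tsum_eq
  rw [sub_self] at this
  exact this

/-- Splitting of the Fourier matrix into its principal diagonal part and the order-zero remainder. -/
lemma Wm_split {A1 K1 A2 K2 : ℝ → ℝ → ℂ} (hA1 : SPK A1) (α : ℂ)
    (δ γ ι : ℤ → ℂ) {B : ℝ} (hγ : ∀ r, ‖γ r‖ ≤ B) (n m : ℤ) :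
    Wm A1 K1 A2 K2 δ γ ι n m = (if n = m then Lam α δ γ n else 0)
      + Rm (bet A1 α) (c2 K1) (c2 fun s t => I / (2 * Real.pi) * A2 s t) (c2 K2) δ γ ι n m := by
  have h1 : Mm (bet A1 α) γ n m = Mm (c2 fun s t => I / (2 * Real.pi) * A1 s t) γ n m
      - if n = m then I / (2 * Real.pi) * α * γ n else 0 := by
    obtain ⟨C, -, hC⟩ := Mm_bound (RD2_c2 (hA1.const_mul (I / (2 * Real.pi)))) 0 0
    have h2 := (hC γ m B (by simpa using fun q => hγ (m + q)) n).1.of_norm.hasSum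
    have h3 : HasSum (fun q => (if n - m - q = 0 ∧ q = 0 then I / (2 * Real.pi) * α else 0)
        * γ (m + q)) (if n = m then I / (2 * Real.pi) * α * γ n else 0) := by
      refine (hasSum_ite_eq (0:ℤ) (if n = m then I / (2 * Real.pi) * α * γ n else 0)).congr_fun
        fun q => ?_
      by_cases hq : q = 0
      · subst hq
        by_cases hr : n = m
        · simp [hr]
        · simp [hr, sub_eq_zero]
      · simp [hq]
    have h4 := (h2.sub h3).tsum_eq
    unfold Mm
    rw [← h4]
    congr 1
    ext q
    unfold bet
    ring
  unfold Wm Rm Vm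
  rw [h1]
  by_cases h : n = m
  · subst h
    simp only [if_true]
    unfold Lam
    ring
  · simp only [if_neg h]
    ring

lemma norm_del_le (n : ℤ) : ‖del n‖ ≤ 7 * wt n := by
  rw [norm_del]
  have := abs_le_wt n
  have := Real.pi_lt_d2
  have := Real.pi_pos
  have := abs_nonneg (n:ℝ)
  nlinarith

/-- Fourier expansion of `Wφ`. -/
lemma hasSum_Wop {A1 K1 A2 K2 : ℝ → ℝ → ℂ} (hA1 : SPK A1) (hK1 : SPK K1) (hA2 : SPK A2)
    (hK2 : SPK K2) {φ : ℝ → ℂ} (hφ : ContDiff ℝ (⊤ : ℕ∞) φ) (hp : Function.Periodic φ 1) (s : ℝ) :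
    HasSum (fun i : ℤ × ℤ => Wm A1 K1 A2 K2 del gam iot i.1 i.2 * fc φ i.2 * ee i.1 s)
      (Wop (logKer A1 K1) (logKer A2 K2) φ s) := by
  have hφ' := contDiff_deriv hφ
  have hp' := periodic_deriv hp
  have h1 := hasSum_Vop hA1 hK1 (RD1_fc hφ' hp').summable_norm hφ'.continuous
    (hasSum_fc_smooth hφ' hp')
  have h2 := hasSum_Vop hA2 hK2 (RD1_fc hφ hp).summable_norm hφ.continuous (hasSum_fc_smooth hφ hp) s
  have hd : ∀ m, fc (deriv φ) m = del m * fc φ m := fun m => by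
    rw [fc_deriv φ (hφ.of_le (by exact_mod_cast le_top)) hp]
    rfl
  obtain ⟨C, hC, hV⟩ := Vm_bound hA1 hK1 3 2
  have hV' := hV gam iot norm_gam_le fun r => (norm_iot_le r).trans (by norm_num)
  have hsum : Summable fun i : ℤ × ℤ =>
      ‖Vm A1 K1 gam iot i.1 i.2 * fc (deriv φ) i.2 * del i.1‖ := by
    refine summable_offdiag (x := fc (deriv φ)) (j := 1) (C := C * 7)
      ((RD1_fc hφ' hp').summable 1) (by positivity) fun n m => ?_
    rw [norm_mul, norm_mul]
    have hnm := wt_pos (n - m)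
    have hm := wt_pos m
    calc ‖Vm A1 K1 gam iot n m‖ * ‖fc (deriv φ) m‖ * ‖del n‖
        ≤ (C * (wt (n - m) ^ 3)⁻¹) * ‖fc (deriv φ) m‖ * (7 * (wt m * wt (n - m))) := by
          gcongr
          · exact hV' n m
          · exact (norm_del_le n).trans (by have := wt_le_mul n m; gcongr)
      _ = _ := by field_simp
  have hder : HasDerivAt (Vop (logKer A1 K1) (deriv φ))
      (∑' i : ℤ × ℤ, Vm A1 K1 gam iot i.1 i.2 * fc (deriv φ) i.2 * del i.1 * ee i.1 s) s := by
    have e : Vop (logKer A1 K1) (deriv φ) = fun s => ∑' i : ℤ × ℤ,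
        Vm A1 K1 gam iot i.1 i.2 * fc (deriv φ) i.2 * ee i.1 s := funext fun s => (h1 s).tsum_eq.symm
    rw [e]
    refine hasDerivAt_tsum (g := fun (i : ℤ × ℤ) s =>
      Vm A1 K1 gam iot i.1 i.2 * fc (deriv φ) i.2 * ee i.1 s)
      (g' := fun (i : ℤ × ℤ) s => Vm A1 K1 gam iot i.1 i.2 * fc (deriv φ) i.2 * del i.1 * ee i.1 s)
      hsum (fun i y => ?_) (fun i y => ?_) (h1 0).summable s
    · have := (hasDerivAt_ee i.1 y).const_mul (Vm A1 K1 gam iot i.1 i.2 * fc (deriv φ) i.2)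
      rw [show Vm A1 K1 gam iot i.1 i.2 * fc (deriv φ) i.2 * del i.1 * ee i.1 y
        = Vm A1 K1 gam iot i.1 i.2 * fc (deriv φ) i.2 * (2 * Real.pi * I * i.1 * ee i.1 y) by
        unfold del; ring]
      exact this
    · rw [norm_mul _ (ee _ _), norm_ee, mul_one]
  have h3 : HasSum (fun i : ℤ × ℤ =>
      Vm A1 K1 gam iot i.1 i.2 * fc (deriv φ) i.2 * del i.1 * ee i.1 s)
      (deriv (Vop (logKer A1 K1) (deriv φ)) s) := by
    rw [hder.deriv]
    refine Summable.hasSum (Summable.of_norm ?_)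
    refine hsum.congr fun i => ?_
    rw [norm_mul _ (ee _ _), norm_ee, mul_one]
  unfold Wop
  refine (h3.neg.add h2).congr_fun fun i => ?_
  rw [hd]
  unfold Wm
  ring

/-! ### Fourier expansion of discretized integral operators -/

section
variable (N : ℕ) [NeZero N] (ε : ℝ)

lemma avg_shift (k : ℝ → ℂ) (hk : Function.Periodic k 1) (r i : ℤ) (θ : ℝ) :
    avg N (fun j => k (xg N ε (i - j)) * ee r ((j:ℝ) / N + θ))
      = ee r (xg N ε i + θ) * avg N (fun j => k (xg N ε j) * ee (-r) (xg N ε j)) := by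
  have hN : (N:ℝ) ≠ 0 := (cast_N_pos N).ne'
  have hxg : ∀ j, xg N ε (j + N) = xg N ε j + 1 := by
    intro j
    unfold xg
    push_cast
    field_simp
    ring
  have h1 := avg_reflect N (fun j => k (xg N ε j) * ee (-r) (xg N ε j)) (fun j => by
    rw [hxg, hk, ee_periodic]) i
  rw [← h1, ← avg_const_mul]
  refine avg_congr N fun j => ?_
  rw [show ee r ((j:ℝ) / N + θ) = ee r (xg N ε i + θ) * ee (-r) (xg N ε (i - j)) by
    rw [← ee_neg_right, ← ee_add_right]
    congr 1
    unfold xg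
    push_cast
    field_simp
    ring]
  ring

/-- Discrete counterpart of `hasSum_conv`: the rectangle rule with kernel `A(s,t) k(s-t)` has Fourier
matrix `Mm (c2 A) κ`, where `κ` is the sequence of discrete Fourier coefficients of `k`. -/
lemma hasSum_avg {A : ℝ → ℝ → ℂ} (hA : SPK A) {k : ℝ → ℂ} (hk : Function.Periodic k 1)
    {κ : ℤ → ℂ} (hκ : ∀ r, avg N (fun j => k (xg N ε j) * ee (-r) (xg N ε j)) = κ r)
    {B : ℝ} (hB : ∀ r, ‖κ r‖ ≤ B) {x : ℤ → ℂ} (hx : Summable fun m => ‖x m‖)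
    {ψ : ℝ → ℂ} (hψ : ∀ t, HasSum (fun m => x m * ee m t) (ψ t)) (i : ℤ) (θ : ℝ) :
    HasSum (fun n : ℤ × ℤ => Mm (c2 A) κ n.1 n.2 * x n.2 * ee n.1 (xg N ε i + θ))
      (avg N fun j => A (xg N ε i + θ) ((j:ℝ) / N + θ) * k (xg N ε (i - j)) * ψ ((j:ℝ) / N + θ)) := by
  refine hasSum_Mm (RD2_c2 hA) hB _ _ ?_
  have h1 := avg_hasSum N (fun (l : (ℤ × ℤ) × ℤ) (j : ℤ) => k (xg N ε (i - j)) *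
    (c2 A l.1.1 l.1.2 * x l.2 * (ee l.1.1 (xg N ε i + θ) * ee (l.1.2 + l.2) ((j:ℝ) / N + θ))))
    (fun j => k (xg N ε (i - j)) * (A (xg N ε i + θ) ((j:ℝ) / N + θ) * ψ ((j:ℝ) / N + θ)))
    fun j => (hasSum_triple hA hx hψ _ _).mul_left _
  have e : (avg N fun j => A (xg N ε i + θ) ((j:ℝ) / N + θ) * k (xg N ε (i - j))
      * ψ ((j:ℝ) / N + θ)) = avg N (fun j => k (xg N ε (i - j)) *
        (A (xg N ε i + θ) ((j:ℝ) / N + θ) * ψ ((j:ℝ) / N + θ))) :=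
    avg_congr N fun j => by ring
  rw [e]
  refine h1.congr_fun fun l => ?_
  rw [← hκ, ← avg_shift N ε k hk, ← avg_const_mul, ← avg_const_mul]
  exact avg_congr N fun j => by ring

variable (him : (ee 1 ε).im ≠ 0)
include him

lemma hasSum_avg_logKer {A K : ℝ → ℝ → ℂ} (hA : SPK A) (hK : SPK K) {x : ℤ → ℂ}
    (hx : Summable fun m => ‖x m‖) {ψ : ℝ → ℂ}
    (hψ : ∀ t, HasSum (fun m => x m * ee m t) (ψ t)) (i : ℤ) (θ : ℝ) :
    HasSum (fun n : ℤ × ℤ => Vm A K (gamd N ε) (iotd N ε) n.1 n.2 * x n.2 * ee n.1 (xg N ε i + θ))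
      (avg N fun j => logKer A K (xg N ε i + θ) ((j:ℝ) / N + θ) * ψ ((j:ℝ) / N + θ)) := by
  have h1 := hasSum_avg N ε (hA.const_mul (I / (2 * Real.pi))) (k := fun x => (lg x : ℂ))
    (fun x => by simp only [lg_periodic x]) (κ := gamd N ε) (fun r => rfl) (gamd_bounded N ε him)
    hx hψ i θ
  have h2 := hasSum_avg N ε hK (k := fun _ => 1) (fun x => rfl) (κ := iotd N ε)
    (fun r => avg_congr N fun j => one_mul _) (norm_iotd_le N ε) hx hψ i θ
  have e : (avg N fun j => logKer A K (xg N ε i + θ) ((j:ℝ) / N + θ) * ψ ((j:ℝ) / N + θ))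
      = (avg N fun j => I / (2 * Real.pi) * A (xg N ε i + θ) ((j:ℝ) / N + θ)
          * (lg (xg N ε (i - j)) : ℂ) * ψ ((j:ℝ) / N + θ))
        + avg N fun j => K (xg N ε i + θ) ((j:ℝ) / N + θ) * 1 * ψ ((j:ℝ) / N + θ) := by
    rw [← avg_add]
    refine avg_congr N fun j => ?_
    rw [logKer_eq, show xg N ε i + θ - ((j:ℝ) / N + θ) = xg N ε (i - j) by
      unfold xg; push_cast; ring]
    ring
  rw [e]
  refine (h1.add h2).congr_fun fun n => ?_
  unfold Vm
  ring

end

end NysAux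

end

noncomputable section

namespace NysAux

open Complex Filter Topology MeasureTheory

/-! ### Fourier expansion of the Nyström matrix -/

section
variable (N : ℕ) [NeZero N] (ε : ℝ)

lemma ee_diff (m : ℤ) (t : ℝ) :
    N * (ee m (t + 1 / (2 * N)) - ee m (t - 1 / (2 * N))) = deld N m * ee m t := by
  have hN : (N:ℂ) ≠ 0 := by exact_mod_cast NeZero.ne N
  have h1 : ee m (1 / (2 * N)) - ee (-m) (1 / (2 * N)) = 2 * I * (Real.sin (Real.pi * m / N) : ℂ) := by
    have hr : (ee m (1 / (2 * N))) = exp ((Real.pi * m / N : ℂ) * I) := by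
      unfold ee
      congr 1
      push_cast
      field_simp
    have hl : (ee (-m) (1 / (2 * N))) = exp (-(Real.pi * m / N : ℂ) * I) := by
      unfold ee
      congr 1
      push_cast
      field_simp
    rw [hr, hl, Complex.ofReal_sin, Complex.sin]
    push_cast
    linear_combination (exp (-(Real.pi * m / N : ℂ) * I) - exp ((Real.pi * m / N : ℂ) * I)) * (-I_sq)
  rw [sub_eq_add_neg t, ee_add_right, ee_add_right, ee_neg_right]
  unfold deld
  linear_combination N * ee m t * h1

lemma logKer_add_one {A K : ℝ → ℝ → ℂ} (hA : SPK A) (hK : SPK K) (s t : ℝ) :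
    logKer A K s (t + 1) = logKer A K s t := by
  rw [logKer_eq, logKer_eq, hA.2.2, hK.2.2]
  have : lg (s - (t + 1)) = lg (s - t) := by
    rw [← lg_periodic (s - (t + 1))]
    congr 1
    ring
  rw [this]

lemma sum_range_shift (f : ℤ → ℂ) (hf : f N = f 0) :
    ∑ j ∈ Finset.range N, f ((j:ℤ) + 1) = ∑ j ∈ Finset.range N, f j := by
  have h1 := Finset.sum_range_succ (fun j : ℕ => f j) N
  have h2 := Finset.sum_range_succ' (fun j : ℕ => f j) N
  push_cast at h1 h2
  rw [h1, hf] at h2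
  exact (add_right_cancel h2).symm

lemma sg_eq (i : ℤ) : sg (1 / (N:ℝ)) ε i = xg N ε i + -(1 / (2 * N)) := by
  have hN : (N:ℝ) ≠ 0 := (cast_N_pos N).ne'
  unfold sg xg
  field_simp
  ring

lemma sg_eq0 (j : ℤ) : sg (1 / (N:ℝ)) 0 j = (j:ℝ) / N + -(1 / (2 * N)) := by
  have hN : (N:ℝ) ≠ 0 := (cast_N_pos N).ne'
  unfold sg
  field_simp
  ring

lemma tg_eq (i : ℤ) : tg (1 / (N:ℝ)) ε i = xg N ε i := by
  unfold tg xg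
  ring

/-- Summation by parts moves the difference of the kernel in its second variable to `ψ`. -/
lemma sum_by_parts {A K : ℝ → ℝ → ℂ} (hA : SPK A) (hK : SPK K) {ψ : ℝ → ℂ}
    (hp : Function.Periodic ψ 1) (s : ℝ) :
    (∑ j ∈ Finset.range N, (logKer A K s (sg (1 / (N:ℝ)) 0 ((j:ℤ) + 1))
      - logKer A K s (sg (1 / (N:ℝ)) 0 (j:ℤ))) * ψ ((j:ℝ) / N))
      = -avg N fun j => logKer A K s ((j:ℝ) / N + -(1 / (2 * N)))
        * (N * (ψ ((j:ℝ) / N + -(1 / (2 * N)) + 1 / (2 * N))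
          - ψ ((j:ℝ) / N + -(1 / (2 * N)) - 1 / (2 * N)))) := by
  have hN : (N:ℝ) ≠ 0 := (cast_N_pos N).ne'
  have hNc : (N:ℂ) ≠ 0 := by exact_mod_cast NeZero.ne N
  have h1 := sum_range_shift N (fun j => logKer A K s (sg (1 / (N:ℝ)) 0 j) * ψ (((j:ℝ) - 1) / N)) (by
    rw [show sg (1 / (N:ℝ)) 0 N = sg (1 / (N:ℝ)) 0 0 + 1 by
      unfold sg; push_cast; field_simp; ring, logKer_add_one hA hK,
      show (((N:ℤ):ℝ) - 1) / N = (((0:ℤ):ℝ) - 1) / N + 1 by push_cast; field_simp; ring, hp])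
  simp_rw [sub_mul]
  rw [Finset.sum_sub_distrib]
  have h2 : ∑ j ∈ Finset.range N, logKer A K s (sg (1 / (N:ℝ)) 0 ((j:ℤ) + 1)) * ψ ((j:ℝ) / N)
      = ∑ j ∈ Finset.range N, logKer A K s (sg (1 / (N:ℝ)) 0 (j:ℤ)) * ψ (((j:ℝ) - 1) / N) := by
    simp only [Int.cast_natCast] at h1
    rw [← h1]
    refine Finset.sum_congr rfl fun j _ => ?_
    push_cast
    rw [add_sub_cancel_right]
  rw [h2, ← Finset.sum_sub_distrib]
  unfold avg
  rw [Finset.mul_sum, ← Finset.sum_neg_distrib]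
  refine Finset.sum_congr rfl fun j _ => ?_
  rw [sg_eq0]
  have e1 : ((j:ℤ):ℝ) / N + -(1 / (2 * N)) + 1 / (2 * N) = (j:ℝ) / N := by push_cast; ring
  have e2 : ((j:ℤ):ℝ) / N + -(1 / (2 * N)) - 1 / (2 * N) = ((j:ℝ) - 1) / N := by
    push_cast
    field_simp
    ring
  beta_reduce
  rw [e1, e2]
  field_simp
  ring

variable (him : (ee 1 ε).im ≠ 0)
include him

/-- Fourier expansion of the Nyström matrix applied to grid values of a trigonometric series. -/
lemma hasSum_Wmat {A1 K1 A2 K2 : ℝ → ℝ → ℂ} (hA1 : SPK A1) (hK1 : SPK K1) (hA2 : SPK A2)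
    (hK2 : SPK K2) {x : ℤ → ℂ}
    (hx : Summable fun m => ‖x m‖) {ψ : ℝ → ℂ}
    (hψ : ∀ t, HasSum (fun m => x m * ee m t) (ψ t)) (i : ℤ) :
    HasSum (fun n : ℤ × ℤ => Wm A1 K1 A2 K2 (deld N) (gamd N ε) (iotd N ε) n.1 n.2 * x n.2
        * ee n.1 (xg N ε i))
      (N * ∑ j ∈ Finset.range N, Wmat (logKer A1 K1) (logKer A2 K2) (1 / (N:ℝ)) ε i (j:ℤ)
        * ψ ((j:ℝ) / N)) := by
  have hN : (N:ℝ) ≠ 0 := (cast_N_pos N).ne'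
  have hNc : (N:ℂ) ≠ 0 := by exact_mod_cast NeZero.ne N
  have hp : Function.Periodic ψ 1 := fun t => by
    have h1 := hψ (t + 1)
    have h2 : (fun m => x m * ee m (t + 1)) = fun m => x m * ee m t := by
      ext m
      rw [ee_periodic]
    rw [h2] at h1
    exact h1.unique (hψ t)
  set ψd : ℝ → ℂ := fun t => N * (ψ (t + 1 / (2 * N)) - ψ (t - 1 / (2 * N))) with hψd
  have hψd' : ∀ t, HasSum (fun m => (x m * deld N m) * ee m t) (ψd t) := fun t => by
    refine (((hψ (t + 1 / (2 * N))).sub (hψ (t - 1 / (2 * N)))).mul_left (N:ℂ)).congr_fun fun m => ?_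
    linear_combination -x m * ee_diff N m t
  have hxd : Summable fun m => ‖x m * deld N m‖ := by
    refine Summable.of_nonneg_of_le (fun m => norm_nonneg _) (fun m => ?_) (hx.mul_right (2 * (N:ℝ)))
    rw [norm_mul, norm_deld]
    have := Real.abs_sin_le_one (Real.pi * m / N)
    exact mul_le_mul_of_nonneg_left (mul_le_of_le_one_right (by positivity) this) (norm_nonneg _)
  have h1 := hasSum_avg_logKer N ε him hA1 hK1 hxd hψd' i (-(1 / (2 * N)))
  have h1' := hasSum_avg_logKer N ε him hA1 hK1 hxd hψd' (i + 1) (-(1 / (2 * N)))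
  have h2 := hasSum_avg_logKer N ε him hA2 hK2 hx hψ i 0
  have hp1 := sum_by_parts N hA1 hK1 hp (sg (1 / (N:ℝ)) ε i)
  have hp2 := sum_by_parts N hA1 hK1 hp (sg (1 / (N:ℝ)) ε (i + 1))
  rw [sg_eq] at hp1 hp2
  have e : N * ∑ j ∈ Finset.range N, Wmat (logKer A1 K1) (logKer A2 K2) (1 / (N:ℝ)) ε i (j:ℤ)
        * ψ ((j:ℝ) / N)
      = -(N * ((avg N fun j => logKer A1 K1 (xg N ε (i + 1) + -(1 / (2 * N)))
            ((j:ℝ) / N + -(1 / (2 * N))) * ψd ((j:ℝ) / N + -(1 / (2 * N))))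
          - avg N fun j => logKer A1 K1 (xg N ε i + -(1 / (2 * N)))
            ((j:ℝ) / N + -(1 / (2 * N))) * ψd ((j:ℝ) / N + -(1 / (2 * N)))))
        + avg N fun j => logKer A2 K2 (xg N ε i + 0) ((j:ℝ) / N + 0) * ψ ((j:ℝ) / N + 0) := by
    simp only [hψd]
    have e1 : ∀ a b c d f g : ℂ, a = -c → b = -d → f = N * (a - b) + g → f = -(N * (c - d)) + g := by
      rintro a b c d f g rfl rfl rfl
      ring
    refine e1 _ _ _ _ _ _ hp2 hp1 ?_
    rw [← Finset.sum_sub_distrib]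
    unfold avg
    rw [Finset.mul_sum, Finset.mul_sum, Finset.mul_sum, ← Finset.sum_add_distrib]
    refine Finset.sum_congr rfl fun j _ => ?_
    unfold Wmat
    simp only [add_zero]
    rw [sg_eq N ε (i + 1), sg_eq N ε i, tg_eq]
    have e2 : tg (1 / (N:ℝ)) 0 (j:ℤ) = ((j:ℤ):ℝ) / N := by
      unfold tg
      ring
    rw [e2]
    push_cast
    field_simp
    ring
  rw [e]
  refine ((((h1'.sub h1).mul_left (N:ℂ)).neg).add h2).congr_fun fun n => ?_
  have e3 : xg N ε (i + 1) + -(1 / (2 * N)) = xg N ε i + 1 / (2 * N) := by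
    unfold xg
    push_cast
    field_simp
    ring
  rw [e3, add_zero, ← sub_eq_add_neg]
  unfold Wm
  linear_combination Vm A1 K1 (gamd N ε) (iotd N ε) n.1 n.2 * x n.2 * deld N n.2
    * ee_diff N n.1 (xg N ε i)

end

end NysAux

end

noncomputable section

namespace NysAux

open Complex Filter Topology MeasureTheory

/-! ### Hilbert–Schmidt operators on the square-summable sequences -/

lemma cs_tsum {ι : Type*} {f g : ι → ℝ} (hf : ∀ i, 0 ≤ f i) (hg : ∀ i, 0 ≤ g i)
    (hf2 : Summable fun i => f i ^ 2) (hg2 : Summable fun i => g i ^ 2) :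
    (Summable fun i => f i * g i) ∧
      (∑' i, f i * g i) ^ 2 ≤ (∑' i, f i ^ 2) * ∑' i, g i ^ 2 := by
  have h := Real.summable_and_inner_le_Lp_mul_Lq_tsum_of_nonneg
    (Real.HolderConjugate.two_two) hf hg (by simpa using hf2) (by simpa using hg2)
  refine ⟨h.1, ?_⟩
  have h0 : 0 ≤ ∑' i, f i * g i := tsum_nonneg fun i => mul_nonneg (hf i) (hg i)
  have h2 := h.2
  simp only [Real.rpow_ofNat, ← Real.sqrt_eq_rpow] at h2
  have hF : 0 ≤ ∑' i, f i ^ 2 := tsum_nonneg fun i => sq_nonneg _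
  have hG : 0 ≤ ∑' i, g i ^ 2 := tsum_nonneg fun i => sq_nonneg _
  calc (∑' i, f i * g i) ^ 2 ≤ (Real.sqrt (∑' i, f i ^ 2) * Real.sqrt (∑' i, g i ^ 2)) ^ 2 := by
        gcongr
    _ = _ := by rw [mul_pow, Real.sq_sqrt hF, Real.sq_sqrt hG]

/-- The Hilbert space of square-summable sequences indexed by the frequencies. -/
abbrev H2 := lp (fun _ : ℤ => ℂ) 2

lemma memH2 {x : ℤ → ℂ} : Memℓp x 2 ↔ Summable fun n => ‖x n‖ ^ 2 := by
  rw [memℓp_gen_iff (by norm_num)]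
  simp

lemma normH2 (x : H2) : ‖x‖ ^ 2 = ∑' n, ‖x n‖ ^ 2 := by
  have := lp.norm_rpow_eq_tsum (p := 2) (by norm_num) x
  simpa using this

section
variable {k : ℤ × ℤ → ℂ} (hk : Summable fun p => ‖k p‖ ^ 2)
include hk

lemma row_summable (n : ℤ) : Summable fun m => ‖k (n, m)‖ ^ 2 := hk.prod_factor n

lemma hs_row {x : ℤ → ℂ} (hx : Summable fun n => ‖x n‖ ^ 2) (n : ℤ) :
    (Summable fun m => ‖k (n, m) * x m‖) ∧
    ‖∑' m, k (n, m) * x m‖ ^ 2 ≤ (∑' m, ‖k (n, m)‖ ^ 2) * ∑' m, ‖x m‖ ^ 2 := by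
  have h := cs_tsum (fun m => norm_nonneg (k (n, m))) (fun m => norm_nonneg (x m))
    (row_summable hk n) hx
  simp_rw [← norm_mul] at h
  refine ⟨h.1, le_trans ?_ h.2⟩
  gcongr
  exact norm_tsum_le_tsum_norm h.1

lemma hs_memH2 {x : ℤ → ℂ} (hx : Summable fun n => ‖x n‖ ^ 2) :
    (Summable fun n => ‖∑' m, k (n, m) * x m‖ ^ 2) ∧
    ∑' n, ‖∑' m, k (n, m) * x m‖ ^ 2 ≤ (∑' p, ‖k p‖ ^ 2) * ∑' m, ‖x m‖ ^ 2 := by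
  have hs : Summable fun n => (∑' m, ‖k (n, m)‖ ^ 2) * ∑' m, ‖x m‖ ^ 2 := hk.prod.mul_right _
  have h1 : Summable fun n => ‖∑' m, k (n, m) * x m‖ ^ 2 :=
    Summable.of_nonneg_of_le (fun n => sq_nonneg _) (fun n => (hs_row hk hx n).2) hs
  refine ⟨h1, (h1.tsum_le_tsum (fun n => (hs_row hk hx n).2) hs).trans ?_⟩
  rw [tsum_mul_right, hk.tsum_prod]

/-- The Hilbert–Schmidt operator with matrix `k`. -/
def hsOp : H2 →L[ℂ] H2 :=
  LinearMap.mkContinuous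
    { toFun := fun x => ⟨fun n => ∑' m, k (n, m) * x m, memH2.2 (hs_memH2 hk (memH2.1 x.2)).1⟩
      map_add' := fun x y => by
        ext n
        simp only [lp.coeFn_add, Pi.add_apply, mul_add]
        exact (hs_row hk (memH2.1 x.2) n).1.of_norm.tsum_add (hs_row hk (memH2.1 y.2) n).1.of_norm
      map_smul' := fun c x => by
        ext n
        simp only [lp.coeFn_smul, Pi.smul_apply, smul_eq_mul, RingHom.id_apply]
        rw [← tsum_mul_left]
        congr 1
        ext m
        ring }
    (Real.sqrt (∑' p, ‖k p‖ ^ 2)) (fun x => by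
      have h := (hs_memH2 hk (memH2.1 x.2)).2
      rw [← normH2] at h
      refine le_of_sq_le_sq ?_ (by positivity)
      rw [mul_pow, Real.sq_sqrt (tsum_nonneg fun i => sq_nonneg _), normH2]
      exact h)

lemma hsOp_apply (x : H2) (n : ℤ) : hsOp hk x n = ∑' m, k (n, m) * x m := rfl

lemma norm_hsOp_le : ‖hsOp hk‖ ≤ Real.sqrt (∑' p, ‖k p‖ ^ 2) :=
  LinearMap.mkContinuous_norm_le _ (Real.sqrt_nonneg _) _

end

lemma hs_sub_summable {k k' : ℤ × ℤ → ℂ} (hk : Summable fun p => ‖k p‖ ^ 2)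
    (hk' : Summable fun p => ‖k' p‖ ^ 2) : Summable fun p => ‖k p - k' p‖ ^ 2 := by
  refine Summable.of_nonneg_of_le (fun p => sq_nonneg _) (fun p => ?_)
    ((hk.add hk').mul_left 2)
  have := norm_sub_le (k p) (k' p)
  have h2 := add_sq_le (a := ‖k p‖) (b := ‖k' p‖)
  exact (pow_le_pow_left₀ (norm_nonneg _) this 2).trans h2

lemma norm_hsOp_sub {k k' : ℤ × ℤ → ℂ} (hk : Summable fun p => ‖k p‖ ^ 2)
    (hk' : Summable fun p => ‖k' p‖ ^ 2) :
    ‖hsOp hk - hsOp hk'‖ ≤ Real.sqrt (∑' p, ‖k p - k' p‖ ^ 2) := by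
  have e : hsOp hk - hsOp hk' = hsOp (hs_sub_summable hk hk') := by
    ext x n
    have h1 := (hs_row hk (memH2.1 x.2) n).1.of_norm
    have h2 := (hs_row hk' (memH2.1 x.2) n).1.of_norm
    simp only [sub_apply, lp.coeFn_sub, Pi.sub_apply, hsOp_apply, sub_mul]
    exact (h1.tsum_sub h2).symm
  rw [e]
  exact norm_hsOp_le _

/-- Hilbert–Schmidt operators are compact: they are norm limits of their truncations to finitely
many rows, which have finite rank. -/
lemma hsOp_compact {k : ℤ × ℤ → ℂ} (hk : Summable fun p => ‖k p‖ ^ 2) :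
    IsCompactOperator (hsOp hk) := by
  set kF : Finset ℤ → ℤ × ℤ → ℂ := fun F p => if p.1 ∈ F then k p else 0 with hkF
  have hle : ∀ F p, ‖kF F p‖ ^ 2 ≤ ‖k p‖ ^ 2 := fun F p => by
    simp only [hkF]
    split_ifs
    · exact le_rfl
    · simp
  have hs : ∀ F, Summable fun p => ‖kF F p‖ ^ 2 := fun F =>
    Summable.of_nonneg_of_le (fun p => sq_nonneg _) (hle F) hk
  have hlim : Tendsto (fun F => hsOp (hs F)) atTop (𝓝 (hsOp hk)) := by
    rw [tendsto_iff_norm_sub_tendsto_zero]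
    refine squeeze_zero (fun F => norm_nonneg _) (fun F => norm_hsOp_sub (hs F) hk) ?_
    have h0 : Tendsto (fun F => ∑' p, ‖kF F p - k p‖ ^ 2) atTop (𝓝 (∑' _ : ℤ × ℤ, (0:ℝ))) := by
      refine tendsto_tsum_of_dominated_convergence hk (fun p => ?_)
        (Eventually.of_forall fun F p => ?_)
      · refine tendsto_const_nhds.congr' ?_
        filter_upwards [eventually_ge_atTop {p.1}] with F hF
        have : p.1 ∈ F := hF (Finset.mem_singleton_self _)
        simp [hkF, this]
      · simp only [hkF]
        split_ifs
        · simp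
        · simp
    have := h0.sqrt
    simpa using this
  refine isCompactOperator_of_tendsto hlim (Eventually.of_forall fun F => ?_)
  have e : hsOp (hs F) = ∑ n ∈ F, (lp.singleContinuousLinearMap ℂ (fun _ : ℤ => ℂ) 2 n).comp
      ((lp.evalCLM ℂ (fun _ : ℤ => ℂ) 2 n).comp (hsOp hk)) := by
    ext x n
    simp only [hsOp_apply, hkF]
    rw [sum_apply, lp.coeFn_sum, Finset.sum_apply]
    simp only [ContinuousLinearMap.comp_apply, lp.singleContinuousLinearMap_apply,
      lp.single_apply]
    by_cases hn : n ∈ F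
    · rw [Finset.sum_eq_single n]
      · simp [hn]
        rfl
      · intro b _ hb
        simp [hb.symm]
      · exact fun h => absurd hn h
    · rw [Finset.sum_eq_zero]
      · simp [hn]
      · intro b hb
        have : b ≠ n := fun h => hn (h ▸ hb)
        simp [this.symm]
  rw [e]
  have hsub : ∀ G : Finset ℤ, (∑ n ∈ G, (lp.singleContinuousLinearMap ℂ (fun _ : ℤ => ℂ) 2 n).comp
      ((lp.evalCLM ℂ (fun _ : ℤ => ℂ) 2 n).comp (hsOp hk))) ∈
        compactOperator (RingHom.id ℂ) H2 H2 := fun G =>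
    Submodule.sum_mem _ fun n _ => by
      have : IsCompactOperator ((lp.evalCLM ℂ (fun _ : ℤ => ℂ) 2 n).comp (hsOp hk)) :=
        IsCompactOperator.comp_clm (f := (id : ℂ → ℂ)) isCompactOperator_id
          ((lp.evalCLM ℂ (fun _ : ℤ => ℂ) 2 n).comp (hsOp hk))
      exact this.clm_comp (lp.singleContinuousLinearMap ℂ (fun _ : ℤ => ℂ) 2 n)
  exact hsub F

/-- Stability: if `1 + k` is injective with `k` Hilbert–Schmidt, then `1 + k'` is bounded below,
uniformly for all `k'` close to `k` in the Hilbert–Schmidt norm. -/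
theorem hs_stab {k : ℤ × ℤ → ℂ} (hk : Summable fun p => ‖k p‖ ^ 2)
    (inj : ∀ x : ℤ → ℂ, (Summable fun n => ‖x n‖ ^ 2) →
      (∀ n, x n + ∑' m, k (n, m) * x m = 0) → ∀ n, x n = 0) :
    ∃ c > 0, ∃ η > 0, ∀ k' : ℤ × ℤ → ℂ, (Summable fun p => ‖k' p‖ ^ 2) →
      ∑' p, ‖k' p - k p‖ ^ 2 ≤ η → ∀ x : ℤ → ℂ, (Summable fun n => ‖x n‖ ^ 2) →
        c * ∑' n, ‖x n‖ ^ 2 ≤ ∑' n, ‖x n + ∑' m, k' (n, m) * x m‖ ^ 2 := by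
  have hne : ¬ Module.End.HasEigenvalue ((hsOp hk : H2 →L[ℂ] H2) : Module.End ℂ H2) (-1) := by
    intro h
    obtain ⟨x, hx⟩ := h.exists_hasEigenvector
    refine hx.2 ?_
    ext n
    refine inj x (memH2.1 x.2) (fun n => ?_) n
    have h1 : hsOp hk x = (-1 : ℂ) • x := hx.apply_eq_smul
    have h2 := congrArg (fun y : H2 => y n) h1
    simp only [hsOp_apply, lp.coeFn_smul, Pi.smul_apply, smul_eq_mul] at h2
    rw [h2]
    ring
  obtain ⟨c, hc, hb⟩ := antilipschitzWith_iff_exists_mul_le_norm.1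
    ((hsOp_compact hk).antilipschitz_of_not_hasEigenvalue (by norm_num) hne)
  refine ⟨(c / 2) ^ 2, by positivity, (c / 2) ^ 2, by positivity, fun k' hk' hη x hx => ?_⟩
  set X : H2 := ⟨x, memH2.2 hx⟩ with hX
  have h1 : ‖hsOp hk' - hsOp hk‖ ≤ c / 2 :=
    (norm_hsOp_sub hk' hk).trans (Real.sqrt_le_iff.2 ⟨by positivity, hη⟩)
  have h2 := hb X
  have h3 : ‖(hsOp hk' - hsOp hk) X‖ ≤ c / 2 * ‖X‖ :=
    (ContinuousLinearMap.le_opNorm _ _).trans (by gcongr)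
  have h4 : (hsOp hk - (-1 : ℂ) • 1) X = (X + hsOp hk' X) - (hsOp hk' - hsOp hk) X := by
    have h5 : ((-1 : ℂ) • (1 : H2 →L[ℂ] H2)) X = -X := by
      change (-1 : ℂ) • X = -X
      simp
    rw [sub_apply, sub_apply, h5]
    abel
  rw [h4] at h2
  have h5 : c / 2 * ‖X‖ ≤ ‖X + hsOp hk' X‖ := by
    have := norm_sub_le (X + hsOp hk' X) ((hsOp hk' - hsOp hk) X)
    linarith
  have h6 := pow_le_pow_left₀ (by positivity) h5 2
  rw [mul_pow, normH2, normH2] at h6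
  exact h6

end NysAux

end

noncomputable section

namespace NysAux

open Complex Filter Topology MeasureTheory

/-! ### Regularity of square-summable null sequences -/

lemma iteratedDeriv_ee (m : ℤ) (k : ℕ) :
    iteratedDeriv k (ee m) = fun t => (2 * Real.pi * I * m) ^ k * ee m t := by
  induction k with
  | zero => ext t; simp
  | succ k ih =>
    rw [iteratedDeriv_succ, ih]
    ext t
    rw [deriv_const_mul _ (hasDerivAt_ee m t).differentiableAt, (hasDerivAt_ee m t).deriv]
    ring

/-- A trigonometric series with rapidly decaying coefficients is a smooth periodic function. -/
lemma smooth_of_RD1 {x : ℤ → ℂ} (hx : RD1 x) :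
    ∃ φ : ℝ → ℂ, ContDiff ℝ (⊤ : ℕ∞) φ ∧ Function.Periodic φ 1 ∧ fc φ = x := by
  have hs : ∀ t, HasSum (fun m => x m * ee m t) (∑' m, x m * ee m t) := fun t => by
    refine Summable.hasSum (Summable.of_norm ?_)
    simpa [norm_ee] using hx.summable_norm
  refine ⟨fun t => ∑' m, x m * ee m t, ?_, fun t => ?_, ?_⟩
  · refine contDiff_tsum (v := fun k m => (2 * Real.pi) ^ k * (‖x m‖ * wt m ^ k))
      (fun m => contDiff_const.mul (contDiff_ee m)) (fun k _ => (hx.summable k).mul_left _)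
      (fun k m t _ => ?_)
    rw [norm_iteratedFDeriv_eq_norm_iteratedDeriv, iteratedDeriv_const_mul_field,
      iteratedDeriv_ee]
    simp only [norm_mul, norm_pow, norm_ee, mul_one, Complex.norm_I, Complex.norm_real,
      Complex.norm_intCast, Complex.norm_ofNat]
    rw [Real.norm_of_nonneg Real.pi_pos.le, mul_pow]
    have := abs_le_wt m
    have h2 : |(m:ℝ)| ^ k ≤ wt m ^ k := by gcongr
    have h3 := mul_le_mul_of_nonneg_left h2 (by positivity : 0 ≤ ‖x m‖ * (2 * Real.pi) ^ k)
    linarith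
  · simp only [ee_periodic _ t]
  · ext n
    have h1 := fc_of_hasSum x id hx.summable_norm _ hs n
    refine h1.unique ?_
    exact (hasSum_ite_eq n (x n)).congr_fun fun m => by
      by_cases h : m = n <;> simp [h]

lemma bounded_of_sq {x : ℤ → ℂ} (hx : Summable fun n => ‖x n‖ ^ 2) : ∃ D, 0 ≤ D ∧ ∀ n, ‖x n‖ ≤ D := by
  refine ⟨Real.sqrt (∑' n, ‖x n‖ ^ 2), Real.sqrt_nonneg _, fun n => Real.le_sqrt_of_sq_le ?_⟩
  exact hx.le_tsum n fun _ _ => sq_nonneg _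

lemma summable_wt_shift (n : ℤ) : Summable fun m : ℤ => (wt (n - m) ^ 2)⁻¹ :=
  ((Equiv.subLeft n).summable_iff (f := fun r : ℤ => (wt r ^ 2)⁻¹)).2 summable_wt

/-- The sum of the inverse squares of the weights. -/
def Swt : ℝ := ∑' n : ℤ, (wt n ^ 2)⁻¹

lemma Swt_nonneg : 0 ≤ Swt := tsum_nonneg fun n => by have := wt_pos n; positivity

lemma tsum_wt_shift (n : ℤ) : ∑' m : ℤ, (wt (n - m) ^ 2)⁻¹ = Swt :=
  (Equiv.subLeft n).tsum_eq (fun r : ℤ => (wt r ^ 2)⁻¹)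

/-- Bootstrap: the inverse of the diagonal gains one order of decay at each step. -/
lemma bootstrap {lam : ℤ → ℂ} {R : ℤ → ℤ → ℂ} {c : ℝ} (hc : 0 < c)
    (hl : ∀ n, n ≠ 0 → c * wt n ≤ ‖lam n‖)
    (hR : ∀ k : ℕ, ∃ C : ℝ, 0 ≤ C ∧ ∀ n m, ‖R n m‖ ≤ C * (wt (n - m) ^ k)⁻¹)
    {x : ℤ → ℂ} (hx : Summable fun n => ‖x n‖ ^ 2)
    (he : ∀ n, n ≠ 0 → lam n * x n + ∑' m, R n m * x m = 0) : RD1 x := by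
  obtain ⟨D0, hD0, hxD⟩ := bounded_of_sq hx
  suffices h : ∀ j : ℕ, ∃ D, 0 ≤ D ∧ ∀ n, ‖x n‖ * wt n ^ j ≤ D from
    fun j => (h j).imp fun D hD => hD.2
  intro j
  induction j with
  | zero => exact ⟨D0, hD0, by simpa using hxD⟩
  | succ j ih =>
    obtain ⟨D, hD, ih⟩ := ih
    obtain ⟨C, hC, hR⟩ := hR (j + 2)
    refine ⟨c⁻¹ * (C * D * Swt) + D0, by have := Swt_nonneg; positivity, fun n => ?_⟩
    by_cases hn : n = 0
    · subst hn
      have : wt 0 = 1 := by simp [wt]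
      rw [this, one_pow, mul_one]
      have h2 : 0 ≤ c⁻¹ * (C * D * Swt) := by have := Swt_nonneg; positivity
      linarith [hxD 0]
    have hw := wt_pos n
    have hb : ∀ m, ‖R n m * x m‖ * wt n ^ j ≤ C * D * (wt (n - m) ^ 2)⁻¹ := fun m => by
      have h1 := wt_pos m
      have h2 := wt_pos (n - m)
      have h3 : wt n ^ j ≤ wt m ^ j * wt (n - m) ^ j := by
        rw [← mul_pow]
        exact pow_le_pow_left₀ hw.le (wt_le_mul n m) j
      rw [norm_mul]
      calc ‖R n m‖ * ‖x m‖ * wt n ^ j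
          ≤ (C * (wt (n - m) ^ (j + 2))⁻¹) * ‖x m‖ * (wt m ^ j * wt (n - m) ^ j) := by
            gcongr
            exact hR n m
        _ = C * (‖x m‖ * wt m ^ j) * (wt (n - m) ^ 2)⁻¹ := by
            rw [pow_add]
            field_simp
        _ ≤ C * D * (wt (n - m) ^ 2)⁻¹ := by
            gcongr
            exact ih m
    have hs : Summable fun m => ‖R n m * x m‖ * wt n ^ j :=
      Summable.of_nonneg_of_le (fun m => by positivity) hb ((summable_wt_shift n).mul_left _)
    have hs' : Summable fun m => ‖R n m * x m‖ := by
      have := hs.mul_right (wt n ^ j)⁻¹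
      refine this.congr fun m => ?_
      field_simp
    have h1 : ‖∑' m, R n m * x m‖ * wt n ^ j ≤ C * D * Swt := by
      calc ‖∑' m, R n m * x m‖ * wt n ^ j ≤ (∑' m, ‖R n m * x m‖) * wt n ^ j := by
            gcongr
            exact norm_tsum_le_tsum_norm hs'
        _ = ∑' m, ‖R n m * x m‖ * wt n ^ j := tsum_mul_right.symm
        _ ≤ ∑' m, C * D * (wt (n - m) ^ 2)⁻¹ :=
            hs.tsum_le_tsum hb ((summable_wt_shift n).mul_left _)
        _ = _ := by rw [tsum_mul_left, tsum_wt_shift]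
    have h2 : ‖lam n * x n‖ = ‖∑' m, R n m * x m‖ := by
      rw [eq_neg_of_add_eq_zero_left (he n hn), norm_neg]
    rw [norm_mul] at h2
    have h3 : c * wt n * ‖x n‖ ≤ ‖∑' m, R n m * x m‖ := by
      rw [← h2]
      gcongr
      exact hl n hn
    have h4 : c * (‖x n‖ * wt n ^ (j + 1)) ≤ C * D * Swt := by
      calc c * (‖x n‖ * wt n ^ (j + 1)) = c * wt n * ‖x n‖ * wt n ^ j := by ring
        _ ≤ ‖∑' m, R n m * x m‖ * wt n ^ j := by gcongr
        _ ≤ _ := h1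
    have h5 : ‖x n‖ * wt n ^ (j + 1) ≤ c⁻¹ * (C * D * Swt) := by
      rw [inv_mul_eq_div, le_div_iff₀ hc]
      linarith
    linarith

end NysAux

end

noncomputable section

namespace NysAux

open Complex Filter Topology MeasureTheory

/-! ### Convergence of the aliased matrices and stability -/

/-- The integer `n` is the representative of least absolute value of its class modulo `N`. -/
abbrev InI (N : ℕ) (n : ℤ) : Prop := ((n : ℤ) : ZMod N).valMinAbs = n

lemma InI.two_abs_le {N : ℕ} (hN : N ≠ 0) {n : ℤ} (h : InI N n) : 2 * |n| ≤ N := by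
  have : NeZero N := ⟨hN⟩
  have := ZMod.valMinAbs_mem_Ioc (n : ZMod N)
  rw [h] at this
  have h1 := this.1
  have h2 := this.2
  rcases abs_cases n with ⟨h, _⟩ | ⟨h, _⟩ <;> rw [h] <;> omega

lemma InI_of_lt {N : ℕ} {n : ℤ} (h : 2 * |n| < N) : InI N n := by
  have hN : N ≠ 0 := by
    rintro rfl
    have := abs_nonneg n
    push_cast at h
    linarith
  have : NeZero N := ⟨hN⟩
  refine (ZMod.valMinAbs_spec _ _).2 ⟨rfl, ?_, ?_⟩
  · have := neg_abs_le n
    omega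
  · have := le_abs_self n
    omega

/-- Quantitative information on the Fourier matrices `lam + R` of the operator and `lamN + RN` of
its discretizations: size and invertibility of the diagonals, off-diagonal decay, and consistency
of first order. -/
structure MatSys (lam : ℤ → ℂ) (R : ℤ → ℤ → ℂ) (lamN : ℕ → ℤ → ℂ) (RN : ℕ → ℤ → ℤ → ℂ)
    (z : ℤ → ℂ) (c C : ℝ) : Prop where
  hc : 0 < c
  hc1 : c ≤ 1
  hC : 0 ≤ C
  hz : ∀ l, ‖z l‖ = 1
  hz0 : z 0 = 1
  lam0 : lam 0 = 0
  lam_lower : ∀ n, n ≠ 0 → c * wt n ≤ ‖lam n‖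
  lam_upper : ∀ n, ‖lam n‖ ≤ C * wt n
  R_le : ∀ n m, ‖R n m‖ ≤ C * (wt (n - m) ^ 4)⁻¹
  lamN0 : ∀ N, lamN N 0 = 0
  lamN_lower : ∀ N : ℕ, N ≠ 0 → ∀ n : ℤ, n ≠ 0 → 2 * |n| ≤ N → c * wt n ≤ ‖lamN N n‖
  lamN_sub : ∀ N : ℕ, N ≠ 0 → ∀ n : ℤ, 2 * |n| ≤ N → ‖lamN N n - lam n‖ ≤ C * (N:ℝ)⁻¹ * wt n ^ 2
  RN_le : ∀ N : ℕ, N ≠ 0 → ∀ n m : ℤ, 2 * |m| ≤ N → ‖RN N n m‖ ≤ C * (wt (n - m) ^ 4)⁻¹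
  RN_sub : ∀ N : ℕ, N ≠ 0 → ∀ n m : ℤ, 2 * |m| ≤ N →
    ‖RN N n m - R n m‖ ≤ C * (N:ℝ)⁻¹ * wt m ^ 2 * (wt (n - m) ^ 4)⁻¹

/-- The diagonal `lam` made invertible at the frequency zero. -/
def dg (lam : ℤ → ℂ) (n : ℤ) : ℂ := if n = 0 then 1 else lam n

/-- The matrix `k` with `dg lam * (1 + k) = lam + R`. -/
def KK (lam : ℤ → ℂ) (R : ℤ → ℤ → ℂ) (p : ℤ × ℤ) : ℂ :=
  (dg lam p.1)⁻¹ * (R p.1 p.2 - if p.1 = 0 ∧ p.2 = 0 then 1 else 0)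

/-- The aliased matrix: on the grid, the frequencies `n + l N` coincide with `n` up to the
factor `z l`. -/
def RP (z : ℤ → ℂ) (N : ℕ) (R : ℤ → ℤ → ℂ) (n m : ℤ) : ℂ := ∑' l : ℤ, z l * R (n + l * N) m

/-- The discrete analogue of `KK`, truncated to the resolved frequencies. -/
def KKN (z : ℤ → ℂ) (N : ℕ) (lam : ℤ → ℂ) (R : ℤ → ℤ → ℂ) (p : ℤ × ℤ) : ℂ :=
  if InI N p.1 ∧ InI N p.2 then KK lam (RP z N R) p else 0

/-- The off-diagonal decay shared by all the matrices. -/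
def Qd (n m : ℤ) : ℝ := (wt (n - m) ^ 2)⁻¹ + (wt (n + m) ^ 2)⁻¹

lemma Qd_nonneg (n m : ℤ) : 0 ≤ Qd n m := by
  have := wt_pos (n - m)
  have := wt_pos (n + m)
  unfold Qd
  positivity

lemma Qd_le_two (n m : ℤ) : Qd n m ≤ 2 := by
  unfold Qd
  linarith [inv_wt_le_one (n - m) 2, inv_wt_le_one (n + m) 2]

lemma le_Qd (n m : ℤ) : (wt (n - m) ^ 2)⁻¹ ≤ Qd n m := by
  have := wt_pos (n + m)
  unfold Qd
  have : 0 ≤ (wt (n + m) ^ 2)⁻¹ := by positivity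
  linarith

lemma ind_le_Qd (n m : ℤ) : ‖(if n = 0 ∧ m = 0 then 1 else 0 : ℂ)‖ ≤ Qd n m := by
  split_ifs with h
  · obtain ⟨rfl, rfl⟩ := h
    simp [Qd, wt]
  · simpa using Qd_nonneg n m

/-- Aliasing does not bring resolved frequencies closer, up to the reflection `m ↦ -m`. -/
lemma abs_alias {N : ℕ} (hN0 : N ≠ 0) {n m : ℤ} (hn : 2 * |n| ≤ N) (hm : 2 * |m| ≤ N) (l : ℤ) :
    (|n - m| ≤ |n + l * N - m| ∨ |n + m| ≤ |n + l * N - m|) ∧ |l| - 1 ≤ |n + l * N - m| := by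
  have h1 := abs_le.1 (le_refl |n|)
  have h2 := abs_le.1 (le_refl |m|)
  have h0 := abs_nonneg n
  have h0' := abs_nonneg m
  by_cases hl : l = 0
  · subst hl
    refine ⟨Or.inl (by simp), ?_⟩
    have := abs_nonneg (n + 0 * N - m)
    simp only [abs_zero]
    omega
  have hN : 0 ≤ (N:ℤ) := by positivity
  have hl1 : 1 ≤ |l| := Int.one_le_abs hl
  have h3 : |l| * N ≤ |n + l * N - m| + |n| + |m| := by
    have e : l * N = (n + l * N - m) + (-n) + m := by ring
    calc |l| * N = |l * N| := by rw [abs_mul, abs_of_nonneg hN]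
      _ = |(n + l * N - m) + (-n) + m| := by rw [← e]
      _ ≤ |n + l * N - m| + |-n| + |m| := abs_add_three _ _ _
      _ = _ := by rw [abs_neg]
  have h4 : (N:ℤ) ≤ |l| * N := le_mul_of_one_le_left hN hl1
  constructor
  · have h5 : N ≤ |n + l * N - m| + |n| + |m| := h4.trans h3
    rcases abs_cases n with ⟨e1, _⟩ | ⟨e1, _⟩ <;> rcases abs_cases m with ⟨e2, _⟩ | ⟨e2, _⟩ <;>
      rcases abs_cases (n - m) with ⟨e3, _⟩ | ⟨e3, _⟩ <;>
      rcases abs_cases (n + m) with ⟨e4, _⟩ | ⟨e4, _⟩ <;> omega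
  · have : (1:ℤ) ≤ N := by omega
    have h6 : |l| - 1 ≤ (|l| - 1) * N := le_mul_of_one_le_right (by omega) this
    have h7 : (|l| - 1) * N = |l| * N - N := by ring
    omega

lemma alias_Qd {N : ℕ} (hN0 : N ≠ 0) {n m : ℤ} (hn : 2 * |n| ≤ N) (hm : 2 * |m| ≤ N) (l : ℤ) :
    (wt (n + l * N - m) ^ 2)⁻¹ ≤ Qd n m := by
  have h1 := wt_pos (n - m)
  have h2 := wt_pos (n + m)
  have h3 : 0 ≤ (wt (n - m) ^ 2)⁻¹ := by positivity
  have h4 : 0 ≤ (wt (n + m) ^ 2)⁻¹ := by positivity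
  unfold Qd
  rcases (abs_alias hN0 hn hm l).1 with h | h
  · have := inv_anti₀ (by positivity) (pow_le_pow_left₀ h1.le (wt_mono h) 2)
    linarith
  · have := inv_anti₀ (by positivity) (pow_le_pow_left₀ h2.le (wt_mono h) 2)
    linarith

lemma alias_wt {N : ℕ} (hN0 : N ≠ 0) {n m : ℤ} (hn : 2 * |n| ≤ N) (hm : 2 * |m| ≤ N) (l : ℤ) :
    wt l ≤ 2 * wt (n + l * N - m) := by
  have h := (abs_alias hN0 hn hm l).2
  have h' : |(l:ℝ)| - 1 ≤ |((n + l * N - m : ℤ) : ℝ)| := by exact_mod_cast h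
  have h0 := abs_nonneg ((n + l * N - m : ℤ) : ℝ)
  unfold wt
  linarith

lemma alias_inv_wt {N : ℕ} (hN0 : N ≠ 0) {n m : ℤ} (hn : 2 * |n| ≤ N) (hm : 2 * |m| ≤ N) (l : ℤ) :
    (wt (n + l * N - m) ^ 2)⁻¹ ≤ 4 * (wt l ^ 2)⁻¹ := by
  have h1 := wt_pos l
  have h2 := wt_pos (n + l * N - m)
  rw [← div_eq_mul_inv, inv_le_comm₀ (by positivity) (by positivity), inv_div,
    div_le_iff₀ (by norm_num)]
  have := pow_le_pow_left₀ h1.le (alias_wt hN0 hn hm l) 2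
  linarith

/-- The square of this bound is summable over all pairs of frequencies. -/
lemma summable_Qd (D : ℝ) : Summable fun p : ℤ × ℤ => (D * (wt p.1)⁻¹ * Qd p.1 p.2) ^ 2 := by
  have h1 : ∀ n : ℤ, Summable fun m : ℤ => (wt (n + m) ^ 2)⁻¹ := fun n =>
    ((Equiv.addLeft n).summable_iff (f := fun r : ℤ => (wt r ^ 2)⁻¹)).2 summable_wt
  have h2 : ∀ n : ℤ, ∑' m : ℤ, (wt (n + m) ^ 2)⁻¹ = Swt := fun n =>
    (Equiv.addLeft n).tsum_eq (fun r : ℤ => (wt r ^ 2)⁻¹)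
  have h3 : Summable fun p : ℤ × ℤ => 2 * D ^ 2 * (wt p.1 ^ 2)⁻¹ * Qd p.1 p.2 := by
    refine (summable_prod_of_nonneg fun p => ?_).2 ⟨fun n => ?_, ?_⟩
    · have := wt_pos p.1
      have := Qd_nonneg p.1 p.2
      positivity
    · exact ((summable_wt_shift n).add (h1 n)).mul_left (2 * D ^ 2 * (wt n ^ 2)⁻¹)
    · have : (fun n : ℤ => ∑' m : ℤ, 2 * D ^ 2 * (wt n ^ 2)⁻¹ * Qd n m)
          = fun n : ℤ => 2 * D ^ 2 * (2 * Swt) * (wt n ^ 2)⁻¹ := by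
        ext n
        unfold Qd
        rw [tsum_mul_left, (summable_wt_shift n).tsum_add (h1 n), tsum_wt_shift, h2]
        ring
      simp only
      rw [this]
      exact summable_wt.mul_left _
  refine Summable.of_nonneg_of_le (fun p => sq_nonneg _) (fun p => ?_) h3
  have hw := wt_pos p.1
  have hQ := Qd_nonneg p.1 p.2
  have hQ2 : Qd p.1 p.2 ^ 2 ≤ 2 * Qd p.1 p.2 := by
    rw [sq]
    exact mul_le_mul_of_nonneg_right (Qd_le_two _ _) hQ
  calc (D * (wt p.1)⁻¹ * Qd p.1 p.2) ^ 2 = D ^ 2 * (wt p.1 ^ 2)⁻¹ * Qd p.1 p.2 ^ 2 := by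
        rw [mul_pow, mul_pow, inv_pow]
    _ ≤ D ^ 2 * (wt p.1 ^ 2)⁻¹ * (2 * Qd p.1 p.2) := by gcongr
    _ = _ := by ring

section
variable {lam : ℤ → ℂ} {R : ℤ → ℤ → ℂ} {lamN : ℕ → ℤ → ℂ} {RN : ℕ → ℤ → ℤ → ℂ}
  {z : ℤ → ℂ} {c C : ℝ} (M : MatSys lam R lamN RN z c C)
include M

lemma dg_lower (n : ℤ) : c * wt n ≤ ‖dg lam n‖ := by
  unfold dg
  split_ifs with h
  · subst h
    simpa [wt] using M.hc1
  · exact M.lam_lower n h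

lemma dgN_lower {N : ℕ} (hN : N ≠ 0) {n : ℤ} (hn : 2 * |n| ≤ N) : c * wt n ≤ ‖dg (lamN N) n‖ := by
  unfold dg
  split_ifs with h
  · subst h
    simpa [wt] using M.hc1
  · exact M.lamN_lower N hN n h hn

lemma KK_le_of {lam' : ℤ → ℂ} {R' : ℤ → ℤ → ℂ} {n m : ℤ} (h : c * wt n ≤ ‖dg lam' n‖) {D : ℝ}
    (hR : ‖R' n m‖ ≤ D * Qd n m) :
    ‖KK lam' R' (n, m)‖ ≤ c⁻¹ * (D + 1) * (wt n)⁻¹ * Qd n m := by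
  have hc := M.hc
  have hw := wt_pos n
  have h1 : ‖R' n m - if n = 0 ∧ m = 0 then 1 else 0‖ ≤ (D + 1) * Qd n m := by
    refine (norm_sub_le _ _).trans ?_
    linarith [ind_le_Qd n m]
  unfold KK
  rw [norm_mul, norm_inv]
  calc ‖dg lam' n‖⁻¹ * ‖R' n m - if n = 0 ∧ m = 0 then 1 else 0‖
      ≤ (c * wt n)⁻¹ * ((D + 1) * Qd n m) := by
        gcongr
    _ = _ := by rw [mul_inv]; ring

lemma alias_term_le {N : ℕ} (hN : N ≠ 0) {n m : ℤ} (hn : 2 * |n| ≤ N) (hm : 2 * |m| ≤ N) (l : ℤ) :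
    ‖z l * RN N (n + l * N) m‖ ≤ C * Qd n m * (4 * (wt l ^ 2)⁻¹) := by
  have hC := M.hC
  have h2 := wt_pos (n + l * N - m)
  have hQ := Qd_nonneg n m
  rw [norm_mul, M.hz, one_mul]
  calc ‖RN N (n + l * N) m‖ ≤ C * (wt (n + l * N - m) ^ 4)⁻¹ := M.RN_le N hN _ _ hm
    _ = C * (wt (n + l * N - m) ^ 2)⁻¹ * (wt (n + l * N - m) ^ 2)⁻¹ := by
        rw [mul_assoc, ← mul_inv]; ring
    _ ≤ _ := by
        gcongr
        · exact alias_Qd hN hn hm l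
        · exact alias_inv_wt hN hn hm l

lemma alias_summable {N : ℕ} (hN : N ≠ 0) {n m : ℤ} (hn : 2 * |n| ≤ N) (hm : 2 * |m| ≤ N) :
    Summable fun l : ℤ => ‖z l * RN N (n + l * N) m‖ :=
  Summable.of_nonneg_of_le (fun _ => norm_nonneg _) (alias_term_le M hN hn hm)
    ((summable_wt.mul_left 4).mul_left _)

lemma RP_le {N : ℕ} (hN : N ≠ 0) {n m : ℤ} (hn : 2 * |n| ≤ N) (hm : 2 * |m| ≤ N) :
    ‖RP z N (RN N) n m‖ ≤ 4 * C * Swt * Qd n m := by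
  have h := alias_summable M hN hn hm
  calc ‖RP z N (RN N) n m‖ ≤ ∑' l : ℤ, ‖z l * RN N (n + l * N) m‖ := norm_tsum_le_tsum_norm h
    _ ≤ ∑' l : ℤ, C * Qd n m * (4 * (wt l ^ 2)⁻¹) :=
        h.tsum_le_tsum (alias_term_le M hN hn hm) ((summable_wt.mul_left 4).mul_left _)
    _ = _ := by
        rw [tsum_mul_left, tsum_mul_left]
        unfold Swt
        ring

/-- A bound for `KK` and all `KKN`, uniform in `N`, with square-summable majorant. -/
lemma KK_bounds : ∃ D, 0 ≤ D ∧ (∀ p : ℤ × ℤ, ‖KK lam R p‖ ≤ D * (wt p.1)⁻¹ * Qd p.1 p.2) ∧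
    ∀ N, N ≠ 0 → ∀ p : ℤ × ℤ, ‖KKN z N (lamN N) (RN N) p‖ ≤ D * (wt p.1)⁻¹ * Qd p.1 p.2 := by
  have hC := M.hC
  have hc := M.hc
  have hS := Swt_nonneg
  have key : ∀ D' : ℝ, D' ≤ C + 4 * C * Swt → ∀ p : ℤ × ℤ,
      c⁻¹ * (D' + 1) * (wt p.1)⁻¹ * Qd p.1 p.2
        ≤ c⁻¹ * (C + 4 * C * Swt + 1) * (wt p.1)⁻¹ * Qd p.1 p.2 := fun D' hD p => by
    have h1 := wt_pos p.1
    have h2 := Qd_nonneg p.1 p.2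
    gcongr
  refine ⟨c⁻¹ * (C + 4 * C * Swt + 1), by positivity, fun p => ?_, fun N hN p => ?_⟩
  · refine (KK_le_of M (n := p.1) (m := p.2) (D := C) (dg_lower M p.1) ?_).trans
      (key C (by have : 0 ≤ 4 * C * Swt := by positivity
                 linarith) p)
    refine (M.R_le _ _).trans ?_
    have h1 := wt_pos (p.1 - p.2)
    have h2 : (wt (p.1 - p.2) ^ 4)⁻¹ ≤ (wt (p.1 - p.2) ^ 2)⁻¹ :=
      inv_anti₀ (by positivity) (pow_le_pow_right₀ (one_le_wt _) (by norm_num))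
    gcongr
    exact h2.trans (le_Qd _ _)
  · unfold KKN
    split_ifs with h
    · have h1 := h.1.two_abs_le hN
      have h2 := h.2.two_abs_le hN
      exact (KK_le_of M (n := p.1) (m := p.2) (D := 4 * C * Swt) (dgN_lower M hN h1)
        (RP_le M hN h1 h2)).trans (key _ (by linarith) p)
    · have h1 := wt_pos p.1
      have h2 := Qd_nonneg p.1 p.2
      rw [norm_zero]
      positivity

end

end NysAux

end

noncomputable section

namespace NysAux

open Complex Filter Topology MeasureTheory

/-! ### Uniform stability of the discrete systems -/

lemma eventually_two_abs (n : ℤ) : ∀ᶠ N : ℕ in atTop, 2 * |n| < N := by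
  filter_upwards [eventually_gt_atTop (2 * n.natAbs)] with N hN
  rw [Int.abs_eq_natAbs]
  omega

section
variable {lam : ℤ → ℂ} {R : ℤ → ℤ → ℂ} {lamN : ℕ → ℤ → ℂ} {RN : ℕ → ℤ → ℤ → ℂ}
  {z : ℤ → ℂ} {c C : ℝ} (M : MatSys lam R lamN RN z c C)
include M

/-- Entrywise consistency of the aliased remainder matrix. -/
lemma RP_sub_le {N : ℕ} (hN : N ≠ 0) {n m : ℤ} (hn : 2 * |n| ≤ N) (hm : 2 * |m| ≤ N)
    (hnm : 2 * |n - m| ≤ N) :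
    ‖RP z N (RN N) n m - R n m‖ ≤ (C * wt m ^ 2 + 8 * C) * Swt * (N:ℝ)⁻¹ := by
  have hC := M.hC
  have hN' : (0:ℝ) < N := by positivity
  have hs := (alias_summable M hN hn hm).of_norm.hasSum
  have h0 : HasSum (fun l : ℤ => if l = 0 then R n m else 0) (R n m) := hasSum_ite_eq 0 _
  have h1 := hs.sub h0
  have hb : ∀ l : ℤ, ‖z l * RN N (n + l * N) m - (if l = 0 then R n m else 0)‖
      ≤ (C * wt m ^ 2 + 8 * C) * (N:ℝ)⁻¹ * (wt l ^ 2)⁻¹ := fun l => by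
    by_cases hl : l = 0
    · subst hl
      have h2 := M.RN_sub N hN n m hm
      have h3 := inv_wt_le_one (n - m) 4
      have h4 : wt 0 = 1 := by simp [wt]
      have h5 := wt_pos m
      have h6 : C * (N:ℝ)⁻¹ * wt m ^ 2 * (wt (n - m) ^ 4)⁻¹ ≤ C * (N:ℝ)⁻¹ * wt m ^ 2 * 1 := by
        gcongr
      have h7 : 0 ≤ 8 * C * (N:ℝ)⁻¹ := by positivity
      simp only [M.hz0, zero_mul, add_zero, one_mul, if_true, h4, one_pow, inv_one, mul_one]
      linarith
    · simp only [hl, if_false, sub_zero]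
      rw [norm_mul, M.hz, one_mul]
      have hw := wt_pos (n + l * N - m)
      have hwl := wt_pos l
      have h2 : (wt (n + l * N - m))⁻¹ ≤ 2 * (N:ℝ)⁻¹ := by
        rw [← div_eq_mul_inv, inv_le_comm₀ hw (by positivity), inv_div]
        have h3 : |l| * N ≤ |n + l * N - m| + |n - m| := by
          have e : l * N = (n + l * N - m) - (n - m) := by ring
          calc |l| * N = |l * N| := by rw [abs_mul, Nat.abs_cast]
            _ = |(n + l * N - m) - (n - m)| := by rw [← e]
            _ ≤ _ := abs_sub _ _
        have h4 : (N:ℤ) ≤ |l| * N := le_mul_of_one_le_left (by positivity) (Int.one_le_abs hl)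
        have h5 : (N:ℤ) ≤ 2 * |n + l * N - m| := by omega
        have h6 : (N:ℝ) ≤ 2 * |((n + l * N - m : ℤ) : ℝ)| := by exact_mod_cast h5
        unfold wt
        linarith
      have h3 := alias_inv_wt hN hn hm l
      have h4 : (wt (n + l * N - m))⁻¹ ≤ 1 := inv_le_one_of_one_le₀ (one_le_wt _)
      calc ‖RN N (n + l * N) m‖ ≤ C * (wt (n + l * N - m) ^ 4)⁻¹ := M.RN_le N hN _ _ hm
        _ = C * ((wt (n + l * N - m))⁻¹ * (wt (n + l * N - m))⁻¹ * (wt (n + l * N - m) ^ 2)⁻¹) := by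
            field_simp
        _ ≤ C * (1 * (2 * (N:ℝ)⁻¹) * (4 * (wt l ^ 2)⁻¹)) := by gcongr
        _ = 8 * C * (N:ℝ)⁻¹ * (wt l ^ 2)⁻¹ := by ring
        _ ≤ _ := by
          have : 0 ≤ C * wt m ^ 2 := by have := wt_pos m; positivity
          gcongr
          linarith
  have h2 : HasSum (fun l : ℤ => (C * wt m ^ 2 + 8 * C) * (N:ℝ)⁻¹ * (wt l ^ 2)⁻¹)
      ((C * wt m ^ 2 + 8 * C) * (N:ℝ)⁻¹ * Swt) := summable_wt.hasSum.mul_left _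
  refine (h1.norm_le_of_bounded h2 hb).trans (le_of_eq ?_)
  ring

lemma KKN_tendsto (p : ℤ × ℤ) :
    Tendsto (fun N => KKN z N (lamN N) (RN N) p) atTop (𝓝 (KK lam R p)) := by
  have hinv : Tendsto (fun N : ℕ => (N:ℝ)⁻¹) atTop (𝓝 0) := tendsto_inv_atTop_nhds_zero_nat
  have h1 : Tendsto (fun N => RP z N (RN N) p.1 p.2) atTop (𝓝 (R p.1 p.2)) := by
    rw [tendsto_iff_norm_sub_tendsto_zero]
    have h2 := hinv.const_mul ((C * wt p.2 ^ 2 + 8 * C) * Swt)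
    rw [mul_zero] at h2
    refine squeeze_zero' (Eventually.of_forall fun N => norm_nonneg _) ?_ h2
    filter_upwards [eventually_ne_atTop 0, eventually_two_abs p.1, eventually_two_abs p.2,
      eventually_two_abs (p.1 - p.2)] with N hN ha hb hd
    exact RP_sub_le M hN ha.le hb.le hd.le
  have h2 : Tendsto (fun N => dg (lamN N) p.1) atTop (𝓝 (dg lam p.1)) := by
    unfold dg
    split_ifs with h
    · exact tendsto_const_nhds
    rw [tendsto_iff_norm_sub_tendsto_zero]
    have h2 := hinv.const_mul (C * wt p.1 ^ 2)
    rw [mul_zero] at h2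
    refine squeeze_zero' (Eventually.of_forall fun N => norm_nonneg _) ?_ h2
    filter_upwards [eventually_ne_atTop 0, eventually_two_abs p.1] with N hN ha
    have := M.lamN_sub N hN p.1 ha.le
    linarith
  have hne : dg lam p.1 ≠ 0 := by
    rw [← norm_pos_iff]
    exact lt_of_lt_of_le (mul_pos M.hc (wt_pos _)) (dg_lower M p.1)
  have h3 : Tendsto (fun N => KK (lamN N) (RP z N (RN N)) p) atTop (𝓝 (KK lam R p)) := by
    unfold KK
    exact (h2.inv₀ hne).mul (h1.sub tendsto_const_nhds)
  refine h3.congr' ?_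
  filter_upwards [eventually_two_abs p.1, eventually_two_abs p.2] with N ha hb
  unfold KKN
  rw [if_pos ⟨InI_of_lt ha, InI_of_lt hb⟩]

lemma KKN_summable {N : ℕ} (hN : N ≠ 0) :
    Summable fun p => ‖KKN z N (lamN N) (RN N) p‖ ^ 2 := by
  obtain ⟨D, hD, -, h⟩ := KK_bounds M
  refine Summable.of_nonneg_of_le (fun p => sq_nonneg _) (fun p => ?_) (summable_Qd D)
  exact pow_le_pow_left₀ (norm_nonneg _) (h N hN p) 2

lemma KK_summable : Summable fun p => ‖KK lam R p‖ ^ 2 := by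
  obtain ⟨D, hD, h, -⟩ := KK_bounds M
  refine Summable.of_nonneg_of_le (fun p => sq_nonneg _) (fun p => ?_) (summable_Qd D)
  exact pow_le_pow_left₀ (norm_nonneg _) (h p) 2

/-- If the limit system is injective, the discrete systems are uniformly stable. -/
theorem disc_stab (inj : ∀ x : ℤ → ℂ, (Summable fun n => ‖x n‖ ^ 2) →
      (∀ n, x n + ∑' m, KK lam R (n, m) * x m = 0) → ∀ n, x n = 0) :
    ∃ D, 0 ≤ D ∧ ∃ N0 : ℕ, ∀ N ≥ N0, N ≠ 0 → ∀ x : ℤ → ℂ, (∀ n, ¬ InI N n → x n = 0) →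
      ∀ E, 0 ≤ E → (∀ n, InI N n →
        ‖dg (lamN N) n * (x n + ∑' m, KKN z N (lamN N) (RN N) (n, m) * x m)‖ ≤ E) →
      (Summable fun n => ‖x n‖ ^ 2) ∧ ∑' n, ‖x n‖ ^ 2 ≤ D * E ^ 2 := by
  obtain ⟨c0, hc0, η, hη, hst⟩ := hs_stab (KK_summable M) inj
  obtain ⟨D, hD, hb1, hb2⟩ := KK_bounds M
  have hlim : Tendsto (fun N => ∑' p, ‖KKN z N (lamN N) (RN N) p - KK lam R p‖ ^ 2) atTop
      (𝓝 (∑' _ : ℤ × ℤ, (0:ℝ))) := by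
    refine tendsto_tsum_of_dominated_convergence (summable_Qd (2 * D)) (fun p => ?_) ?_
    · have h1 := tendsto_iff_norm_sub_tendsto_zero.1 (KKN_tendsto M p)
      simpa using h1.pow 2
    · filter_upwards [eventually_ne_atTop 0] with N hN p
      rw [norm_pow, norm_norm]
      refine pow_le_pow_left₀ (norm_nonneg _) ?_ 2
      have := norm_sub_le (KKN z N (lamN N) (RN N) p) (KK lam R p)
      linarith [hb1 p, hb2 N hN p]
  rw [tsum_zero] at hlim
  obtain ⟨N0, hN0⟩ := eventually_atTop.1 (hlim.eventually_le_const hη)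
  have hc := M.hc
  have hS := Swt_nonneg
  refine ⟨c0⁻¹ * (c⁻¹ ^ 2 * Swt), by positivity, N0, fun N hN hN' x hx E hE h => ?_⟩
  have hNz : NeZero N := ⟨hN'⟩
  have hsx : Summable fun n => ‖x n‖ ^ 2 := by
    refine summable_of_ne_finset_zero (s := Finset.Icc (-(N:ℤ)) N) fun n hn => ?_
    have : ¬ InI N n := fun hI => by
      have h1 := abs_le.1 (le_of_eq (rfl : |n| = |n|))
      have := hI.two_abs_le hN'
      have := abs_nonneg n
      rw [Finset.mem_Icc] at hn
      omega
    rw [hx n this]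
    simp
  refine ⟨hsx, ?_⟩
  have h1 := hst _ (KKN_summable M hN') (hN0 N hN) x hsx
  have h2 : ∀ n, ‖x n + ∑' m, KKN z N (lamN N) (RN N) (n, m) * x m‖ ^ 2
      ≤ c⁻¹ ^ 2 * E ^ 2 * (wt n ^ 2)⁻¹ := fun n => by
    have hw := wt_pos n
    by_cases hn : InI N n
    · have h3 := h n hn
      have h4 := dgN_lower M hN' (hn.two_abs_le hN')
      rw [norm_mul] at h3
      have h5 : c * wt n * ‖x n + ∑' m, KKN z N (lamN N) (RN N) (n, m) * x m‖ ≤ E :=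
        (mul_le_mul_of_nonneg_right h4 (norm_nonneg _)).trans h3
      have h6 : ‖x n + ∑' m, KKN z N (lamN N) (RN N) (n, m) * x m‖ ≤ c⁻¹ * E * (wt n)⁻¹ := by
        have : c⁻¹ * E * (wt n)⁻¹ = E / (c * wt n) := by field_simp
        rw [this, le_div_iff₀ (by positivity)]
        linarith
      calc _ ≤ (c⁻¹ * E * (wt n)⁻¹) ^ 2 := pow_le_pow_left₀ (norm_nonneg _) h6 2
        _ = _ := by rw [mul_pow, mul_pow, inv_pow (wt n)]
    · have h3 : ∀ m, KKN z N (lamN N) (RN N) (n, m) * x m = 0 := fun m => by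
        unfold KKN
        rw [if_neg fun h => hn h.1, zero_mul]
      simp only [h3, tsum_zero, hx n hn, add_zero, norm_zero]
      rw [zero_pow two_ne_zero]
      positivity
  have h3 : Summable fun n : ℤ => c⁻¹ ^ 2 * E ^ 2 * (wt n ^ 2)⁻¹ := summable_wt.mul_left _
  have h4 : ∑' n, ‖x n + ∑' m, KKN z N (lamN N) (RN N) (n, m) * x m‖ ^ 2
      ≤ c⁻¹ ^ 2 * E ^ 2 * Swt := by
    unfold Swt
    rw [← tsum_mul_left]
    exact (Summable.of_nonneg_of_le (fun n => sq_nonneg _) h2 h3).tsum_le_tsum h2 h3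
  have h5 := h1.trans h4
  rw [mul_assoc, inv_mul_eq_div, le_div_iff₀ hc0]
  linarith

end

end NysAux

end

noncomputable section

namespace NysAux

open Complex Filter Topology MeasureTheory

/-! ### The Fourier matrices of the hypersingular operator -/

lemma dg_KK {lam : ℤ → ℂ} {R : ℤ → ℤ → ℂ} (h0 : lam 0 = 0) {n : ℤ} (hd : dg lam n ≠ 0)
    {x : ℤ → ℂ} (hs : Summable fun m => R n m * x m) :
    dg lam n * (x n + ∑' m, KK lam R (n, m) * x m) = lam n * x n + ∑' m, R n m * x m := by
  have h1 : HasSum (fun m : ℤ => (if m = 0 then (if n = 0 then x 0 else 0) else 0))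
      (if n = 0 then x 0 else 0) := hasSum_ite_eq 0 _
  have h2 := (hs.hasSum.sub h1).mul_left (dg lam n)⁻¹
  have h3 : HasSum (fun m => KK lam R (n, m) * x m)
      ((dg lam n)⁻¹ * (∑' m, R n m * x m - if n = 0 then x 0 else 0)) := by
    refine h2.congr_fun fun m => ?_
    unfold KK
    dsimp only
    by_cases hm : m = 0
    · subst hm
      by_cases hn : n = 0
      · simp only [hn, and_self, if_true]
        ring
      · simp only [hn, false_and, if_false, if_true]
        ring
    · simp only [hm, and_false, if_false]
      ring
  rw [h3.tsum_eq]
  by_cases hn : n = 0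
  · subst hn
    simp only [dg, if_true, h0]
    ring
  · simp only [hn, if_false, sub_zero]
    rw [mul_add, mul_inv_cancel_left₀ hd]
    simp [dg, hn]

/-- The continuous remainder matrix. -/
def Rc (A1 K1 A2 K2 : ℝ → ℝ → ℂ) (α : ℂ) : ℤ → ℤ → ℂ :=
  Rm (bet A1 α) (c2 K1) (c2 fun s t => I / (2 * Real.pi) * A2 s t) (c2 K2) del gam iot

/-- The remainder matrix of the discretization with `N` points. -/
def Rdi (A1 K1 A2 K2 : ℝ → ℝ → ℂ) (α : ℂ) (ε : ℝ) (N : ℕ) : ℤ → ℤ → ℂ :=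
  Rm (bet A1 α) (c2 K1) (c2 fun s t => I / (2 * Real.pi) * A2 s t) (c2 K2)
    (deld N) (gamd N ε) (iotd N ε)

section
variable {A1 K1 A2 K2 : ℝ → ℝ → ℂ} (hA1 : SPK A1) (hK1 : SPK K1) (hA2 : SPK A2)
    (hK2 : SPK K2) {α : ℂ} (hα : α ≠ 0) (hdiag : ∀ s, A1 s s = α)
include hA1 hK1 hA2 hK2 hdiag

lemma Rc_bound (k : ℕ) : ∃ C : ℝ, 0 ≤ C ∧ ∀ n m,
    ‖Rc A1 K1 A2 K2 α n m‖ ≤ C * (wt (n - m) ^ k)⁻¹ := by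
  obtain ⟨C, hC, h⟩ := R_bound (RD2_bet hA1 α) (RD2_c2 hK1)
    (RD2_c2 (hA2.const_mul (I / (2 * Real.pi)))) (RD2_c2 hK2) (bet_diag hA1 hdiag) k (Bs 0)
  exact ⟨C, hC, fun n m => h _ _ _ m (symB_cont 0 m) n⟩

include hα

/-- The Fourier matrices of `W` and of its Nyström discretizations fit the abstract framework. -/
theorem exists_MatSys (ε : ℝ) (him : (ee 1 ε).im ≠ 0) : ∃ c C, MatSys (Lam α del gam)
    (Rc A1 K1 A2 K2 α) (fun N => Lam α (deld N) (gamd N ε)) (Rdi A1 K1 A2 K2 α ε)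
    (fun l => ee l ε) c C := by
  have hβ := RD2_bet hA1 α
  have hk1 := RD2_c2 hK1
  have ha2 := RD2_c2 (hA2.const_mul (I / (2 * Real.pi)))
  have hk2 := RD2_c2 hK2
  have h0 := bet_diag hA1 hdiag
  obtain ⟨C1, hC1, hR⟩ := R_bound hβ hk1 ha2 hk2 h0 4 (Bs ε)
  obtain ⟨C2, hC2, hRd⟩ := R_diff hβ hk1 ha2 hk2 h0 4 (Bs ε)
  obtain ⟨c1, hc1, hl1⟩ := Lam_lower α hα
  obtain ⟨c2', hc2, hl2⟩ := Lamd_lower α ε hα him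
  obtain ⟨C3, hC3, hl3⟩ := norm_Lam_le α
  obtain ⟨C4, hC4, hl4⟩ := Lam_diff α ε him
  have hB := Bs_ge ε
  have hm1 : min (min c1 c2') 1 ≤ c1 := (min_le_left _ _).trans (min_le_left _ _)
  have hm2 : min (min c1 c2') 1 ≤ c2' := (min_le_left _ _).trans (min_le_right _ _)
  refine ⟨min (min c1 c2') 1, C1 + C2 + C3 + C4, ?_⟩
  constructor
  · positivity
  · exact min_le_right _ _
  · positivity
  · exact fun l => norm_ee l ε
  · exact ee_zero ε
  · rw [← norm_eq_zero, norm_Lam, norm_del]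
    simp
  · intro n hn
    have := wt_pos n
    exact (mul_le_mul_of_nonneg_right hm1 this.le).trans (hl1 n hn)
  · intro n
    have := wt_pos n
    refine (hl3 n).trans ?_
    gcongr
    linarith
  · intro n m
    have := wt_pos (n - m)
    refine (hR _ _ _ m (symB_cont ε m) n).trans ?_
    gcongr
    linarith
  · intro N
    rw [← norm_eq_zero, norm_Lam, norm_deld]
    simp
  · intro N hN n hn hnN
    have : NeZero N := ⟨hN⟩
    have := wt_pos n
    exact (mul_le_mul_of_nonneg_right hm2 this.le).trans (hl2 N n hn hnN)
  · intro N hN n hnN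
    have : NeZero N := ⟨hN⟩
    have := wt_pos n
    refine (hl4 N n hnN).trans ?_
    gcongr
    linarith
  · intro N hN n m hm
    have : NeZero N := ⟨hN⟩
    have := wt_pos (n - m)
    refine (hR _ _ _ m (symB_disc N ε him m hm) n).trans ?_
    gcongr
    linarith
  · intro N hN n m hm
    have : NeZero N := ⟨hN⟩
    have hw := wt_pos (n - m)
    have hwm := wt_pos m
    have hNp := cast_N_pos N
    refine (hRd del gam iot _ _ _ m (N:ℝ)⁻¹ (by positivity) (symB_cont ε m)
      (symB_disc N ε him m hm) (fun n => (deld_sub_del N n).trans ?_)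
      (gamd_sub N ε him m hm) (iotd_sub N ε m hm) n).trans ?_
    · have := wt_pos n
      gcongr
      linarith
    · gcongr
      linarith

/-- Injectivity of the hypersingular operator on smooth functions gives injectivity of its Fourier
matrix on square-summable sequences, by elliptic regularity. -/
theorem KK_inj
    (hinj : ∀ φ : ℝ → ℂ, ContDiff ℝ (⊤ : ℕ∞) φ → Function.Periodic φ 1 →
      (∀ s, Wop (logKer A1 K1) (logKer A2 K2) φ s = 0) → ∀ s, φ s = 0)
    (x : ℤ → ℂ) (hx : Summable fun n => ‖x n‖ ^ 2)
    (he : ∀ n, x n + ∑' m, KK (Lam α del gam) (Rc A1 K1 A2 K2 α) (n, m) * x m = 0) :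
    ∀ n, x n = 0 := by
  obtain ⟨c, hc, hl⟩ := Lam_lower α hα
  have hR := Rc_bound hA1 hK1 hA2 hK2 hdiag
  have hL0 : Lam α del gam 0 = 0 := by
    rw [← norm_eq_zero, norm_Lam, norm_del]
    simp
  obtain ⟨C, hC, hRC⟩ := hR 2
  obtain ⟨D, hD, hxD⟩ := bounded_of_sq hx
  have hs : ∀ n, Summable fun m => Rc A1 K1 A2 K2 α n m * x m := fun n => by
    refine Summable.of_norm (Summable.of_nonneg_of_le (fun _ => norm_nonneg _) (fun m => ?_)
      ((summable_wt_shift n).mul_left (C * D)))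
    rw [norm_mul]
    have := wt_pos (n - m)
    calc _ ≤ C * (wt (n - m) ^ 2)⁻¹ * D := by gcongr; exacts [hRC n m, hxD m]
      _ = _ := by ring
  have hd : ∀ n, dg (Lam α del gam) n ≠ 0 := fun n => by
    unfold dg
    split_ifs with hn
    · exact one_ne_zero
    · rw [← norm_pos_iff]
      exact lt_of_lt_of_le (mul_pos hc (wt_pos n)) (hl n hn)
  have he' : ∀ n, Lam α del gam n * x n + ∑' m, Rc A1 K1 A2 K2 α n m * x m = 0 := fun n => by
    rw [← dg_KK hL0 (hd n) (hs n), he n, mul_zero]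
  have hRD := bootstrap hc hl hR hx fun n _ => he' n
  obtain ⟨φ, hφ, hp, hfc⟩ := smooth_of_RD1 hRD
  have hz := hinj φ hφ hp fun s => by
    have h1 := hasSum_Wop hA1 hK1 hA2 hK2 hφ hp s
    rw [hfc] at h1
    have h2 : ∀ n : ℤ, HasSum (fun m : ℤ => Wm A1 K1 A2 K2 del gam iot n m * x m * ee n s) 0 :=
      fun n => by
      have h3 : HasSum (fun m : ℤ => if m = n then Lam α del gam n * x n else 0)
        (Lam α del gam n * x n) := hasSum_ite_eq n _
      have h4 := (h3.add (hs n).hasSum).mul_right (ee n s)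
      rw [he' n, zero_mul] at h4
      refine h4.congr_fun fun m => ?_
      rw [Wm_split hA1 α del gam iot norm_gam_le n m]
      by_cases hm : m = n
      · subst hm
        simp only [if_true, Rc]
        ring
      · rw [if_neg hm, if_neg fun h => hm h.symm]
        simp only [zero_add, Rc]
    have h5 := h1.prod_fiberwise h2
    exact h5.unique hasSum_zero
  intro n
  rw [← hfc, fc_eq]
  simp [hz]

end

end NysAux

end

noncomputable section

namespace NysAux

open Complex Filter Topology MeasureTheory

/-! ### Consistency -/

/-- Discrete orthogonality: averaging over the shifted grid against a character collects the
aliased frequencies. -/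
lemma hasSum_alias (N : ℕ) [NeZero N] (ε : ℝ) {F : ℤ → ℤ → ℂ} {g : ℤ → ℂ}
    (h : ∀ i : ℤ, HasSum (fun p : ℤ × ℤ => F p.1 p.2 * ee p.1 (xg N ε i)) (g i)) (n : ℤ) :
    HasSum (fun p : ℤ × ℤ => ee p.1 ε * F (n + p.1 * N) p.2)
      (avg N fun i => g i * ee (-n) (xg N ε i)) := by
  have hN : (N:ℤ) ≠ 0 := by exact_mod_cast NeZero.ne N
  have h1 := avg_hasSum N (fun (p : ℤ × ℤ) (i : ℤ) => F p.1 p.2 * ee p.1 (xg N ε i)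
    * ee (-n) (xg N ε i)) (fun i => g i * ee (-n) (xg N ε i)) fun i => (h i).mul_right _
  have h2 : HasSum (fun p : ℤ × ℤ => F p.1 p.2 * if (N:ℤ) ∣ p.1 + -n then ee (p.1 + -n) (ε / N) else 0)
      (avg N fun i => g i * ee (-n) (xg N ε i)) := by
    refine h1.congr_fun fun p => ?_
    rw [← avg_ee, ← avg_const_mul]
    congr 1
    funext i
    rw [ee_add]
    ring
  have hi : Function.Injective fun p : ℤ × ℤ => (n + p.1 * N, p.2) := fun p q hpq => by
    simp only [Prod.mk.injEq, add_right_inj, mul_eq_mul_right_iff, hN, or_false] at hpq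
    exact Prod.ext hpq.1 hpq.2
  rw [← hi.hasSum_iff] at h2
  · refine h2.congr_fun fun p => ?_
    have e : n + p.1 * N + -n = N * p.1 := by ring
    simp only [Function.comp, e, dvd_mul_right, if_true, ee_mul_div]
    ring
  · intro p hp
    rw [if_neg, mul_zero]
    rintro ⟨l, hl⟩
    refine hp ⟨(l, p.2), Prod.ext ?_ rfl⟩
    simp only
    linear_combination -hl

lemma not_InI_le {N : ℕ} {m : ℤ} (h : ¬ InI N m) : (N:ℤ) ≤ 2 * |m| := by
  by_contra h'
  exact h (InI_of_lt (by omega))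

/-- Summability of the double series that bounds the consistency error. -/
lemma tau_sum {N : ℕ} (hN : N ≠ 0) (n : ℤ) {w : ℤ → ℝ} (hw : ∀ m, 0 ≤ w m)
    (hs : Summable fun m => w m ^ 2) :
    (Summable fun p : ℤ × ℤ => (wt p.1)⁻¹ * (wt (n + p.1 * N - p.2) ^ 3)⁻¹ * w p.2) ∧
    ∑' p : ℤ × ℤ, (wt p.1)⁻¹ * (wt (n + p.1 * N - p.2) ^ 3)⁻¹ * w p.2
      ≤ Real.sqrt (Swt ^ 3 * ∑' m, w m ^ 2) := by
  have hN' : (N:ℤ) ≠ 0 := by exact_mod_cast hN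
  have hS := Swt_nonneg
  set F : ℤ × ℤ → ℝ := fun p => (wt p.1)⁻¹ * (wt (n + p.1 * N - p.2))⁻¹ with hF
  set G : ℤ × ℤ → ℝ := fun p => (wt (n + p.1 * N - p.2) ^ 2)⁻¹ * w p.2 with hG
  have hF0 : ∀ p, 0 ≤ F p := fun p => by
    have := wt_pos p.1
    have := wt_pos (n + p.1 * N - p.2)
    positivity
  have hG0 : ∀ p, 0 ≤ G p := fun p => by
    have := wt_pos (n + p.1 * N - p.2)
    have := hw p.2
    positivity
  have eF : (fun p => F p ^ 2)
      = fun p : ℤ × ℤ => (wt p.1 ^ 2)⁻¹ * (wt (n + p.1 * N - p.2) ^ 2)⁻¹ := by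
    funext p
    simp only [hF, mul_pow, inv_pow]
  have hF2 : Summable (fun p => F p ^ 2) ∧ ∑' p, F p ^ 2 = Swt * Swt := by
    have h1 : ∀ l : ℤ, ∑' m : ℤ, F (l, m) ^ 2 = (wt l ^ 2)⁻¹ * Swt := fun l => by
      rw [← tsum_wt_shift (n + l * N), ← tsum_mul_left]
      exact tsum_congr fun m => congrFun eF (l, m)
    have h0 : ∀ l : ℤ, Summable fun m : ℤ => F (l, m) ^ 2 := fun l => by
      refine ((summable_wt_shift (n + l * N)).mul_left (wt l ^ 2)⁻¹).congr fun m => ?_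
      exact (congrFun eF (l, m)).symm
    have h2 : Summable fun p => F p ^ 2 := by
      rw [summable_prod_of_nonneg fun p => sq_nonneg _]
      refine ⟨h0, ?_⟩
      simp_rw [h1]
      exact summable_wt.mul_right _
    refine ⟨h2, ?_⟩
    rw [h2.tsum_prod' h0]
    simp_rw [h1]
    rw [tsum_mul_right]
    rfl
  have hG2 : Summable (fun p => G p ^ 2) ∧ ∑' p, G p ^ 2 ≤ Swt * ∑' m, w m ^ 2 := by
    have hin : ∀ m : ℤ, Function.Injective fun l : ℤ => n + l * N - m := fun m a b hab => by
      have : (a - b) * N = 0 := by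
        simp only at hab
        linear_combination hab
      rcases mul_eq_zero.1 this with h | h
      · omega
      · exact absurd h hN'
    have hsl : ∀ m : ℤ, Summable fun l : ℤ => (wt (n + l * N - m) ^ 2)⁻¹ := fun m =>
      summable_wt.comp_injective (hin m)
    have hb : ∀ m l : ℤ, G (l, m) ^ 2 ≤ (wt (n + l * N - m) ^ 2)⁻¹ * w m ^ 2 := fun m l => by
      simp only [hG, mul_pow]
      have h1 := inv_wt_le_one (n + l * N - m) 2
      have h2 := wt_pos (n + l * N - m)
      refine mul_le_mul_of_nonneg_right ?_ (sq_nonneg _)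
      exact pow_le_of_le_one (by positivity) h1 two_ne_zero
    have h0 : ∀ m : ℤ, Summable fun l : ℤ => G (l, m) ^ 2 := fun m =>
      Summable.of_nonneg_of_le (fun _ => sq_nonneg _) (hb m) ((hsl m).mul_right _)
    have h1 : ∀ m : ℤ, ∑' l : ℤ, G (l, m) ^ 2 ≤ Swt * w m ^ 2 := fun m => by
      refine ((h0 m).tsum_le_tsum (hb m) ((hsl m).mul_right _)).trans ?_
      rw [tsum_mul_right]
      refine mul_le_mul_of_nonneg_right ?_ (sq_nonneg _)
      exact tsum_comp_le_tsum_of_inj summable_wt (fun k => by have := wt_pos k; positivity) (hin m)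
    have h2 : Summable fun p : ℤ × ℤ => G p.swap ^ 2 := by
      rw [summable_prod_of_nonneg fun p => sq_nonneg _]
      refine ⟨h0, ?_⟩
      exact Summable.of_nonneg_of_le (fun m => tsum_nonneg fun _ => sq_nonneg _) h1 (hs.mul_left _)
    have h3 : Summable fun p => G p ^ 2 :=
      ((Equiv.prodComm ℤ ℤ).summable_iff (f := fun p => G p ^ 2)).1 h2
    refine ⟨h3, ?_⟩
    rw [← (Equiv.prodComm ℤ ℤ).tsum_eq fun p => G p ^ 2]
    change ∑' p : ℤ × ℤ, G p.swap ^ 2 ≤ _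
    rw [h2.tsum_prod' h0, ← tsum_mul_left]
    exact h2.prod.tsum_le_tsum h1 (hs.mul_left _)
  obtain ⟨hsum, hle⟩ := cs_tsum hF0 hG0 hF2.1 hG2.1
  have e : (fun p : ℤ × ℤ => (wt p.1)⁻¹ * (wt (n + p.1 * N - p.2) ^ 3)⁻¹ * w p.2)
      = fun p => F p * G p := by
    funext p
    have := wt_pos p.1
    have := wt_pos (n + p.1 * N - p.2)
    simp only [hF, hG]
    field_simp
  rw [e]
  refine ⟨hsum, Real.le_sqrt_of_sq_le (hle.trans ?_)⟩
  rw [hF2.2]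
  calc _ ≤ Swt * Swt * (Swt * ∑' m, w m ^ 2) := by
        gcongr
        exact hG2.2
    _ = _ := by ring

/-- The matrix `lam + R`. -/
def LR (lam : ℤ → ℂ) (R : ℤ → ℤ → ℂ) (n m : ℤ) : ℂ := (if n = m then lam n else 0) + R n m

section
variable {lam : ℤ → ℂ} {R : ℤ → ℤ → ℂ} {lamN : ℕ → ℤ → ℂ} {RN : ℕ → ℤ → ℤ → ℂ}
  {z : ℤ → ℂ} {c C : ℝ} (M : MatSys lam R lamN RN z c C)
include M

lemma LR_sub_le {N : ℕ} (hN : N ≠ 0) (n : ℤ) {m : ℤ} (hm : 2 * |m| ≤ N) :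
    ‖LR lam R n m - LR (lamN N) (RN N) n m‖
      ≤ 2 * C * (N:ℝ)⁻¹ * wt m ^ 2 * (wt (n - m) ^ 4)⁻¹ := by
  have hC := M.hC
  have hw := wt_pos m
  have hw' := wt_pos (n - m)
  have h1 := M.RN_sub N hN n m hm
  rw [norm_sub_rev] at h1
  have h2 : ‖(if n = m then lam n else 0) - (if n = m then lamN N n else 0)‖
      ≤ C * (N:ℝ)⁻¹ * wt m ^ 2 * (wt (n - m) ^ 4)⁻¹ := by
    split_ifs with h
    · subst h
      have := M.lamN_sub N hN n hm
      rw [norm_sub_rev] at this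
      have e : wt 0 = 1 := by simp [wt]
      rw [sub_self, e, one_pow, inv_one, mul_one]
      exact this
    · rw [sub_zero, norm_zero]
      positivity
  unfold LR
  rw [add_sub_add_comm]
  refine (norm_add_le _ _).trans ?_
  linarith

lemma LR_le (n m : ℤ) : ‖LR lam R n m‖ ≤ 2 * C * wt m * (wt (n - m) ^ 4)⁻¹ := by
  have hC := M.hC
  have hw := one_le_wt m
  have hw' := wt_pos (n - m)
  have h1 : ‖R n m‖ ≤ C * wt m * (wt (n - m) ^ 4)⁻¹ := by
    refine (M.R_le n m).trans ?_
    gcongr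
    exact le_mul_of_one_le_right hC hw
  have h2 : ‖(if n = m then lam n else 0)‖ ≤ C * wt m * (wt (n - m) ^ 4)⁻¹ := by
    split_ifs with h
    · subst h
      have e : wt 0 = 1 := by simp [wt]
      rw [sub_self, e, one_pow, inv_one, mul_one]
      exact M.lam_upper n
    · rw [norm_zero]
      positivity
  unfold LR
  refine (norm_add_le _ _).trans ?_
  linarith

/-- Pointwise consistency error. -/
lemma tau_le {N : ℕ} (hN : N ≠ 0) {n : ℤ} (hn : 2 * |n| ≤ N) (f : ℤ → ℂ) (l m : ℤ) :
    ‖z l * (LR lam R (n + l * N) m * f m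
        - LR (lamN N) (RN N) (n + l * N) m * if InI N m then f m else 0)‖
      ≤ 10 * C * (N:ℝ)⁻¹ * ((wt l)⁻¹ * (wt (n + l * N - m) ^ 3)⁻¹ * (wt m ^ 2 * ‖f m‖)) := by
  have hC := M.hC
  have hN' : (0:ℝ) < N := by positivity
  have hwl := wt_pos l
  have hwm := wt_pos m
  have hk := wt_pos (n + l * N - m)
  rw [norm_mul, M.hz, one_mul]
  by_cases hm : InI N m
  · have hm2 := hm.two_abs_le hN
    rw [if_pos hm, ← sub_mul, norm_mul]
    have h1 := LR_sub_le M hN (n + l * N) hm2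
    have h2 := alias_wt hN hn hm2 l
    have h3 : (wt (n + l * N - m) ^ 4)⁻¹ ≤ 2 * (wt l)⁻¹ * (wt (n + l * N - m) ^ 3)⁻¹ := by
      have : (wt (n + l * N - m))⁻¹ ≤ 2 * (wt l)⁻¹ := by
        rw [← div_eq_mul_inv, inv_le_comm₀ hk (by positivity), inv_div]
        linarith
      calc _ = (wt (n + l * N - m))⁻¹ * (wt (n + l * N - m) ^ 3)⁻¹ := by field_simp
        _ ≤ _ := by gcongr
    calc _ ≤ 2 * C * (N:ℝ)⁻¹ * wt m ^ 2 * (2 * (wt l)⁻¹ * (wt (n + l * N - m) ^ 3)⁻¹) * ‖f m‖ := by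
          gcongr
          refine h1.trans ?_
          gcongr
      _ = 4 * (C * (N:ℝ)⁻¹ * ((wt l)⁻¹ * (wt (n + l * N - m) ^ 3)⁻¹ * (wt m ^ 2 * ‖f m‖))) := by ring
      _ ≤ 10 * (C * (N:ℝ)⁻¹ * ((wt l)⁻¹ * (wt (n + l * N - m) ^ 3)⁻¹ * (wt m ^ 2 * ‖f m‖))) := by
          gcongr
          norm_num
      _ = _ := by ring
  · have hm2 := not_InI_le hm
    rw [if_neg hm, mul_zero, sub_zero, norm_mul]
    have h1 := LR_le M (n + l * N) m
    have h2 : N * wt l ≤ 5 * (wt m * wt (n + l * N - m)) := by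
      have h3 : |l| * N ≤ |n + l * N - m| + |n| + |m| := by
        have e : l * N = (n + l * N - m) - n + m := by ring
        calc |l| * N = |l * N| := by rw [abs_mul, Nat.abs_cast]
          _ = |(n + l * N - m) - n + m| := by rw [← e]
          _ ≤ |(n + l * N - m) - n| + |m| := abs_add_le _ _
          _ ≤ _ := by
            have := abs_sub (n + l * N - m) n
            linarith
      have h4 : N + |l| * N ≤ 4 * |m| + |n + l * N - m| := by omega
      have h5 : (N:ℝ) + |(l:ℝ)| * N ≤ 4 * |(m:ℝ)| + |((n + l * N - m : ℤ) : ℝ)| := by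
        exact_mod_cast h4
      unfold wt
      have h6 := abs_nonneg (m:ℝ)
      have h7 := abs_nonneg ((n + l * N - m : ℤ) : ℝ)
      nlinarith [mul_nonneg h6 h7]
    have h3 : wt m * (wt (n + l * N - m) ^ 4)⁻¹
        ≤ 5 * (N:ℝ)⁻¹ * ((wt l)⁻¹ * (wt (n + l * N - m) ^ 3)⁻¹ * wt m ^ 2) := by
      have e1 : wt m * (wt (n + l * N - m) ^ 4)⁻¹ = (N * wt l) *
        ((N:ℝ)⁻¹ * (wt l)⁻¹ * (wt (n + l * N - m) ^ 4)⁻¹ * wt m) := by field_simp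
      have e2 : 5 * (N:ℝ)⁻¹ * ((wt l)⁻¹ * (wt (n + l * N - m) ^ 3)⁻¹ * wt m ^ 2)
        = (5 * (wt m * wt (n + l * N - m))) *
        ((N:ℝ)⁻¹ * (wt l)⁻¹ * (wt (n + l * N - m) ^ 4)⁻¹ * wt m) := by field_simp
      rw [e1, e2]
      gcongr
    calc _ ≤ 2 * C * wt m * (wt (n + l * N - m) ^ 4)⁻¹ * ‖f m‖ := by gcongr
      _ = 2 * C * (wt m * (wt (n + l * N - m) ^ 4)⁻¹) * ‖f m‖ := by ring
      _ ≤ 2 * C * (5 * (N:ℝ)⁻¹ * ((wt l)⁻¹ * (wt (n + l * N - m) ^ 3)⁻¹ * wt m ^ 2)) * ‖f m‖ := by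
          gcongr
      _ = _ := by ring

/-- If the aliased discrete system with solution `x` and the aliased continuous one with solution
`f` have the same data, then the error `x - f` on the resolved frequencies solves the discrete
system with a right-hand side of size `O(1/N)`. -/
theorem consistency {N : ℕ} (hN : N ≠ 0) {x f : ℤ → ℂ} (hx : ∀ m, ¬ InI N m → x m = 0)
    (hf : Summable fun m => (wt m ^ 2 * ‖f m‖) ^ 2) {n : ℤ} (hn : InI N n) {T : ℂ}
    (h1 : HasSum (fun p : ℤ × ℤ => z p.1 * (LR (lamN N) (RN N) (n + p.1 * N) p.2 * x p.2)) T)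
    (h2 : HasSum (fun p : ℤ × ℤ => z p.1 * (LR lam R (n + p.1 * N) p.2 * f p.2)) T) :
    ‖dg (lamN N) n * ((x n - if InI N n then f n else 0)
      + ∑' m, KKN z N (lamN N) (RN N) (n, m) * (x m - if InI N m then f m else 0))‖
      ≤ 10 * C * (N:ℝ)⁻¹ * Real.sqrt (Swt ^ 3 * ∑' m, (wt m ^ 2 * ‖f m‖) ^ 2) := by
  have hC := M.hC
  have hn2 := hn.two_abs_le hN
  set y : ℤ → ℂ := fun m => x m - if InI N m then f m else 0 with hy
  have hy0 : ∀ m, ¬ InI N m → y m = 0 := fun m hm => by simp [hy, hx m hm, hm]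
  obtain ⟨hs, hle⟩ := tau_sum hN n (w := fun m => wt m ^ 2 * ‖f m‖)
    (fun m => by have := wt_pos m; positivity) hf
  have hτ : Summable fun p : ℤ × ℤ => z p.1 * (LR lam R (n + p.1 * N) p.2 * f p.2
      - LR (lamN N) (RN N) (n + p.1 * N) p.2 * if InI N p.2 then f p.2 else 0) :=
    Summable.of_norm_bounded (hs.mul_left _) fun p => tau_le M hN hn2 f p.1 p.2
  have h3 := (h1.sub h2).add hτ.hasSum
  rw [sub_self, zero_add] at h3
  have hT : ‖∑' p : ℤ × ℤ, z p.1 * (LR lam R (n + p.1 * N) p.2 * f p.2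
      - LR (lamN N) (RN N) (n + p.1 * N) p.2 * if InI N p.2 then f p.2 else 0)‖
      ≤ 10 * C * (N:ℝ)⁻¹ * Real.sqrt (Swt ^ 3 * ∑' m, (wt m ^ 2 * ‖f m‖) ^ 2) := by
    refine (tsum_of_norm_bounded (hs.hasSum.mul_left _)
      fun p => tau_le M hN hn2 f p.1 p.2).trans ?_
    gcongr
  set τ := ∑' p : ℤ × ℤ, z p.1 * (LR lam R (n + p.1 * N) p.2 * f p.2
      - LR (lamN N) (RN N) (n + p.1 * N) p.2 * if InI N p.2 then f p.2 else 0)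
  have h4 : HasSum (fun p : ℤ × ℤ => z p.1 * LR (lamN N) (RN N) (n + p.1 * N) p.2 * y p.2) τ := by
    refine h3.congr_fun fun p => ?_
    simp only [hy]
    ring
  have h5 := ((Equiv.prodComm ℤ ℤ).hasSum_iff (f := fun p : ℤ × ℤ =>
    z p.1 * LR (lamN N) (RN N) (n + p.1 * N) p.2 * y p.2)).2 h4
  have h6 : ∀ m : ℤ, HasSum (fun l : ℤ => z l * LR (lamN N) (RN N) (n + l * N) m * y m)
      (((if m = n then lamN N n else 0) + RP z N (RN N) n m) * y m) := fun m => by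
    by_cases hm : InI N m
    · have hm2 := hm.two_abs_le hN
      refine HasSum.mul_right _ ?_
      have h7 : HasSum (fun l : ℤ => if l = 0 then (if m = n then lamN N n else 0) else 0)
        (if m = n then lamN N n else 0) := hasSum_ite_eq 0 _
      have h8 := h7.add (alias_summable M hN hn2 hm2).of_norm.hasSum
      refine h8.congr_fun fun l => ?_
      unfold LR
      rw [mul_add]
      congr 1
      by_cases hl : l = 0
      · subst hl
        simp only [zero_mul, add_zero, M.hz0, one_mul, if_true, eq_comm]
      · rw [if_neg hl, if_neg, mul_zero]
        intro he
        -- a nonzero multiple of `N` cannot relate two resolved frequencies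
        have e1 : ((n : ℤ) : ZMod N) = ((m : ℤ) : ZMod N) := by
          rw [← he]
          push_cast
          simp
        have e2 : n = m := by
          have ha : ((n : ℤ) : ZMod N).valMinAbs = n := hn
          have hb : ((m : ℤ) : ZMod N).valMinAbs = m := hm
          rw [← ha, ← hb, e1]
        rw [e2] at he
        have : l * (N:ℤ) = 0 := by omega
        rcases mul_eq_zero.1 this with h | h
        · exact hl h
        · exact hN (by exact_mod_cast h)
    · rw [hy0 m hm]
      simp only [mul_zero]
      exact hasSum_zero
  have h7 := h5.prod_fiberwise h6
  have hfin : Summable fun m => RP z N (RN N) n m * y m := by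
    refine summable_of_ne_finset_zero (s := Finset.Icc (-(N:ℤ)) N) fun m hm => ?_
    have : ¬ InI N m := fun hI => by
      have h1 := abs_le.1 (le_of_eq (rfl : |m| = |m|))
      have := hI.two_abs_le hN
      have := abs_nonneg m
      rw [Finset.mem_Icc] at hm
      omega
    rw [hy0 m this, mul_zero]
  have h8 : HasSum (fun m : ℤ => if m = n then lamN N n * y n else 0) (lamN N n * y n) :=
    hasSum_ite_eq n _
  have h9 : HasSum (fun m : ℤ => ((if m = n then lamN N n else 0) + RP z N (RN N) n m) * y m)
      (lamN N n * y n + ∑' m, RP z N (RN N) n m * y m) := by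
    refine (h8.add hfin.hasSum).congr_fun fun m => ?_
    split_ifs with h
    · rw [h]
      ring
    · ring
  have hd : dg (lamN N) n ≠ 0 := by
    rw [← norm_pos_iff]
    exact lt_of_lt_of_le (mul_pos M.hc (wt_pos _)) (dgN_lower M hN hn2)
  have h10 : ∑' m, KKN z N (lamN N) (RN N) (n, m) * y m
      = ∑' m, KK (lamN N) (RP z N (RN N)) (n, m) * y m := by
    refine tsum_congr fun m => ?_
    by_cases hm : InI N m
    · unfold KKN
      rw [if_pos ⟨hn, hm⟩]
    · rw [hy0 m hm, mul_zero, mul_zero]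
  change ‖dg (lamN N) n * (y n + ∑' m, KKN z N (lamN N) (RN N) (n, m) * y m)‖ ≤ _
  rw [h10, dg_KK (M.lamN0 N) hd hfin, h9.unique h7]
  exact hT

end

end NysAux

end

noncomputable section

namespace NysAux

open Complex Filter Topology MeasureTheory

/-! ### Trigonometric interpolation on the grid -/

section
variable (N : ℕ) [NeZero N]

lemma sum_zmod_val {E : Type*} [AddCommMonoid E] (F : ℕ → E) :
    ∑ a : ZMod N, F a.val = ∑ j ∈ Finset.range N, F j := by
  refine Finset.sum_nbij' (fun a => a.val) (fun j => (j : ZMod N)) (fun a _ => ?_) (fun j _ => ?_)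
    (fun a _ => ?_) (fun j hj => ?_) (fun a _ => rfl)
  · exact Finset.mem_range.2 (ZMod.val_lt a)
  · exact Finset.mem_univ _
  · exact ZMod.natCast_zmod_val a
  · exact ZMod.val_natCast_of_lt (Finset.mem_range.1 hj)

lemma hasSum_InI {E : Type*} [AddCommMonoid E] [TopologicalSpace E] {g : ℤ → E}
    (hg : ∀ n, ¬ InI N n → g n = 0) : HasSum g (∑ a : ZMod N, g a.valMinAbs) := by
  have h1 : HasSum (g ∘ fun a : ZMod N => a.valMinAbs) (∑ a : ZMod N, g a.valMinAbs) :=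
    hasSum_fintype _
  refine (Function.Injective.hasSum_iff ZMod.injective_valMinAbs fun n hn => hg n fun h => ?_).1 h1
  exact hn ⟨_, h⟩

/-- The trigonometric polynomial with coefficients `X`, indexed by the frequencies of least absolute
value modulo `N`. -/
def trig (X : ZMod N → ℂ) (t : ℝ) : ℂ := ∑ a : ZMod N, X a * ee a.valMinAbs t

lemma InI_valMinAbs (a : ZMod N) : InI N a.valMinAbs := by
  unfold InI
  rw [ZMod.coe_valMinAbs]

/-- The extension of `X` by zero to the unresolved frequencies. -/
def ext0 (X : ZMod N → ℂ) (n : ℤ) : ℂ := if InI N n then X n else 0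

lemma ext0_val (X : ZMod N → ℂ) (a : ZMod N) : ext0 N X a.valMinAbs = X a := by
  unfold ext0
  rw [if_pos (InI_valMinAbs N a), ZMod.coe_valMinAbs]

lemma hasSum_trig (X : ZMod N → ℂ) (t : ℝ) :
    HasSum (fun m => ext0 N X m * ee m t) (trig N X t) := by
  have := hasSum_InI N (g := fun m => ext0 N X m * ee m t) fun n hn => by
    simp only [ext0, if_neg hn, zero_mul]
  simpa only [ext0_val, trig] using this

/-- The coefficients of a trigonometric polynomial are recovered from its grid values. -/
lemma trig_orth (X : ZMod N → ℂ) (b : ZMod N) :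
    avg N (fun j => trig N X ((j:ℝ) / N) * ee (-b.valMinAbs) ((j:ℝ) / N)) = X b := by
  have h1 : ∀ j : ℤ, trig N X ((j:ℝ) / N) * ee (-b.valMinAbs) ((j:ℝ) / N)
      = ∑ a : ZMod N, X a * ee (a.valMinAbs + -b.valMinAbs) (xg N 0 j) := fun j => by
    unfold trig xg
    rw [Finset.sum_mul]
    refine Finset.sum_congr rfl fun a _ => ?_
    rw [ee_add, add_zero]
    ring
  have h2 : avg N (fun j => ∑ a : ZMod N, X a * ee (a.valMinAbs + -b.valMinAbs) (xg N 0 j))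
      = ∑ a : ZMod N, X a * avg N (fun j => ee (a.valMinAbs + -b.valMinAbs) (xg N 0 j)) := by
    unfold avg
    rw [Finset.sum_comm, Finset.mul_sum]
    refine Finset.sum_congr rfl fun a _ => ?_
    rw [← Finset.mul_sum]
    ring
  rw [avg_congr N h1, h2, Finset.sum_eq_single b]
  · rw [avg_ee]
    simp
  · intro a _ hab
    rw [avg_ee, if_neg, mul_zero]
    intro hd
    rw [← sub_eq_add_neg, ← ZMod.intCast_eq_intCast_iff_dvd_sub, ZMod.coe_valMinAbs,
      ZMod.coe_valMinAbs] at hd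
    exact hab hd.symm
  · intro h
    exact absurd (Finset.mem_univ b) h

lemma trig_interp (v : ZMod N → ℂ) : ∃ X : ZMod N → ℂ, ∀ a, trig N X ((a.val : ℝ) / N) = v a := by
  let L : (ZMod N → ℂ) →ₗ[ℂ] (ZMod N → ℂ) :=
    { toFun := fun X a => trig N X ((a.val : ℝ) / N)
      map_add' := fun X Y => by
        funext a
        simp [trig, add_mul, Finset.sum_add_distrib]
      map_smul' := fun c X => by
        funext a
        simp [trig, Finset.mul_sum, mul_assoc] }
  have hL : Function.Injective L := by
    rw [← LinearMap.ker_eq_bot, LinearMap.ker_eq_bot']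
    intro X hX
    funext b
    rw [← trig_orth N X b]
    unfold avg
    have : ∀ j ∈ Finset.range N, trig N X (((j:ℤ):ℝ) / N) * ee (-b.valMinAbs) (((j:ℤ):ℝ) / N) = 0 := by
      intro j hj
      have h1 : trig N X ((((j : ZMod N).val : ℕ) : ℝ) / N) = 0 := congrFun hX (j : ZMod N)
      rw [ZMod.val_natCast_of_lt (Finset.mem_range.1 hj)] at h1
      rw [Int.cast_natCast, h1, zero_mul]
    rw [Finset.sum_eq_zero this]
    simp
  obtain ⟨X, hX⟩ := LinearMap.injective_iff_surjective.1 hL v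
  exact ⟨X, fun a => congrFun hX a⟩

lemma ee_add_int (n : ℤ) (t : ℝ) (k : ℤ) : ee n (t + k) = ee n t := by
  rw [ee_add_right, ee_int, mul_one]

lemma trig_add_int (X : ZMod N → ℂ) (t : ℝ) (k : ℤ) : trig N X (t + k) = trig N X t := by
  unfold trig
  simp_rw [ee_add_int]

lemma trig_grid (X : ZMod N → ℂ) (j : ℤ) :
    trig N X ((((j : ZMod N).val : ℕ) : ℝ) / N) = trig N X ((j:ℝ) / N) := by
  have hN : (N:ℝ) ≠ 0 := (cast_N_pos N).ne'
  have h1 : (((j : ZMod N).val : ℕ) : ℤ) = j % N := ZMod.val_intCast j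
  have h2 := Int.emod_add_mul_ediv j N
  have h3 : (j:ℝ) / N = (((j : ZMod N).val : ℕ) : ℝ) / N + ((j / N : ℤ) : ℝ) := by
    have : (j:ℝ) = (((j : ZMod N).val : ℕ) : ℝ) + N * ((j / (N:ℤ) : ℤ) : ℝ) := by
      rw [← h1] at h2
      exact_mod_cast h2.symm
    rw [eq_comm, ← sub_eq_zero]
    field_simp
    linarith
  rw [h3, trig_add_int]

lemma trig_parseval (X : ZMod N → ℂ) :
    (N:ℝ)⁻¹ * ∑ j ∈ Finset.range N, ‖trig N X ((j:ℝ) / N)‖ ^ 2 = ∑ a : ZMod N, ‖X a‖ ^ 2 := by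
  have h1 : ∀ t : ℝ, ((‖trig N X t‖ ^ 2 : ℝ) : ℂ)
      = ∑ a : ZMod N, (starRingEnd ℂ) (X a) * (trig N X t * ee (-a.valMinAbs) t) := fun t => by
    rw [← Complex.normSq_eq_norm_sq, ← Complex.mul_conj]
    conv_lhs => arg 2; unfold trig
    rw [map_sum, Finset.mul_sum]
    refine Finset.sum_congr rfl fun a _ => ?_
    rw [map_mul, conj_ee]
    ring
  have h2 : (((N:ℝ)⁻¹ * ∑ j ∈ Finset.range N, ‖trig N X ((j:ℝ) / N)‖ ^ 2 : ℝ) : ℂ)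
      = ((∑ a : ZMod N, ‖X a‖ ^ 2 : ℝ) : ℂ) := by
    rw [Complex.ofReal_mul, Complex.ofReal_sum, Complex.ofReal_sum]
    simp_rw [h1]
    rw [Finset.sum_comm, Finset.mul_sum]
    refine Finset.sum_congr rfl fun a _ => ?_
    rw [← Finset.mul_sum, ← Complex.normSq_eq_norm_sq, ← Complex.mul_conj]
    have h3 := trig_orth N X a
    unfold avg at h3
    simp only [Int.cast_natCast] at h3
    rw [ofReal_inv, ofReal_natCast, mul_left_comm, h3, mul_comm]
  exact_mod_cast h2

/-! ### The `L²` norm of a step function -/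

lemma stepf_integral (G : ZMod N → ℝ) :
    IntervalIntegrable (fun t : ℝ => G ((⌊t * N + 1 / 2 - 0⌋ : ℤ) : ZMod N)) volume 0 1 ∧
    ∫ t in (0:ℝ)..1, G ((⌊t * N + 1 / 2 - 0⌋ : ℤ) : ZMod N)
      = (N:ℝ)⁻¹ * ∑ j ∈ Finset.range N, G (j : ZMod N) := by
  have hN := cast_N_pos N
  set g : ℝ → ℝ := fun t => G ((⌊t * N + 1 / 2 - 0⌋ : ℤ) : ZMod N) with hg
  have hinteg : ∀ a b, IntervalIntegrable g volume a b := fun a b => by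
    rw [intervalIntegrable_iff]
    refine Measure.integrableOn_of_bounded (M := ∑ a, ‖G a‖) (by simp) ?_ ?_
    · refine Measurable.aestronglyMeasurable ?_
      refine (measurable_from_top (f := fun k : ℤ => G (k : ZMod N))).comp ?_
      exact Int.measurable_floor.comp (by fun_prop)
    · refine Eventually.of_forall fun t => ?_
      exact Finset.single_le_sum (f := fun a => ‖G a‖) (fun a _ => norm_nonneg _)
        (Finset.mem_univ _)
  refine ⟨hinteg 0 1, ?_⟩
  have hper : Function.Periodic g 1 := fun t => by
    simp only [hg]
    rw [show (t + 1) * (N:ℝ) + 1 / 2 - 0 = t * N + 1 / 2 - 0 + ((N:ℤ):ℝ) by push_cast; ring,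
      Int.floor_add_intCast]
    simp
  have h1 := hper.intervalIntegral_add_eq 0 (-(1 / 2) / N)
  rw [zero_add] at h1
  rw [h1]
  have h2 := intervalIntegral.sum_integral_adjacent_intervals (μ := volume) (f := g)
    (a := fun k : ℕ => ((k:ℝ) - 1 / 2) / N) (n := N) fun k _ => hinteg _ _
  have e1 : (((0:ℕ):ℝ) - 1 / 2) / N = -(1 / 2) / N := by norm_num
  have e2 : ((N:ℝ) - 1 / 2) / N = -(1 / 2) / N + 1 := by field_simp; ring
  rw [e1, e2] at h2
  rw [← h2, Finset.mul_sum]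
  refine Finset.sum_congr rfl fun k _ => ?_
  have h3 : ∫ t in (((k:ℝ) - 1 / 2) / N)..((((k + 1 : ℕ) : ℝ) - 1 / 2) / N), g t
      = ∫ t in (((k:ℝ) - 1 / 2) / N)..((((k + 1 : ℕ) : ℝ) - 1 / 2) / N), G (k : ZMod N) := by
    refine intervalIntegral.integral_congr_Ioo_of_le ?_ fun t ht => ?_
    · gcongr
      linarith
    · obtain ⟨ha, hb⟩ := ht
      rw [div_lt_iff₀ hN] at ha
      rw [lt_div_iff₀ hN] at hb
      push_cast at hb
      have : ⌊t * N + 1 / 2 - 0⌋ = (k:ℤ) := by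
        rw [Int.floor_eq_iff]
        push_cast
        constructor <;> linarith
      simp only [hg, this]
      simp
  rw [h3, intervalIntegral.integral_const, smul_eq_mul]
  push_cast
  field_simp
  ring

end

end NysAux

end

noncomputable section

namespace NysAux

open Complex Filter Topology MeasureTheory

/-! ### Convergence -/

/-- The square of an equivalent Sobolev norm of order two. -/
def Q2 (f : ℤ → ℂ) : ℝ := ∑' m : ℤ, (wt m ^ 2 * ‖f m‖) ^ 2

lemma Q2_nonneg (f : ℤ → ℂ) : 0 ≤ Q2 f := tsum_nonneg fun _ => sq_nonneg _

lemma Q2_summable {f : ℤ → ℂ} (hf : RD1 f) : Summable fun m : ℤ => (wt m ^ 2 * ‖f m‖) ^ 2 := by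
  obtain ⟨D, hD⟩ := hf 3
  refine Summable.of_nonneg_of_le (fun _ => sq_nonneg _) (fun m => ?_) (summable_wt.mul_left (D ^ 2))
  have hw := wt_pos m
  rw [← div_eq_mul_inv, le_div_iff₀ (by positivity), ← mul_pow]
  refine pow_le_pow_left₀ (by positivity) ?_ 2
  calc wt m ^ 2 * ‖f m‖ * wt m = ‖f m‖ * wt m ^ 3 := by ring
    _ ≤ D := hD m

lemma Q2_le_sobNorm {φ : ℝ → ℂ} (hf : RD1 (fc φ)) : Q2 (fc φ) ≤ 16 * sobNorm 2 φ ^ 2 := by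
  have hpow : ∀ m : ℤ, |(m:ℝ)| ^ (2 * (2:ℝ)) = |(m:ℝ)| ^ 4 := fun m => by
    rw [show (2 * (2:ℝ)) = ((4:ℕ):ℝ) by norm_num, Real.rpow_natCast]
  have hs := Q2_summable hf
  have hle : ∀ m : ℤ, (if m = 0 then 0 else |(m:ℝ)| ^ (2 * (2:ℝ)) * ‖fc φ m‖ ^ 2)
      ≤ (wt m ^ 2 * ‖fc φ m‖) ^ 2 := fun m => by
    split_ifs
    · exact sq_nonneg _
    · rw [hpow, mul_pow, ← pow_mul]
      have := abs_le_wt m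
      gcongr
  have hnn : ∀ m : ℤ, 0 ≤ (if m = 0 then 0 else |(m:ℝ)| ^ (2 * (2:ℝ)) * ‖fc φ m‖ ^ 2) := fun m => by
    split_ifs
    · exact le_rfl
    · positivity
  have hs2 := Summable.of_nonneg_of_le hnn hle hs
  have h0 : HasSum (fun m : ℤ => if m = 0 then ‖fc φ 0‖ ^ 2 else 0) (‖fc φ 0‖ ^ 2) :=
    hasSum_ite_eq 0 _
  have h1 := (h0.add hs2.hasSum).mul_left 16
  unfold sobNorm
  rw [Real.sq_sqrt (add_nonneg (sq_nonneg _) (tsum_nonneg hnn))]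
  refine hasSum_le (fun m => ?_) hs.hasSum h1
  by_cases hm : m = 0
  · subst hm
    have e : wt 0 = 1 := by simp [wt]
    simp only [if_true, e]
    nlinarith [sq_nonneg ‖fc φ 0‖]
  · simp only [hm, if_false, zero_add]
    rw [hpow, mul_pow, ← pow_mul]
    have h3 : (1:ℝ) ≤ |(m:ℝ)| := by exact_mod_cast Int.one_le_abs hm
    have h4 : wt m ≤ 2 * |(m:ℝ)| := by unfold wt; linarith
    have h5 := wt_pos m
    calc wt m ^ (2 * 2) * ‖fc φ m‖ ^ 2 ≤ (2 * |(m:ℝ)|) ^ (2 * 2) * ‖fc φ m‖ ^ 2 := by gcongr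
      _ = _ := by ring

lemma sum_wt_le {f : ℤ → ℂ} (hf : RD1 f) :
    (Summable fun m : ℤ => wt m * ‖f m‖) ∧
      (∑' m : ℤ, wt m * ‖f m‖) ^ 2 ≤ Swt * Q2 f := by
  have e : (fun m : ℤ => wt m * ‖f m‖) = fun m => (wt m)⁻¹ * (wt m ^ 2 * ‖f m‖) := by
    funext m
    have := wt_pos m
    field_simp
  have h := cs_tsum (f := fun m : ℤ => (wt m)⁻¹) (g := fun m => wt m ^ 2 * ‖f m‖)
    (fun m => by have := wt_pos m; positivity) (fun m => by have := wt_pos m; positivity)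
    (by simpa only [inv_pow] using summable_wt) (Q2_summable hf)
  rw [e]
  refine ⟨h.1, ?_⟩
  have := h.2
  simp only [inv_pow] at this
  exact this

lemma norm_ee_sub_le (m : ℤ) (s t : ℝ) : ‖ee m s - ee m t‖ ≤ 2 * Real.pi * |(m:ℝ)| * |s - t| := by
  have := (convex_univ : Convex ℝ (Set.univ : Set ℝ)).norm_image_sub_le_of_norm_hasDerivWithin_le
    (f := ee m) (C := 2 * Real.pi * |(m:ℝ)|) (fun x _ => (hasDerivAt_ee m x).hasDerivWithinAt)
    (fun x _ => by simp [norm_ee, abs_of_pos Real.pi_pos]) (Set.mem_univ t) (Set.mem_univ s)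
  simpa using this

/-- Truncating the Fourier series and moving to the nearest grid point costs `O(1/N)`. -/
lemma trunc_le (N : ℕ) [NeZero N] {φ : ℝ → ℂ} (hφ : ContDiff ℝ (⊤ : ℕ∞) φ)
    (hp : Function.Periodic φ 1) (t : ℝ) (j : ℤ) (hj : |(j:ℝ) / N - t| ≤ 1 / (2 * N)) :
    ‖trig N (fun a => fc φ a.valMinAbs) ((j:ℝ) / N) - φ t‖
      ≤ 7 * (N:ℝ)⁻¹ * ∑' m : ℤ, wt m * ‖fc φ m‖ := by
  have hN := cast_N_pos N
  have h1 := (hasSum_trig N (fun a => fc φ a.valMinAbs) ((j:ℝ) / N)).sub (hasSum_fc_smooth hφ hp t)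
  have hs := (sum_wt_le (RD1_fc hφ hp)).1
  refine h1.norm_le_of_bounded (hs.hasSum.mul_left _) fun m => ?_
  have hw := wt_pos m
  have hpi := Real.pi_lt_d2
  have hpi0 := Real.pi_pos
  unfold ext0
  by_cases hm : InI N m
  · rw [if_pos hm]
    have e : ((m : ZMod N)).valMinAbs = m := hm
    beta_reduce
    rw [e, ← mul_sub, norm_mul]
    have h2 := norm_ee_sub_le m ((j:ℝ) / N) t
    have h3 : ‖ee m ((j:ℝ) / N) - ee m t‖ ≤ 7 * (N:ℝ)⁻¹ * wt m := by
      have h4 := abs_le_wt m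
      calc _ ≤ 2 * Real.pi * wt m * (1 / (2 * N)) := h2.trans (by gcongr)
        _ = Real.pi * ((N:ℝ)⁻¹ * wt m) := by field_simp
        _ ≤ 7 * ((N:ℝ)⁻¹ * wt m) := by
          gcongr
          linarith
        _ = _ := by ring
    calc _ ≤ ‖fc φ m‖ * (7 * (N:ℝ)⁻¹ * wt m) := by gcongr
      _ = _ := by ring
  · rw [if_neg hm, zero_mul, zero_sub, norm_neg, norm_mul, norm_ee, mul_one]
    have h2 := not_InI_le hm
    have h3 : (N:ℝ) ≤ 2 * |(m:ℝ)| := by exact_mod_cast h2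
    have h4 := abs_le_wt m
    have h5 : 1 ≤ 7 * (N:ℝ)⁻¹ * wt m := by
      have : 7 * (N:ℝ)⁻¹ * wt m = 7 * wt m / N := by ring
      rw [this, one_le_div hN]
      linarith
    calc ‖fc φ m‖ = 1 * ‖fc φ m‖ := (one_mul _).symm
      _ ≤ 7 * (N:ℝ)⁻¹ * wt m * ‖fc φ m‖ := by gcongr
      _ = _ := by ring

/-- The condition `ε ∉ ½ℤ` says exactly that `exp (2πiε)` is not real. -/
lemma im_ee_ne {ε : ℝ} (hε : ∀ k : ℤ, ε ≠ (k : ℝ) / 2) : (ee 1 ε).im ≠ 0 := by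
  have e : ee 1 ε = exp (((2 * Real.pi * ε : ℝ) : ℂ) * I) := by
    unfold ee
    congr 1
    push_cast
    ring
  rw [e, Complex.exp_ofReal_mul_I_im]
  intro h
  obtain ⟨k, hk⟩ := Real.sin_eq_zero_iff.1 h
  refine hε k ?_
  have : (k:ℝ) * Real.pi = (2 * ε) * Real.pi := by linarith
  have := mul_right_cancel₀ Real.pi_ne_zero this
  linarith

lemma Wop_zero (V1 V2 : ℝ → ℝ → ℂ) (s : ℝ) : Wop V1 V2 (fun _ => 0) s = 0 := by
  unfold Wop
  have h : Vop V1 (deriv fun _ : ℝ => (0:ℂ)) = fun _ => 0 := by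
    funext s
    unfold Vop
    simp
  rw [h]
  unfold Vop
  simp

section
variable {A1 K1 A2 K2 : ℝ → ℝ → ℂ} (hA1 : SPK A1) (hK1 : SPK K1) (hA2 : SPK A2)
    (hK2 : SPK K2) {α : ℂ} (hα : α ≠ 0) (hdiag : ∀ s, A1 s s = α)
    (hinj : ∀ φ : ℝ → ℂ, ContDiff ℝ (⊤ : ℕ∞) φ → Function.Periodic φ 1 →
      (∀ s, Wop (logKer A1 K1) (logKer A2 K2) φ s = 0) → ∀ s, φ s = 0)
    {ε : ℝ} (him : (ee 1 ε).im ≠ 0)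
include hA1 hK1 hA2 hK2 him

omit him in
/-- The Nyström equations at the grid points, in terms of aliased Fourier coefficients. -/
lemma nys_alias (him : (ee 1 ε).im ≠ 0) (α : ℂ) (N : ℕ) [NeZero N] {φ : ℝ → ℂ}
    (hφ : ContDiff ℝ (⊤ : ℕ∞) φ)
    (hp : Function.Periodic φ 1) {v X : ZMod N → ℂ} (hX : ∀ a, trig N X ((a.val : ℝ) / N) = v a)
    (hv : Nys (logKer A1 K1) (logKer A2 K2) ε N φ v) (n : ℤ) : ∃ T,
    HasSum (fun p : ℤ × ℤ => ee p.1 ε * (LR (Lam α (deld N) (gamd N ε)) (Rdi A1 K1 A2 K2 α ε N)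
      (n + p.1 * N) p.2 * ext0 N X p.2)) T ∧
    HasSum (fun p : ℤ × ℤ => ee p.1 ε * (LR (Lam α del gam) (Rc A1 K1 A2 K2 α)
      (n + p.1 * N) p.2 * fc φ p.2)) T := by
  have hN : (N:ℂ) ≠ 0 := by exact_mod_cast NeZero.ne N
  have hxs : Summable fun m => ‖ext0 N X m‖ := by
    refine (hasSum_InI N fun m hm => ?_).summable
    simp only [ext0, if_neg hm, norm_zero]
  have e1 : ∀ n m, LR (Lam α (deld N) (gamd N ε)) (Rdi A1 K1 A2 K2 α ε N) n m
      = Wm A1 K1 A2 K2 (deld N) (gamd N ε) (iotd N ε) n m := fun n m => by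
    rw [Wm_split hA1 α _ _ _ (gamd_bounded N ε him) n m]
    rfl
  have e2 : ∀ n m, LR (Lam α del gam) (Rc A1 K1 A2 K2 α) n m
      = Wm A1 K1 A2 K2 del gam iot n m := fun n m => by
    rw [Wm_split hA1 α _ _ _ norm_gam_le n m]
    rfl
  have h1 := hasSum_alias N ε
    (F := fun n m => Wm A1 K1 A2 K2 (deld N) (gamd N ε) (iotd N ε) n m * ext0 N X m)
    (g := fun i => N * ∑ j ∈ Finset.range N, Wmat (logKer A1 K1) (logKer A2 K2) (1 / (N:ℝ)) ε i (j:ℤ)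
        * trig N X ((j:ℝ) / N))
    (fun i => hasSum_Wmat N ε him hA1 hK1 hA2 hK2 hxs (hasSum_trig N X) i) n
  have h2 := hasSum_alias N ε
    (F := fun n m => Wm A1 K1 A2 K2 del gam iot n m * fc φ m)
    (g := fun i => Wop (logKer A1 K1) (logKer A2 K2) φ (xg N ε i))
    (fun i => hasSum_Wop hA1 hK1 hA2 hK2 hφ hp (xg N ε i)) n
  have h5 : ∀ i ∈ Finset.range N,
      (N:ℂ) * ∑ j ∈ Finset.range N, Wmat (logKer A1 K1) (logKer A2 K2) (1 / (N:ℝ)) ε i (j:ℤ)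
        * trig N X ((j:ℝ) / N) = Wop (logKer A1 K1) (logKer A2 K2) φ (xg N ε i) := fun i hi => by
    have h3 := hv (i : ZMod N)
    rw [ZMod.val_natCast_of_lt (Finset.mem_range.1 hi), tg_eq] at h3
    have h4 : ∑ j ∈ Finset.range N, Wmat (logKer A1 K1) (logKer A2 K2) (1 / (N:ℝ)) ε i (j:ℤ)
        * trig N X ((j:ℝ) / N) = (1 / (N:ℂ)) * Wop (logKer A1 K1) (logKer A2 K2) φ (xg N ε i) := by
      rw [← h3, ← sum_zmod_val N fun j => Wmat (logKer A1 K1) (logKer A2 K2) (1 / (N:ℝ)) ε i (j:ℤ)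
        * trig N X ((j:ℝ) / N)]
      exact Finset.sum_congr rfl fun a _ => by rw [hX a]
    rw [h4, ← mul_assoc, mul_one_div_cancel hN, one_mul]
  have h6 : (avg N fun i => (N * ∑ j ∈ Finset.range N, Wmat (logKer A1 K1) (logKer A2 K2)
        (1 / (N:ℝ)) ε i (j:ℤ) * trig N X ((j:ℝ) / N)) * ee (-n) (xg N ε i))
      = avg N fun i => Wop (logKer A1 K1) (logKer A2 K2) φ (xg N ε i) * ee (-n) (xg N ε i) := by
    unfold avg
    exact congrArg _ (Finset.sum_congr rfl fun i hi => congrArg (· * _) (h5 i hi))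
  refine ⟨_, ?_, h2.congr_fun fun p => ?_⟩
  · rw [← h6]
    refine h1.congr_fun fun p => ?_
    rw [e1]
  · rw [e2]

include hα hdiag hinj

/-- Convergence of the discrete Fourier coefficients. -/
theorem coef_conv : ∃ D, 0 ≤ D ∧ ∃ N0 : ℕ, ∀ (N : ℕ) [NeZero N], N0 ≤ N → ∀ φ : ℝ → ℂ,
    ContDiff ℝ (⊤ : ℕ∞) φ → Function.Periodic φ 1 → ∀ v X : ZMod N → ℂ,
    (∀ a, trig N X ((a.val : ℝ) / N) = v a) → Nys (logKer A1 K1) (logKer A2 K2) ε N φ v →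
    ∑ a : ZMod N, ‖X a - fc φ a.valMinAbs‖ ^ 2 ≤ D * (N:ℝ)⁻¹ ^ 2 * Q2 (fc φ) := by
  obtain ⟨c, C, M⟩ := exists_MatSys hA1 hK1 hA2 hK2 hα hdiag ε him
  obtain ⟨D, hD, N0, hst⟩ := disc_stab M (KK_inj hA1 hK1 hA2 hK2 hα hdiag hinj)
  have hC := M.hC
  have hS := Swt_nonneg
  refine ⟨D * (100 * C ^ 2 * Swt ^ 3), by positivity, N0, fun N _ hN φ hφ hp v X hX hv => ?_⟩
  have hN0 := NeZero.ne N
  have hNp := cast_N_pos N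
  have hQ := Q2_nonneg (fc φ)
  have hx : ∀ m, ¬ InI N m → ext0 N X m = 0 := fun m hm => by simp only [ext0, if_neg hm]
  have h := hst N hN hN0 (fun m => ext0 N X m - if InI N m then fc φ m else 0)
    (fun m hm => by simp only [hx m hm, if_neg hm, sub_zero])
    (10 * C * (N:ℝ)⁻¹ * Real.sqrt (Swt ^ 3 * Q2 (fc φ))) (by positivity) fun n hn => by
      obtain ⟨T, h1, h2⟩ := nys_alias hA1 hK1 hA2 hK2 him α N hφ hp hX hv n
      exact consistency M hN0 hx (Q2_summable (RD1_fc hφ hp)) hn h1 h2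
  have h1 := hasSum_InI N (g := fun n => ‖ext0 N X n - if InI N n then fc φ n else 0‖ ^ 2)
    fun n hn => by simp only [hx n hn, if_neg hn, sub_zero, norm_zero, zero_pow two_ne_zero]
  have h2 := h.2
  rw [h1.tsum_eq] at h2
  have h3 : ∀ a : ZMod N, (if InI N a.valMinAbs then fc φ a.valMinAbs else 0)
      = fc φ a.valMinAbs := fun a => if_pos (InI_valMinAbs N a)
  simp only [ext0_val, h3] at h2
  refine h2.trans (le_of_eq ?_)
  rw [mul_pow, Real.sq_sqrt (by positivity)]
  ring

omit hinj hdiag hα him hA1 hK1 hA2 hK2 in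
/-- The step function error in terms of the discrete Fourier coefficients. -/
lemma step_error (N : ℕ) [NeZero N] {φ : ℝ → ℂ} (hφ : ContDiff ℝ (⊤ : ℕ∞) φ)
    (hp : Function.Periodic φ 1) {v X : ZMod N → ℂ} (hX : ∀ a, trig N X ((a.val : ℝ) / N) = v a) :
    ∫ t in (0:ℝ)..1, ‖stepf N 0 v t - φ t‖ ^ 2
      ≤ 2 * ∑ a : ZMod N, ‖X a - fc φ a.valMinAbs‖ ^ 2
        + 98 * (N:ℝ)⁻¹ ^ 2 * (Swt * Q2 (fc φ)) := by
  have hN := cast_N_pos N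
  set Y : ZMod N → ℂ := fun a => X a - fc φ a.valMinAbs with hY
  set P : ZMod N → ℂ := fun a => fc φ a.valMinAbs with hP
  set S : ℝ := ∑' m : ℤ, wt m * ‖fc φ m‖ with hS
  obtain ⟨hi, he⟩ := stepf_integral N fun a => ‖trig N Y ((a.val : ℝ) / N)‖ ^ 2
  have hb : ∀ t, ‖stepf N 0 v t - φ t‖ ^ 2
      ≤ 2 * ‖trig N Y (((((⌊t * N + 1 / 2 - 0⌋ : ℤ) : ZMod N)).val : ℝ) / N)‖ ^ 2
        + 98 * (N:ℝ)⁻¹ ^ 2 * S ^ 2 := fun t => by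
    set j : ℤ := ⌊t * N + 1 / 2 - 0⌋ with hj
    have h1 : (j:ℝ) ≤ t * N + 1 / 2 - 0 := Int.floor_le _
    have h2 : t * N + 1 / 2 - 0 < j + 1 := Int.lt_floor_add_one _
    have h3 : |(j:ℝ) / N - t| ≤ 1 / (2 * N) := by
      have e : (j:ℝ) / N - t = (j - t * N) / N := by field_simp
      have h4 : |(j:ℝ) - t * N| ≤ 1 / 2 := abs_le.2 ⟨by linarith, by linarith⟩
      rw [e, abs_div, abs_of_pos hN, div_le_iff₀ hN]
      refine h4.trans (le_of_eq ?_)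
      field_simp
    have h4 := trunc_le N hφ hp t j h3
    have h5 : stepf N 0 v t - φ t
        = trig N Y ((((j : ZMod N)).val : ℝ) / N) + (trig N P ((j:ℝ) / N) - φ t) := by
      have e1 : stepf N 0 v t = trig N X ((j:ℝ) / N) := by
        unfold stepf
        rw [← hX, ← hj, trig_grid]
      have e2 : trig N Y ((j:ℝ) / N) = trig N X ((j:ℝ) / N) - trig N P ((j:ℝ) / N) := by
        simp only [trig, hY, hP, sub_mul, Finset.sum_sub_distrib]
      rw [trig_grid, e1, e2]
      ring
    rw [h5]
    have h6 := norm_add_le (trig N Y ((((j : ZMod N)).val : ℝ) / N)) (trig N P ((j:ℝ) / N) - φ t)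
    set a := ‖trig N Y ((((j : ZMod N)).val : ℝ) / N)‖
    set b := ‖trig N P ((j:ℝ) / N) - φ t‖
    have h7 : b ^ 2 ≤ (7 * (N:ℝ)⁻¹ * S) ^ 2 := pow_le_pow_left₀ (norm_nonneg _) h4 2
    calc _ ≤ (a + b) ^ 2 := pow_le_pow_left₀ (norm_nonneg _) h6 2
      _ ≤ 2 * a ^ 2 + 2 * b ^ 2 := by nlinarith [sq_nonneg (a - b)]
      _ ≤ 2 * a ^ 2 + 2 * (7 * (N:ℝ)⁻¹ * S) ^ 2 := by linarith
      _ = _ := by ring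
  have hI : ∫ t in (0:ℝ)..1, ‖stepf N 0 v t - φ t‖ ^ 2
      ≤ ∫ t in (0:ℝ)..1, (2 * ‖trig N Y (((((⌊t * N + 1 / 2 - 0⌋ : ℤ) : ZMod N)).val : ℝ) / N)‖ ^ 2
        + 98 * (N:ℝ)⁻¹ ^ 2 * S ^ 2) := by
    have hi2 := (hi.const_mul 2).add
      (intervalIntegrable_const (c := 98 * (N:ℝ)⁻¹ ^ 2 * S ^ 2))
    rw [intervalIntegral.integral_of_le zero_le_one, intervalIntegral.integral_of_le zero_le_one]
    refine integral_mono_of_nonneg (Eventually.of_forall fun t => by positivity) ?_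
      (Eventually.of_forall hb)
    exact (intervalIntegrable_iff_integrableOn_Ioc_of_le zero_le_one).1 hi2
  refine hI.trans ?_
  rw [intervalIntegral.integral_add (hi.const_mul 2) intervalIntegrable_const,
    intervalIntegral.integral_const_mul, he, intervalIntegral.integral_const]
  have h8 : ∑ j ∈ Finset.range N, ‖trig N Y ((((j : ZMod N)).val : ℝ) / N)‖ ^ 2
      = ∑ j ∈ Finset.range N, ‖trig N Y ((j:ℝ) / N)‖ ^ 2 :=
    Finset.sum_congr rfl fun j hj => by
      rw [ZMod.val_natCast_of_lt (Finset.mem_range.1 hj)]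
  rw [h8, trig_parseval, sub_zero, one_smul]
  gcongr
  exact (sum_wt_le (RD1_fc hφ hp)).2

/-- Unique solvability and first-order convergence, under the condition that `exp (2πiε)` is not real. -/
theorem nys_conv :
    ∃ h0 > (0:ℝ), ∃ C > (0:ℝ), ∀ φ : ℝ → ℂ, ContDiff ℝ (⊤ : ℕ∞) φ → Function.Periodic φ 1 →
      ∀ (N : ℕ) [NeZero N], 1 / (N : ℝ) ≤ h0 →
        (∃! v : ZMod N → ℂ, Nys (logKer A1 K1) (logKer A2 K2) ε N φ v) ∧
        ∀ v : ZMod N → ℂ, Nys (logKer A1 K1) (logKer A2 K2) ε N φ v →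
          Real.sqrt (∫ t in (0:ℝ)..1, ‖stepf N 0 v t - φ t‖ ^ 2) ≤
            C * (1 / (N : ℝ)) * sobNorm 2 φ := by
  obtain ⟨D, hD, N0, h⟩ := coef_conv hA1 hK1 hA2 hK2 hα hdiag hinj him
  have hS := Swt_nonneg
  refine ⟨1 / (N0 + 1), by positivity, Real.sqrt ((2 * D + 98 * Swt) * 16) + 1, by positivity,
    fun φ hφ hp N _ hN => ?_⟩
  have hNp := cast_N_pos N
  have hNN : N0 ≤ N := by
    have h1 : (N0:ℝ) + 1 ≤ N := (one_div_le_one_div hNp (by positivity)).1 hN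
    have h2 : (N0:ℝ) ≤ N := by linarith
    exact_mod_cast h2
  -- the Nyström matrix as a linear map; injectivity is the case `φ = 0` of `coef_conv`
  let L : (ZMod N → ℂ) →ₗ[ℂ] (ZMod N → ℂ) :=
    Matrix.mulVecLin (Matrix.of fun i j : ZMod N => Wmat (logKer A1 K1) (logKer A2 K2)
      (1 / (N : ℝ)) ε ((i.val : ℕ) : ℤ) ((j.val : ℕ) : ℤ))
  have hLv : ∀ v i, L v i = ∑ j : ZMod N, Wmat (logKer A1 K1) (logKer A2 K2) (1 / (N : ℝ)) ε
      ((i.val : ℕ) : ℤ) ((j.val : ℕ) : ℤ) * v j := fun v i => rfl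
  have hLi : Function.Injective L := by
    rw [← LinearMap.ker_eq_bot, LinearMap.ker_eq_bot']
    intro v hv
    obtain ⟨X, hX⟩ := trig_interp N v
    have hz : fc (fun _ => (0:ℂ)) = fun _ => 0 := by
      funext m
      simp [fc]
    have h1 := h N hNN (fun _ => 0) contDiff_const (fun _ => rfl) v X hX fun i => by
      rw [← hLv, hv, Wop_zero, mul_zero]
      rfl
    have hX0 : ∀ a, X a = 0 := fun a => by
      simp only [hz, sub_zero, Q2, norm_zero, mul_zero, zero_pow two_ne_zero, tsum_zero] at h1
      have h2 := Finset.single_le_sum (f := fun a => ‖X a‖ ^ 2) (fun a _ => sq_nonneg _)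
        (Finset.mem_univ a)
      have h3 : ‖X a‖ ^ 2 ≤ 0 := h2.trans h1
      have h4 : ‖X a‖ ^ 2 = 0 := le_antisymm h3 (sq_nonneg _)
      exact norm_eq_zero.1 (pow_eq_zero_iff two_ne_zero |>.1 h4)
    funext a
    rw [← hX a]
    simp [trig, hX0]
  refine ⟨?_, fun v hv => ?_⟩
  · obtain ⟨v, hv⟩ := LinearMap.injective_iff_surjective.1 hLi fun i : ZMod N =>
      (1 / (N : ℂ)) * Wop (logKer A1 K1) (logKer A2 K2) φ (tg (1 / (N : ℝ)) ε ((i.val : ℕ) : ℤ))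
    refine ⟨v, fun i => ?_, fun u hu => hLi ?_⟩
    · rw [← hLv, hv]
    · rw [hv]
      funext i
      rw [hLv]
      exact hu i
  · obtain ⟨X, hX⟩ := trig_interp N v
    have h1 := h N hNN φ hφ hp v X hX hv
    have h2 := step_error N hφ hp hX
    have h3 := Q2_le_sobNorm (RD1_fc hφ hp)
    have hs0 : 0 ≤ sobNorm 2 φ := Real.sqrt_nonneg _
    have h4 : ∫ t in (0:ℝ)..1, ‖stepf N 0 v t - φ t‖ ^ 2
        ≤ (2 * D + 98 * Swt) * 16 * ((1 / (N:ℝ)) * sobNorm 2 φ) ^ 2 := by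
      calc _ ≤ 2 * (D * (N:ℝ)⁻¹ ^ 2 * Q2 (fc φ)) + 98 * (N:ℝ)⁻¹ ^ 2 * (Swt * Q2 (fc φ)) := by
            linarith
        _ = (2 * D + 98 * Swt) * (N:ℝ)⁻¹ ^ 2 * Q2 (fc φ) := by ring
        _ ≤ (2 * D + 98 * Swt) * (N:ℝ)⁻¹ ^ 2 * (16 * sobNorm 2 φ ^ 2) := by gcongr
        _ = _ := by ring
    calc _ ≤ Real.sqrt ((2 * D + 98 * Swt) * 16 * ((1 / (N:ℝ)) * sobNorm 2 φ) ^ 2) :=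
          Real.sqrt_le_sqrt h4
      _ = Real.sqrt ((2 * D + 98 * Swt) * 16) * ((1 / (N:ℝ)) * sobNorm 2 φ) := by
          rw [Real.sqrt_mul (by positivity), Real.sqrt_sq (by positivity)]
      _ ≤ (Real.sqrt ((2 * D + 98 * Swt) * 16) + 1) * ((1 / (N:ℝ)) * sobNorm 2 φ) := by
          gcongr
          linarith
      _ = _ := by ring

end

end NysAux

end

/-- unique solvability of the Nyström system and first-order `L²`
convergence `‖φ_h − φ‖₀ ≤ C h ‖φ‖₂`. -/
theorem stmt_14
    (A1 K1 A2 K2 : ℝ → ℝ → ℂ) (hA1 : SPK A1) (hK1 : SPK K1) (hA2 : SPK A2) (hK2 : SPK K2)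
    (α : ℂ) (hα : α ≠ 0) (hdiag : ∀ s : ℝ, A1 s s = α)
    (hinj : ∀ φ : ℝ → ℂ, ContDiff ℝ (⊤ : ℕ∞) φ → Function.Periodic φ 1 →
      (∀ s, Wop (logKer A1 K1) (logKer A2 K2) φ s = 0) → ∀ s, φ s = 0)
    (ε : ℝ) (hε : ∀ k : ℤ, ε ≠ (k : ℝ) / 2) :
    ∃ h0 > (0:ℝ), ∃ C > (0:ℝ), ∀ φ : ℝ → ℂ, ContDiff ℝ (⊤ : ℕ∞) φ → Function.Periodic φ 1 →
      ∀ (N : ℕ) [NeZero N], 1 / (N : ℝ) ≤ h0 →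
        (∃! v : ZMod N → ℂ, Nys (logKer A1 K1) (logKer A2 K2) ε N φ v) ∧
        ∀ v : ZMod N → ℂ, Nys (logKer A1 K1) (logKer A2 K2) ε N φ v →
          Real.sqrt (∫ t in (0:ℝ)..1, ‖stepf N 0 v t - φ t‖ ^ 2) ≤
            C * (1 / (N : ℝ)) * sobNorm 2 φ := by
  exact NysAux.nys_conv hA1 hK1 hA2 hK2 hα hdiag hinj (NysAux.im_ee_ne hε)
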